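/- arXiv:math/0402192 — 2 statements merged into one kernel-verified Lean document; each statement's English description precedes it below -/
import Mathlib

section
/- Let n ≥ 3 and let f be a spherically symmetric function on ℝⁿ whose Fourier transform satisfies f̂(ξ) = φ(|ξ|) for a fixed smooth bump function φ supported in the interval (1/2, 2). Then for every nonnegative integer M there is a constant C_M (depending on M, n, φ) such that |e^{it√(−Δ)}f(x)| ≤ C_M (1 + |t|)^{−(n−1)/2} (1 + | |t| − |x| |)^{−M} for all t ∈ ℝ and x ∈ ℝⁿ. -/
open MeasureTheory Real Complex ENNReal
open scoped FourierTransform RealInnerProductSpace ComplexConjugate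

noncomputable section

/-- Euclidean space `ℝⁿ`. -/
abbrev Eucl (n : ℕ) := EuclideanSpace ℝ (Fin n)

/-- A function on `ℝⁿ` is unit frequency if its Fourier transform is supported
in the annulus `1/2 < ‖ξ‖ < 2`. -/
def UnitFrequency {n : ℕ} (f : Eucl n → ℂ) : Prop :=
  ∀ ξ : Eucl n, 𝓕 f ξ ≠ 0 → 1 / 2 < ‖ξ‖ ∧ ‖ξ‖ < 2

/-- The half-wave propagator `e^{it√(−Δ)} f (x) = ∫ e^{2πit|ξ|} e^{2πi x·ξ} f̂(ξ) dξ`. -/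
def waveProp {n : ℕ} (f : Eucl n → ℂ) (t : ℝ) (x : Eucl n) : ℂ :=
  ∫ ξ : Eucl n,
    Complex.exp (2 * (π : ℂ) * Complex.I * (t : ℂ) * (‖ξ‖ : ℂ)) *
      Complex.exp (2 * (π : ℂ) * Complex.I * ((⟪x, ξ⟫ : ℝ) : ℂ)) * 𝓕 f ξ

/-- The mixed space-time norm `‖u‖_{L^q_t(L^r_x)}`. -/
def mixedNorm {n : ℕ} (q r : ℝ≥0∞) (u : ℝ → Eucl n → ℂ) : ℝ≥0∞ :=
  if q = ∞ then essSup (fun t : ℝ => eLpNorm (u t) r volume) volume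
  else (∫⁻ t : ℝ, eLpNorm (u t) r volume ^ q.toReal) ^ (1 / q.toReal)

/-- Time derivative of a space-time function. -/
def timeDeriv {n : ℕ} (u : ℝ → Eucl n → ℂ) (t : ℝ) (x : Eucl n) : ℂ :=
  deriv (fun s => u s x) t

/-- The spatial Laplacian `Δf(x) = Σᵢ ∂²f/∂xᵢ²`. -/
def lapE {n : ℕ} (f : Eucl n → ℂ) (x : Eucl n) : ℂ :=
  ∑ i : Fin n,
    fderiv ℝ (fun y => fderiv ℝ f y (EuclideanSpace.single i (1 : ℝ))) x
      (EuclideanSpace.single i (1 : ℝ))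

/-- `u` is a (classical, smooth) solution of the wave equation `□u = −∂ₜ²u + Δu = 0`. -/
def IsWaveSolution {n : ℕ} (u : ℝ → Eucl n → ℂ) : Prop :=
  ContDiff ℝ (⊤ : ℕ∞) (fun p : ℝ × Eucl n => u p.1 p.2) ∧
    ∀ t x, timeDeriv (timeDeriv u) t x = lapE (u t) x

/-- A spherically symmetric (radial) function. -/
def IsRadial {n : ℕ} (f : Eucl n → ℂ) : Prop :=
  ∀ x y : Eucl n, ‖x‖ = ‖y‖ → f x = f y

/-- The homogeneous Sobolev norm `‖f‖_{Ḣ^γ} = ‖ |ξ|^γ f̂ ‖_{L²}`. -/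
def homSobolevNorm {n : ℕ} (γ : ℝ) (f : Eucl n → ℂ) : ℝ≥0∞ :=
  eLpNorm (fun ξ : Eucl n => ((‖ξ‖ ^ γ : ℝ) : ℂ) * 𝓕 f ξ) 2 volume

/-- `H` is (the extension of) a spherical harmonic of degree `l` on `ℝⁿ`:
a smooth, harmonic, degree-`l` homogeneous function. -/
def IsSphericalHarmonic (n l : ℕ) (H : Eucl n → ℂ) : Prop :=
  ContDiff ℝ (⊤ : ℕ∞) H ∧ (∀ (c : ℝ) (x : Eucl n), H (c • x) = (c : ℂ) ^ l * H x) ∧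
    ∀ x, lapE H x = 0

/-- A function is localized at angular frequency `N` if its spherical harmonic
expansion only involves degrees `l` with `N/2 ≤ l ≤ 4N`. -/
def AngularlyLocalized (n N : ℕ) (f : Eucl n → ℂ) : Prop :=
  ∃ (I : Finset (ℕ × ℕ)) (Y : ℕ × ℕ → Eucl n → ℂ) (c : ℕ × ℕ → ℝ → ℂ),
    (∀ p ∈ I, ((N : ℝ) / 2 ≤ (p.1 : ℝ) ∧ (p.1 : ℝ) ≤ 4 * N) ∧
      IsSphericalHarmonic n p.1 (Y p)) ∧
    ∀ x : Eucl n, x ≠ 0 → f x = ∑ p ∈ I, c p ‖x‖ * Y p (‖x‖⁻¹ • x)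

/-- The normalized surface measure on the unit sphere `S^{n-1} ⊆ ℝⁿ`. -/
def unitSphereMeasure (n : ℕ) : Measure (Metric.sphere (0 : Eucl n) 1) :=
  (((volume : Measure (Eucl n)).toSphere Set.univ)⁻¹) • (volume : Measure (Eucl n)).toSphere

/-- An `L²`-type spherical harmonics expansion of a function `f` on `ℝⁿ`, with an
orthonormal family of spherical harmonics. -/
structure SphExpansion (n : ℕ) (f : Eucl n → ℂ) where
  /-- number of harmonics used in each degree -/
  d : ℕ → ℕ
  /-- the orthonormal family of spherical harmonics, `Y (l,i)` of degree `l` -/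
  Y : ℕ × ℕ → Eucl n → ℂ
  /-- the (radial) coefficients -/
  c : ℕ × ℕ → ℝ → ℂ
  harmonic : ∀ p : ℕ × ℕ, p.2 < d p.1 → IsSphericalHarmonic n p.1 (Y p)
  coeff_zero : ∀ p : ℕ × ℕ, ¬p.2 < d p.1 → ∀ r : ℝ, c p r = 0
  orthonormal : ∀ p q : ℕ × ℕ, p.2 < d p.1 → q.2 < d q.1 →
    ∫ ω : Metric.sphere (0 : Eucl n) 1,
        Y p (ω : Eucl n) * conj (Y q (ω : Eucl n)) ∂(unitSphereMeasure n) =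
      if p = q then 1 else 0
  expand : ∀ x : Eucl n, x ≠ 0 →
    f x = ∑' p : ℕ × ℕ, c p ‖x‖ * Y p (‖x‖⁻¹ • x)

/-- The fractional angular derivative `|Ω|^s f = Σ [l(n+l−2)]^{s/2} c^l_i Y^l_i`,
computed from a spherical harmonics expansion of `f`. -/
def SphExpansion.omegaPow {n : ℕ} {f : Eucl n → ℂ} (e : SphExpansion n f) (s : ℝ) :
    Eucl n → ℂ := fun x =>
  ∑' p : ℕ × ℕ,
    ((((p.1 * (n + p.1 - 2) : ℕ) : ℝ) ^ (s / 2) : ℝ) : ℂ) * e.c p ‖x‖ * e.Y p (‖x‖⁻¹ • x)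

/-- The Bessel function of order `s`, given by the integral formula
`J_s(y) = ((−i)^s/(4π)) ∫_{−2π}^{2π} e^{iy cos θ} e^{−isθ} dθ`. -/
def besselJ (s : ℝ) (y : ℝ) : ℂ :=
  (-Complex.I) ^ (s : ℂ) / (4 * (π : ℂ)) *
    ∫ θ in (-(2 * π) : ℝ)..(2 * π),
      Complex.exp (Complex.I * ((y * Real.cos θ : ℝ) : ℂ)) *
        Complex.exp (-(Complex.I * (s : ℂ) * (θ : ℂ)))

/-- The Hankel–φ wave packet `ψ^l_m(r) = ∫_0^∞ J_{(n−2)/2+l}(2πrρ) e^{−2πimρ} χ(ρ) dρ`. -/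
def hankelPsi (n : ℕ) (χ : ℝ → ℝ) (l : ℕ) (m r : ℝ) : ℂ :=
  ∫ ρ in Set.Ioi (0 : ℝ),
    besselJ (((n : ℝ) - 2) / 2 + l) (2 * π * r * ρ) *
      Complex.exp (-(2 * (π : ℂ) * Complex.I * (m : ℂ) * (ρ : ℂ))) * ((χ ρ : ℝ) : ℂ)

/-- `Q` is a partition of `ℝⁿ` into (axis-parallel, half-open) cubes of side length `∼ L`. -/
def IsCubePartition {ι : Type} (n : ℕ) (L : ℝ) (Q : ι → Set (Eucl n)) : Prop :=
  (∀ x : Eucl n, ∃! i : ι, x ∈ Q i) ∧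
    ∀ i : ι, ∃ (a : Eucl n) (s : ℝ), L / 2 ≤ s ∧ s ≤ 2 * L ∧
      Q i = {x : Eucl n | ∀ j : Fin n, a j ≤ x j ∧ x j < a j + s}

/-- The coarse scale norm `(Σ_α ‖f‖_{L²(Q_α)}^r)^{1/r}` over a family of cubes. -/
def cubeNorm {ι : Type} {n : ℕ} (Q : ι → Set (Eucl n)) (r : ℝ≥0∞) (f : Eucl n → ℂ) :
    ℝ≥0∞ :=
  if r = ∞ then ⨆ i : ι, eLpNorm f 2 (volume.restrict (Q i))
  else (∑' i : ι, eLpNorm f 2 (volume.restrict (Q i)) ^ r.toReal) ^ (1 / r.toReal)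

/-- The squared length of the spatial gradient, `|∇f(x)|² = Σᵢ |∂ᵢf(x)|²`. -/
def gradSq {n : ℕ} (f : Eucl n → ℂ) (x : Eucl n) : ℝ :=
  ∑ i : Fin n, ‖fderiv ℝ f x (EuclideanSpace.single i (1 : ℝ))‖ ^ 2

/-- The squared radial derivative `|∂_r f(x)|² = |(x/|x|)·∇f(x)|²`. -/
def radSq {n : ℕ} (f : Eucl n → ℂ) (x : Eucl n) : ℝ :=
  ‖fderiv ℝ f x (‖x‖⁻¹ • x)‖ ^ 2

end



/-- one dimensional oscillatory integral -/
noncomputable def rbOsc (g : ℝ → ℂ) (y : ℝ) : ℂ :=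
  ∫ ρ : ℝ, Complex.exp (2 * (π : ℂ) * Complex.I * (y : ℂ) * (ρ : ℂ)) * g ρ

lemma rbOsc_eq (g : ℝ → ℂ) (y : ℝ) : rbOsc g y = 𝓕 g (-y) := by
  rw [Real.fourier_real_eq_integral_exp_smul, rbOsc]
  congr 1
  ext ρ
  rw [smul_eq_mul]
  congr 2
  push_cast
  ring

noncomputable def rbG (g : ℝ → ℂ) (k : ℕ) (ρ : ℝ) : ℂ := g ρ / (2 * (π : ℂ) * Complex.I * (ρ : ℂ)) ^ k

lemma rbG_smooth (g : ℝ → ℂ) (hg : ContDiff ℝ (⊤ : ℕ∞) g)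
    (hs : Function.support g ⊆ Set.Ioo (1 / 2) 2) (k : ℕ) : ContDiff ℝ (⊤ : ℕ∞) (rbG g k) := by
  rw [contDiff_iff_contDiffAt]
  intro x
  by_cases hx : x = 0
  · have : rbG g k =ᶠ[nhds x] fun _ => 0 := by
      have h0 : ∀ᶠ y in nhds x, y < 1 / 2 := by
        rw [hx]; exact Iio_mem_nhds (by norm_num)
      filter_upwards [h0] with y hy
      have : g y = 0 := by
        by_contra h
        have := (hs h).1
        linarith
      simp [rbG, this]
    exact contDiffAt_const.congr_of_eventuallyEq this
  · unfold rbG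
    simp only [div_eq_mul_inv]
    refine hg.contDiffAt.mul (ContDiffAt.inv ?_ ?_)
    · have : ContDiff ℝ (⊤ : ℕ∞) (fun ρ : ℝ => (ρ : ℂ)) := Complex.ofRealCLM.contDiff
      exact (contDiffAt_const.mul this.contDiffAt).pow k
    · apply pow_ne_zero
      simp [hx, Real.pi_ne_zero]

lemma rbG_supp (g : ℝ → ℂ) 
    (hs : Function.support g ⊆ Set.Ioo (1 / 2) 2) (k : ℕ) : HasCompactSupport (rbG g k) := by
  refine HasCompactSupport.of_support_subset_isCompact (K := Set.Icc (1/2) 2) isCompact_Icc ?_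
  intro x hx
  have : x ∈ Function.support g := by
    intro h
    exact hx (by simp [rbG, h])
  exact Set.Ioo_subset_Icc_self (hs this)

lemma rb_family (g : ℝ → ℂ) (hg : ContDiff ℝ (⊤ : ℕ∞) g)
    (hs : Function.support g ⊆ Set.Ioo (1 / 2) 2) :
    ∃ Ψ : ℕ → ℝ → ℂ, Ψ 0 = rbOsc g ∧ (∀ k y, HasDerivAt (Ψ (k+1)) (Ψ k y) y) ∧
      (∀ k, Continuous (Ψ k)) ∧ ∀ k N : ℕ, ∃ C, 0 < C ∧ ∀ y, ‖Ψ k y‖ * (1+|y|)^N ≤ C := by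
  have hder : ∀ k y, HasDerivAt (rbOsc (rbG g (k+1))) (rbOsc (rbG g k) y) y := by
    intro k y
    have e : rbOsc (rbG g (k+1)) = fun y => 𝓕 (rbG g (k+1)) (-y) := by
      ext y; rw [rbOsc_eq]
    rw [e, rbOsc_eq]
    have hc := (rbG_smooth g hg hs (k+1)).continuous
    have h1 : Integrable (rbG g (k+1)) := hc.integrable_of_hasCompactSupport (rbG_supp g hs _)
    have h2 : Integrable (fun x : ℝ => x • rbG g (k+1) x) :=
      (continuous_id.smul hc).integrable_of_hasCompactSupport (rbG_supp g hs _).smul_left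
    have h3 := (Real.hasDerivAt_fourier h1 h2 (-y)).scomp y (hasDerivAt_neg y)
    refine h3.congr_deriv ?_
    rw [neg_one_smul, Real.fourier_real_eq_integral_exp_smul, Real.fourier_real_eq_integral_exp_smul, ← integral_neg]
    congr 1
    ext x
    rw [← smul_neg]
    congr 1
    simp only [rbG, smul_eq_mul]
    by_cases hx : x = 0
    · have : g x = 0 := by
        by_contra h
        have := (hs h).1
        rw [hx] at this
        norm_num at this
      simp [this]
    · have : (2 * (π : ℂ) * Complex.I * (x : ℂ)) ≠ 0 := by simp [hx, Real.pi_ne_zero]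
      have hx' : (x : ℂ) ≠ 0 := by exact_mod_cast hx
      rw [pow_succ]
      field_simp
  have hdec : ∀ k N : ℕ, ∃ C, 0 < C ∧ ∀ y, ‖rbOsc (rbG g k) y‖ * (1+|y|)^N ≤ C := by
    intro k N
    set S : SchwartzMap ℝ ℂ := (rbG_supp g hs k).toSchwartzMap (rbG_smooth g hg hs k) with hS
    have hF : ∀ y, ‖rbOsc (rbG g k) y‖ = ‖(𝓕 S) (-y)‖ := by
      intro y
      rw [rbOsc_eq, SchwartzMap.fourier_coe]
      rfl
    obtain ⟨C0, hC0, h0⟩ := (𝓕 S).decay 0 0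
    obtain ⟨C1, hC1, h1⟩ := (𝓕 S).decay N 0
    refine ⟨2 ^ N * (C0 + C1), by positivity, fun y => ?_⟩
    rw [hF]
    have a0 := h0 (-y)
    have a1 := h1 (-y)
    rw [norm_iteratedFDeriv_zero] at a0 a1
    rw [norm_neg, Real.norm_eq_abs] at a1
    rw [pow_zero, one_mul] at a0
    have hp : (1 + |y|) ^ N ≤ 2 ^ N * (1 + |y| ^ N) := by
      rcases le_total |y| 1 with h | h
      · calc (1 + |y|) ^ N ≤ 2 ^ N := by gcongr; linarith
          _ ≤ _ := by
            have : 0 ≤ |y| ^ N := by positivity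
            have : (0:ℝ) < 2 ^ N := by positivity
            nlinarith
      · calc (1 + |y|) ^ N ≤ (2 * |y|) ^ N := by gcongr; linarith
          _ = 2 ^ N * |y| ^ N := by rw [mul_pow]
          _ ≤ _ := by gcongr; linarith
    calc ‖(𝓕 S) (-y)‖ * (1+|y|)^N ≤ ‖(𝓕 S) (-y)‖ * (2 ^ N * (1 + |y| ^ N)) := by gcongr
      _ = 2 ^ N * (‖(𝓕 S) (-y)‖ + |y| ^ N * ‖(𝓕 S) (-y)‖) := by ring
      _ ≤ _ := by gcongr
  refine ⟨fun k => rbOsc (rbG g k), ?_, hder, ?_, hdec⟩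
  · have : rbG g 0 = g := by ext x; simp [rbG]
    simp [this]
  · intro k
    have e : rbOsc (rbG g k) = fun y => 𝓕 (rbG g k) (-y) := by
      ext y; rw [rbOsc_eq]
    have hc := (rbG_smooth g hg hs k).continuous
    have h1 : Integrable (rbG g k) := hc.integrable_of_hasCompactSupport (rbG_supp g hs _)
    have : (fun y => 𝓕 (rbG g k) (-y)) = fun y => (𝓕 ((rbG_supp g hs k).toSchwartzMap (rbG_smooth g hg hs k))) (-y) := by
      ext y
      rw [SchwartzMap.fourier_coe]
      rfl
    show Continuous (rbOsc (rbG g k))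
    rw [e, this]
    exact (SchwartzMap.continuous _).comp continuous_neg

lemma rb_wInt (α : ℝ) (hα : 0 ≤ α) : ∃ C, 0 < C ∧ ∀ t r : ℝ, 0 ≤ r →
    ∫ s in (-1:ℝ)..1, (1-s^2)^α * (1+|t+r*s|)^(-(α+2)) ≤ C * ((1+|(|t|)-r|)/(1+|t|))^(α+1) := by
  have hJ : Integrable (fun y : ℝ => (1+‖y‖)^(-(2:ℝ))) :=
    integrable_one_add_norm (by simp)
  set J := ∫ y : ℝ, (1+‖y‖)^(-(2:ℝ)) with hJdef
  have hJ0 : 0 ≤ J := integral_nonneg fun y => by positivity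
  refine ⟨2 * 2^(α+1) + 4^(α+1) * J, by positivity, fun t r hr => ?_⟩
  set D := 1 + |(|t|) - r| with hD
  set T := 1 + |t| with hT
  have hD1 : 1 ≤ D := by rw [hD]; linarith [abs_nonneg (|t| - r)]
  have hT1 : 1 ≤ T := by rw [hT]; linarith [abs_nonneg t]
  have hcont : Continuous fun s : ℝ => (1-s^2)^α * (1+|t+r*s|)^(-(α+2)) := by
    refine Continuous.mul ?_ ?_
    · exact Continuous.rpow_const (by fun_prop) (fun _ => Or.inr hα)
    · refine Continuous.rpow_const (by fun_prop) (fun s => Or.inl ?_)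
      positivity
  have hE : 0 ≤ (D/T)^(α+1) := by positivity
  by_cases hc : T ≤ 2 * D
  · have h1 : ∫ s in (-1:ℝ)..1, (1-s^2)^α * (1+|t+r*s|)^(-(α+2)) ≤ ∫ s in (-1:ℝ)..1, (1:ℝ) := by
      apply intervalIntegral.integral_mono_on (by norm_num) (hcont.intervalIntegrable _ _)
        (continuous_const.intervalIntegrable _ _)
      intro s hs
      have hs2 : s^2 ≤ 1 := by nlinarith [hs.1, hs.2]
      have e1 : (1-s^2)^α ≤ 1 := Real.rpow_le_one (by linarith) (by nlinarith) hα
      have e2 : (1+|t+r*s|)^(-(α+2)) ≤ 1 :=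
        Real.rpow_le_one_of_one_le_of_nonpos (by linarith [abs_nonneg (t+r*s)]) (by linarith)
      exact mul_le_one₀ e1 (by positivity) e2
    have h2 : 1 ≤ 2^(α+1) * (D/T)^(α+1) := by
      rw [← Real.mul_rpow (by norm_num) (by positivity)]
      apply Real.one_le_rpow _ (by linarith)
      rw [← mul_div_assoc, le_div_iff₀ (by linarith)]
      linarith
    have h3 : 0 ≤ 4^(α+1) * J * (D/T)^(α+1) := by positivity
    rw [intervalIntegral.integral_const, smul_eq_mul] at h1
    nlinarith
  · push Not at hc
    have hrT : T / 2 ≤ r := by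
      have := le_abs_self (|t| - r)
      linarith
    have hr0 : 0 < r := by linarith
    have key : ∀ s ∈ Set.Icc (-1:ℝ) 1, (1-s^2)^α * (1+|t+r*s|)^(-(α+2)) ≤ (2*D/r)^α * (1+‖t+r*s‖)^(-(2:ℝ)) := by
      intro s hs
      have hs1 : |s| ≤ 1 := abs_le.2 hs
      have hsa : s^2 = |s|^2 := (sq_abs s).symm
      have hY : 1 ≤ 1 + |t+r*s| := by linarith [abs_nonneg (t+r*s)]
      set Y := 1 + |t+r*s| with hYd
      have hb : r * (1-|s|) ≤ D * Y := by
        have a1 : |t| ≤ |t+r*s| + |r*s| := by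
          have := abs_sub (t+r*s) (r*s)
          simpa using this
        rw [abs_mul, abs_of_pos hr0] at a1
        have := neg_abs_le (|t| - r)
        nlinarith
      have hbase : 1 - s^2 ≤ (2*D/r) * Y := by
        have : 1 - s^2 ≤ 2 * (1-|s|) := by rw [hsa]; nlinarith [abs_nonneg s]
        rw [div_mul_eq_mul_div, le_div_iff₀ hr0]
        nlinarith
      have h0 : 0 ≤ 1 - s^2 := by rw [hsa]; nlinarith [abs_nonneg s]
      calc (1-s^2)^α * Y^(-(α+2)) ≤ ((2*D/r) * Y)^α * Y^(-(α+2)) := by gcongr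
        _ = (2*D/r)^α * (Y^α * Y^(-(α+2))) := by
          rw [Real.mul_rpow (by positivity) (by positivity)]; ring
        _ = (2*D/r)^α * Y^(-(2:ℝ)) := by
          rw [← Real.rpow_add (by linarith)]; congr 2; ring
    have hc2 : Continuous fun s : ℝ => (2*D/r)^α * (1+‖t+r*s‖)^(-(2:ℝ)) := by
      refine continuous_const.mul ?_
      refine Continuous.rpow_const (by fun_prop) (fun s => Or.inl ?_)
      positivity
    have h1 := intervalIntegral.integral_mono_on (μ := volume) (by norm_num) (hcont.intervalIntegrable (-1) 1) (hc2.intervalIntegrable _ _) key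
    rw [intervalIntegral.integral_const_mul, intervalIntegral.integral_comp_add_mul (fun y : ℝ => (1+‖y‖)^(-(2:ℝ))) hr0.ne' t] at h1
    have h2 : ∫ y in (t + r * -1)..(t+r*1), (1+‖y‖)^(-(2:ℝ)) ≤ J := by
      rw [intervalIntegral.integral_of_le (by linarith)]
      exact setIntegral_le_integral hJ (Filter.Eventually.of_forall fun y => by positivity)
    have h20 : 0 ≤ ∫ y in (t + r * -1)..(t+r*1), (1+‖y‖)^(-(2:ℝ)) :=
      intervalIntegral.integral_nonneg (by linarith) (fun y _ => by positivity)
    have h3 : (2*D/r)^α ≤ (4*(D/T))^α := by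
      apply Real.rpow_le_rpow (by positivity) _ hα
      rw [← mul_div_assoc, div_le_div_iff₀ hr0 (by linarith)]
      nlinarith
    have h4 : r⁻¹ ≤ 4 * (D/T) := by
      rw [← mul_div_assoc, inv_eq_one_div, div_le_div_iff₀ hr0 (by linarith)]
      nlinarith
    calc _ ≤ (2*D/r)^α * r⁻¹ • ∫ y in (t + r * -1)..(t+r*1), (1+‖y‖)^(-(2:ℝ)) := h1
      _ ≤ (4*(D/T))^α * ((4 * (D/T)) * J) := by
        rw [smul_eq_mul]
        gcongr
      _ = (4*(D/T))^(α+1) * J := by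
        rw [Real.rpow_add (by positivity), Real.rpow_one]; ring
      _ = 4^(α+1) * J * (D/T)^(α+1) := by
        rw [Real.mul_rpow (by norm_num) (by positivity)]; ring
      _ ≤ _ := by
        have : 0 ≤ 2 * 2^(α+1) * (D/T)^(α+1) := by positivity
        linarith

lemma rb_absInt (α : ℝ) (hα : 0 ≤ α) (Ψ : ℝ → ℂ) (hc : Continuous Ψ)
    (hd : ∀ N : ℕ, ∃ C, 0 < C ∧ ∀ y, ‖Ψ y‖ * (1+|y|)^N ≤ C) (K : ℕ) :
    ∃ C, 0 < C ∧ ∀ t r : ℝ, 0 ≤ r → ∀ a b : ℝ, -1 ≤ a → a ≤ b → b ≤ 1 →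
    ∫ s in a..b, (1-s^2)^α * (‖Ψ (t+r*s)‖ * (1+|t+r*s|)^K) ≤ C * ((1+|(|t|)-r|)/(1+|t|))^(α+1) := by
  obtain ⟨C1, hC1, h1⟩ := rb_wInt α hα
  obtain ⟨N, hN⟩ := exists_nat_ge (α + 2)
  obtain ⟨C2, hC2, h2⟩ := hd (N + K)
  refine ⟨C2 * C1, by positivity, fun t r hr a b ha hab hb => ?_⟩
  have hcw : Continuous fun s : ℝ => (1-s^2)^α :=
    Continuous.rpow_const (by fun_prop) (fun _ => Or.inr hα)
  have hcont : Continuous fun s : ℝ => (1-s^2)^α * (‖Ψ (t+r*s)‖ * (1+|t+r*s|)^K) := by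
    have : Continuous fun s : ℝ => Ψ (t+r*s) := hc.comp (by fun_prop)
    fun_prop
  have hcont2 : Continuous fun s : ℝ => C2 * ((1-s^2)^α * (1+|t+r*s|)^(-(α+2))) := by
    refine continuous_const.mul (hcw.mul ?_)
    refine Continuous.rpow_const (by fun_prop) (fun s => Or.inl ?_)
    positivity
  have hw : ∀ s ∈ Set.Icc (-1:ℝ) 1, 0 ≤ (1-s^2)^α := fun s hs =>
    Real.rpow_nonneg (by nlinarith [hs.1, hs.2]) _
  calc _ ≤ ∫ s in (-1:ℝ)..1, (1-s^2)^α * (‖Ψ (t+r*s)‖ * (1+|t+r*s|)^K) := by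
        apply intervalIntegral.integral_mono_interval ha hab hb _ (hcont.intervalIntegrable _ _)
        rw [Filter.EventuallyLE, ae_restrict_iff' measurableSet_Ioc]
        refine Filter.Eventually.of_forall fun s hs => ?_
        have := hw s (Set.Ioc_subset_Icc_self hs)
        simp only [Pi.zero_apply]
        positivity
    _ ≤ ∫ s in (-1:ℝ)..1, C2 * ((1-s^2)^α * (1+|t+r*s|)^(-(α+2))) := by
        apply intervalIntegral.integral_mono_on (by norm_num) (hcont.intervalIntegrable _ _)
          (hcont2.intervalIntegrable _ _)
        intro s hs
        have hws := hw s hs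
        have hY : 1 ≤ 1 + |t+r*s| := by linarith [abs_nonneg (t+r*s)]
        have h3 := h2 (t+r*s)
        set Y := 1 + |t+r*s|
        have hp : Y ^ (α+2) ≤ Y ^ N := by
          rw [← Real.rpow_natCast]
          exact Real.rpow_le_rpow_of_exponent_le hY hN
        have : ‖Ψ (t+r*s)‖ * Y^K ≤ C2 * Y^(-(α+2)) := by
          rw [Real.rpow_neg (by linarith), ← div_eq_mul_inv, le_div_iff₀ (by positivity)]
          calc ‖Ψ (t+r*s)‖ * Y^K * Y^(α+2) ≤ ‖Ψ (t+r*s)‖ * Y^K * Y^N := by gcongr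
            _ = ‖Ψ (t+r*s)‖ * Y^(N+K) := by rw [pow_add]; ring
            _ ≤ _ := h3
        calc _ ≤ (1-s^2)^α * (C2 * Y^(-(α+2))) := by gcongr
          _ = _ := by ring
    _ ≤ _ := by
        rw [intervalIntegral.integral_const_mul, mul_assoc]
        exact mul_le_mul_of_nonneg_left (h1 t r hr) hC2.le

lemma rb_far (α : ℝ) (hα : 0 ≤ α) (Ψ : ℝ → ℂ) (hc : Continuous Ψ)
    (hd : ∀ N : ℕ, ∃ C, 0 < C ∧ ∀ y, ‖Ψ y‖ * (1+|y|)^N ≤ C) (K : ℕ) :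
    ∃ C, 0 < C ∧ ∀ t r : ℝ, 0 ≤ r → ∀ a b : ℝ, -1 ≤ a → a ≤ b → b ≤ 1 →
    (∀ s ∈ Set.Icc a b, (1+|(|t|)-r|) / 2 ≤ 1 + |t+r*s|) →
    ‖∫ s in a..b, (((1-s^2)^α : ℝ) : ℂ) * Ψ (t+r*s)‖ ≤ 
      C * ((1+|(|t|)-r|)/(1+|t|))^(α+1) / (1+|(|t|)-r|)^K := by
  obtain ⟨C, hC, h⟩ := rb_absInt α hα Ψ hc hd K
  refine ⟨2^K * C, by positivity, fun t r hr a b ha hab hb hfar => ?_⟩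
  have h := h t r hr a b ha hab hb
  set D := 1 + |(|t|) - r| with hD
  have hD1 : 1 ≤ D := by rw [hD]; linarith [abs_nonneg (|t| - r)]
  have hcw : Continuous fun s : ℝ => (1-s^2)^α :=
    Continuous.rpow_const (by fun_prop) (fun _ => Or.inr hα)
  have hcont : Continuous fun s : ℝ => (1-s^2)^α * (‖Ψ (t+r*s)‖ * (1+|t+r*s|)^K) := by
    have : Continuous fun s : ℝ => Ψ (t+r*s) := hc.comp (by fun_prop)
    fun_prop
  have hDK : 0 < D^K := by positivity
  have : ‖∫ s in a..b, (((1-s^2)^α : ℝ) : ℂ) * Ψ (t+r*s)‖ ≤ 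
      ∫ s in a..b, (2^K / D^K) * ((1-s^2)^α * (‖Ψ (t+r*s)‖ * (1+|t+r*s|)^K)) := by
    apply intervalIntegral.norm_integral_le_of_norm_le hab _ ((hcont.const_mul _).intervalIntegrable _ _)
    refine Filter.Eventually.of_forall fun s hs => ?_
    have hs' := Set.Ioc_subset_Icc_self hs
    have hw : 0 ≤ (1-s^2)^α := Real.rpow_nonneg (by nlinarith [hs'.1, hs'.2]) _
    rw [norm_mul, Complex.norm_real, Real.norm_of_nonneg hw]
    have hf : (D/2)^K ≤ (1+|t+r*s|)^K := by
      have := hfar s hs'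
      gcongr
    rw [div_pow] at hf
    have h1 : 1 ≤ (2^K / D^K) * (1+|t+r*s|)^K := by
      calc (1:ℝ) = (2^K / D^K) * (D^K/2^K) := by field_simp
        _ ≤ _ := by gcongr
    calc (1-s^2)^α * ‖Ψ (t+r*s)‖ = (1-s^2)^α * ‖Ψ (t+r*s)‖ * 1 := by ring
      _ ≤ (1-s^2)^α * ‖Ψ (t+r*s)‖ * ((2^K / D^K) * (1+|t+r*s|)^K) := by gcongr
      _ = _ := by ring
  refine this.trans ?_
  rw [intervalIntegral.integral_const_mul]
  calc _ ≤ (2^K / D^K) * (C * (D/(1+|t|))^(α+1)) := by gcongr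
    _ = _ := by ring

/-- weights produced by integrating by parts -/
noncomputable def rbW (α : ℝ) (a b : ℕ) (s : ℝ) : ℝ := s^a * ((1-s^2)^α / (1-s^2)^b)

lemma rbW_deriv (α : ℝ) (a b : ℕ) (s : ℝ) (hs : 0 < 1 - s^2) :
    HasDerivAt (rbW α a b) (a * rbW α (a-1) b s + (2*b-2*α) * rbW α (a+1) (b+1) s) s := by
  have h1 : HasDerivAt (fun s : ℝ => 1 - s^2) (-(2*s)) s := by
    have := (hasDerivAt_pow 2 s).const_sub 1
    simpa using this
  have h2 := h1.rpow_const (p := α) (Or.inl hs.ne')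
  have h3 := h1.pow b
  have h4 := (hasDerivAt_pow a s).mul (h2.div h3 (pow_ne_zero b hs.ne'))
  refine h4.congr_deriv ?_
  simp only [rbW, Pi.div_apply, Pi.pow_apply]
  rw [Real.rpow_sub hs, Real.rpow_one]
  set q := 1 - s^2 with hq
  set w := q^α with hw
  have hq0 : q ≠ 0 := hs.ne'
  rcases b with _ | b
  · simp
    field_simp
    ring
  · simp only [Nat.add_sub_cancel, pow_succ]
    push_cast
    have hqb : q^b ≠ 0 := pow_ne_zero b hq0
    field_simp
    ring

lemma rbW_cont (α : ℝ) (a b : ℕ) (s0 : ℝ) (h1 : s0 < 1) :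
    ContinuousOn (rbW α a b) (Set.Icc (-s0) s0) := fun s hs =>
  (rbW_deriv α a b s (by nlinarith [hs.1, hs.2])).continuousAt.continuousWithinAt

lemma rbW_bound (α : ℝ) (a b : ℕ) (δ s : ℝ) (hδ : 0 < δ) (h1 : |s| ≤ 1 - δ/2) (_ : δ ≤ 1) :
    |rbW α a b s| ≤ (1-s^2)^α * (2/δ)^b := by
  have h0 := abs_nonneg s
  have hsa : s^2 = |s|^2 := (sq_abs s).symm
  have hq : δ/2 ≤ 1 - s^2 := by rw [hsa]; nlinarith
  have hq0 : 0 < 1 - s^2 := by linarith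
  rw [rbW, abs_mul, abs_pow, abs_div, abs_of_nonneg (Real.rpow_nonneg hq0.le _), abs_of_pos (pow_pos hq0 b)]
  have e1 : |s|^a ≤ 1 := pow_le_one₀ h0 (by linarith)
  have e2 : (δ/2)^b ≤ (1-s^2)^b := by gcongr
  have e3 : (2/δ)^b = ((δ/2)^b)⁻¹ := by rw [← inv_pow, inv_div]
  rw [e3, div_eq_mul_inv]
  calc _ ≤ 1 * ((1-s^2)^α * ((1-s^2)^b)⁻¹) := by gcongr
    _ ≤ _ := by rw [one_mul]; gcongr

lemma rb_interior (α : ℝ) (hα : 0 ≤ α) (Ψ : ℕ → ℝ → ℂ) (hc : ∀ k, Continuous (Ψ k))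
    (hder : ∀ k y, HasDerivAt (Ψ (k+1)) (Ψ k y) y)
    (hd : ∀ k N : ℕ, ∃ C, 0 < C ∧ ∀ y, ‖Ψ k y‖ * (1+|y|)^N ≤ C) (k : ℕ) :
    ∀ a b j : ℕ, ∃ C, 0 < C ∧ ∀ t r : ℝ, 1 ≤ r - |t| → ∀ s0 : ℝ, s0 = 1 - ((r-|t|)/r)/2 →
    ‖∫ s in (-s0)..s0, ((rbW α a b s : ℝ) : ℂ) * Ψ j (t+r*s)‖ ≤
      C * ((1+|(|t|)-r|)/(1+|t|))^(α+1) * (r/(r-|t|))^b / (r-|t|)^k := by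
  induction k with
  | zero =>
    intro a b j
    obtain ⟨C, hC, h⟩ := rb_absInt α hα (Ψ j) (hc j) (hd j) 0
    refine ⟨2^b * C, by positivity, fun t r htr s0 hs0 => ?_⟩
    have ht := abs_nonneg t
    have hr : 0 < r := by linarith
    set d := r - |t| with hdd
    have hδ : 0 < d / r := by positivity
    have hδ1 : d / r ≤ 1 := by rw [div_le_one hr]; linarith
    have hs00 : 0 ≤ s0 := by linarith
    have h := h t r hr.le (-s0) s0 (by linarith) (by linarith) (by linarith)
    have hcw : Continuous fun s : ℝ => (1-s^2)^α :=
      Continuous.rpow_const (by fun_prop) (fun _ => Or.inr hα)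
    have hcont : Continuous fun s : ℝ => (1-s^2)^α * (‖Ψ j (t+r*s)‖ * (1+|t+r*s|)^0) := by
      have : Continuous fun s : ℝ => Ψ j (t+r*s) := (hc j).comp (by fun_prop)
      fun_prop
    have : ‖∫ s in (-s0)..s0, ((rbW α a b s : ℝ) : ℂ) * Ψ j (t+r*s)‖ ≤ 
        ∫ s in (-s0)..s0, (2/(d/r))^b * ((1-s^2)^α * (‖Ψ j (t+r*s)‖ * (1+|t+r*s|)^0)) := by
      apply intervalIntegral.norm_integral_le_of_norm_le (by linarith) _
        ((hcont.const_mul _).intervalIntegrable _ _)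
      refine Filter.Eventually.of_forall fun s hs => ?_
      have hs' := Set.Ioc_subset_Icc_self hs
      have hb := rbW_bound α a b (d/r) s hδ (by rw [← hs0]; exact abs_le.2 hs') hδ1
      rw [norm_mul, Complex.norm_real, Real.norm_eq_abs]
      calc _ ≤ ((1-s^2)^α * (2/(d/r))^b) * ‖Ψ j (t+r*s)‖ := by gcongr
        _ = _ := by ring
    refine this.trans ?_
    rw [intervalIntegral.integral_const_mul]
    calc _ ≤ (2/(d/r))^b * (C * ((1+|(|t|)-r|)/(1+|t|))^(α+1)) := by gcongr
      _ = _ := by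
        rw [pow_zero, div_one, show 2/(d/r) = 2 * (r/d) by field_simp, mul_pow]; ring
  | succ k ih =>
    intro a b j
    obtain ⟨C1, hC1, h1⟩ := ih (a-1) b (j+1)
    obtain ⟨C2, hC2, h2⟩ := ih (a+1) (b+1) (j+1)
    obtain ⟨C3, hC3, h3⟩ := hd (j+1) (k+1)
    refine ⟨2 * 2^b * 2^(k+1) * C3 + a * C1 + |2*b-2*α| * C2, by positivity, fun t r htr s0 hs0 => ?_⟩
    have h1 := h1 t r htr s0 hs0
    have h2 := h2 t r htr s0 hs0
    have ht := abs_nonneg t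
    have hr : 0 < r := by linarith
    set d := r - |t| with hdd
    have hd0 : 0 < d := by linarith
    have hδ : 0 < d / r := by positivity
    have hδ1 : d / r ≤ 1 := by rw [div_le_one hr]; linarith
    have hs00 : 0 ≤ s0 := by linarith
    have hs01 : s0 < 1 := by linarith
    have hD : 1 + |(|t|) - r| = 1 + d := by rw [abs_sub_comm, abs_of_pos hd0]
    rw [hD] at h1 h2 ⊢
    set E := ((1+d)/(1+|t|))^(α+1) with hE
    have hE0 : 0 < E := by positivity
    have huI : Set.uIcc (-s0) s0 = Set.Icc (-s0) s0 := Set.uIcc_of_le (by linarith)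
    set I1 := ∫ s in (-s0)..s0, ((rbW α (a-1) b s : ℝ) : ℂ) * Ψ (j+1) (t+r*s) with hI1
    set I2 := ∫ s in (-s0)..s0, ((rbW α (a+1) (b+1) s : ℝ) : ℂ) * Ψ (j+1) (t+r*s) with hI2
    have hrC : (r : ℂ) ≠ 0 := by exact_mod_cast hr.ne'
    have hcW : ∀ a b, ContinuousOn (fun s => ((rbW α a b s : ℝ) : ℂ)) (Set.uIcc (-s0) s0) := by
      intro a b
      rw [huI]
      exact Complex.continuous_ofReal.comp_continuousOn (rbW_cont α a b s0 hs01)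
    have hcP : ∀ j, Continuous fun s : ℝ => Ψ j (t+r*s) := fun j => (hc j).comp (by fun_prop)
    have ibp : ∫ s in (-s0)..s0, ((rbW α a b s : ℝ) : ℂ) * Ψ j (t+r*s) =
        ((rbW α a b s0 : ℝ) : ℂ) * (Ψ (j+1) (t+r*s0) / r) -
        ((rbW α a b (-s0) : ℝ) : ℂ) * (Ψ (j+1) (t+r*(-s0)) / r) -
        ((a : ℂ) * I1 + (((2*b-2*α : ℝ)) : ℂ) * I2) / r := by
      rw [intervalIntegral.integral_mul_deriv_eq_deriv_mul
        (u := fun s => ((rbW α a b s : ℝ) : ℂ))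
        (u' := fun s => (((a * rbW α (a-1) b s + (2*b-2*α) * rbW α (a+1) (b+1) s : ℝ)) : ℂ))
        (v := fun s => Ψ (j+1) (t+r*s) / r) (v' := fun s => Ψ j (t+r*s))]
      · congr 1
        rw [hI1, hI2, ← intervalIntegral.integral_const_mul, ← intervalIntegral.integral_const_mul,
          ← intervalIntegral.integral_add, ← intervalIntegral.integral_div]
        · congr 1
          ext s
          push_cast
          ring
        · exact (continuousOn_const.mul ((hcW _ _).mul (hcP _).continuousOn)).intervalIntegrable
        · exact (continuousOn_const.mul ((hcW _ _).mul (hcP _).continuousOn)).intervalIntegrable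
      · intro s hs
        rw [huI] at hs
        exact (rbW_deriv α a b s (by nlinarith [hs.1, hs.2])).ofReal_comp
      · intro s hs
        have e1 : HasDerivAt (fun s : ℝ => t + r*s) r s := by
          simpa using ((hasDerivAt_id s).const_mul r).const_add t
        have e2 := ((hder j (t+r*s)).scomp s e1).div_const (r : ℂ)
        refine e2.congr_deriv ?_
        rw [Complex.real_smul]
        field_simp
      · apply ContinuousOn.intervalIntegrable
        simp only [Complex.ofReal_add, Complex.ofReal_mul _ (rbW _ _ _ _)]
        exact (continuousOn_const.mul (hcW _ _)).add (continuousOn_const.mul (hcW _ _))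
      · exact (hcP j).intervalIntegrable _ _
    have hbd : ∀ σ : ℝ, |σ| = s0 → ‖((rbW α a b σ : ℝ) : ℂ) * (Ψ (j+1) (t+r*σ) / r)‖ ≤
        2^b * 2^(k+1) * C3 * E * (r/d)^b / d^(k+1) := by
      intro σ hσ
      rw [norm_mul, norm_div, Complex.norm_real, Complex.norm_real, Real.norm_eq_abs, Real.norm_of_nonneg hr.le]
      have b1 := rbW_bound α a b (d/r) σ hδ (by rw [← hs0]; exact hσ.le) hδ1
      have hsa : σ^2 = s0^2 := by rw [← hσ]; exact (sq_abs σ).symm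
      have b2 : (1-σ^2)^α ≤ (d/r)^α := by
        apply Real.rpow_le_rpow _ _ hα
        · rw [hsa]; nlinarith
        · rw [hsa, hs0]; nlinarith
      have b3 := h3 (t+r*σ)
      have b4 : d/2 ≤ 1 + |t+r*σ| := by
        have a1 : |r*σ| ≤ |t+r*σ| + |t| := by
          have := abs_sub (t+r*σ) t
          simpa using this
        rw [abs_mul, abs_of_pos hr, hσ, hs0] at a1
        have : r * (1 - d/r/2) = r - d/2 := by field_simp
        linarith
      have b5 : ‖Ψ (j+1) (t+r*σ)‖ ≤ C3 * (2^(k+1) / d^(k+1)) := by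
        have : (d/2)^(k+1) ≤ (1+|t+r*σ|)^(k+1) := by gcongr
        rw [div_pow] at this
        have e : C3 * (2^(k+1) / d^(k+1)) = C3 / (d^(k+1)/2^(k+1)) := by field_simp
        rw [e, le_div_iff₀ (by positivity)]
        exact le_trans (by gcongr) b3
      have b6 : (d/r)^α / r ≤ E := by
        calc (d/r)^α / r ≤ (d/r)^α * (d/r) := by
              rw [div_eq_mul_one_div]; gcongr
          _ = (d/r)^(α+1) := by rw [Real.rpow_add hδ, Real.rpow_one]
          _ ≤ E := by
            apply Real.rpow_le_rpow hδ.le _ (by linarith)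
            gcongr <;> linarith
      calc _ ≤ ((d/r)^α * (2/(d/r))^b) * (C3 * (2^(k+1) / d^(k+1)) / r) := by
            gcongr
            exact b1.trans (by gcongr)
        _ = ((d/r)^α / r) * ((2/(d/r))^b * (C3 * (2^(k+1) / d^(k+1)))) := by ring
        _ ≤ E * ((2/(d/r))^b * (C3 * (2^(k+1) / d^(k+1)))) := by gcongr
        _ = _ := by rw [show 2/(d/r) = 2 * (r/d) by field_simp, mul_pow]; ring
    have i1 : ‖(a : ℂ) * I1 / r‖ ≤ a * C1 * E * (r/d)^b / d^(k+1) := by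
      rw [norm_div, norm_mul, Complex.norm_real, Real.norm_of_nonneg hr.le, Complex.norm_natCast]
      calc _ ≤ a * (C1 * E * (r/d)^b / d^k) / d := by
            gcongr
            linarith
        _ = _ := by rw [pow_succ]; field_simp
    have i2 : ‖(((2*b-2*α : ℝ)) : ℂ) * I2 / r‖ ≤ |2*b-2*α| * C2 * E * (r/d)^b / d^(k+1) := by
      rw [norm_div, norm_mul, Complex.norm_real, Complex.norm_real, Real.norm_of_nonneg hr.le, Real.norm_eq_abs]
      calc _ ≤ |2*b-2*α| * (C2 * E * (r/d)^(b+1) / d^k) / r := by gcongr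
        _ = _ := by rw [pow_succ, pow_succ]; field_simp
    rw [ibp, add_div]
    calc _ ≤ (‖((rbW α a b s0 : ℝ) : ℂ) * (Ψ (j+1) (t+r*s0) / r)‖ +
        ‖((rbW α a b (-s0) : ℝ) : ℂ) * (Ψ (j+1) (t+r*(-s0)) / r)‖) +
        (‖(a : ℂ) * I1 / r‖ + ‖(((2*b-2*α : ℝ)) : ℂ) * I2 / r‖) := by
          refine (norm_sub_le _ _).trans (add_le_add (norm_sub_le _ _) (norm_add_le _ _))
      _ ≤ _ := add_le_add (add_le_add (hbd s0 (abs_of_nonneg hs00)) (hbd (-s0) (by rw [abs_neg]; exact abs_of_nonneg hs00))) (add_le_add i1 i2)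
      _ = _ := by ring

lemma rb_main (α : ℝ) (hα : 0 ≤ α) (Ψ : ℕ → ℝ → ℂ) (hc : ∀ k, Continuous (Ψ k))
    (hder : ∀ k y, HasDerivAt (Ψ (k+1)) (Ψ k y) y)
    (hd : ∀ k N : ℕ, ∃ C, 0 < C ∧ ∀ y, ‖Ψ k y‖ * (1+|y|)^N ≤ C) (M : ℕ) :
    ∃ C, 0 < C ∧ ∀ t r : ℝ, 0 ≤ r → 
    ‖∫ s in (-1:ℝ)..1, (((1-s^2)^α : ℝ) : ℂ) * Ψ 0 (t+r*s)‖ ≤ 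
      C * (1+|t|)^(-(α+1)) * (1+|(|t|)-r|)^(-(M:ℝ)) := by
  obtain ⟨K, hK⟩ := exists_nat_ge (M + (α+1))
  obtain ⟨C1, hC1, h1⟩ := rb_far α hα (Ψ 0) (hc 0) (hd 0) K
  obtain ⟨C2, hC2, h2⟩ := rb_interior α hα Ψ hc hder hd K 0 0 0
  refine ⟨2 * C1 + 2^K * C2, by positivity, fun t r hr => ?_⟩
  have h1 := h1 t r hr
  set D := 1 + |(|t|) - r| with hD
  have hD1 : 1 ≤ D := by rw [hD]; linarith [abs_nonneg (|t| - r)]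
  have hT0 : 0 < 1 + |t| := by positivity
  have hfin : (D/(1+|t|))^(α+1) / D^K ≤ (1+|t|)^(-(α+1)) * D^(-(M:ℝ)) := by
    rw [Real.div_rpow (by linarith) hT0.le, Real.rpow_neg hT0.le, ← Real.rpow_natCast D K]
    have : D^(α+1) / D^(K:ℝ) ≤ D^(-(M:ℝ)) := by
      rw [← Real.rpow_sub (by linarith)]
      exact Real.rpow_le_rpow_of_exponent_le hD1 (by linarith)
    calc _ = ((1+|t|)^(α+1))⁻¹ * (D^(α+1) / D^(K:ℝ)) := by ring
      _ ≤ _ := by gcongr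
  have hD0 : 0 < D := by linarith
  suffices ‖∫ s in (-1:ℝ)..1, (((1-s^2)^α : ℝ) : ℂ) * Ψ 0 (t+r*s)‖ ≤ 
      (2 * C1 + 2^K * C2) * ((D/(1+|t|))^(α+1) / D^K) by
    refine this.trans ?_
    rw [mul_assoc]
    gcongr
  set E := (D/(1+|t|))^(α+1) with hE
  have hE0 : 0 ≤ E := by positivity
  by_cases hcase : 1 ≤ r - |t|
  · have ht := abs_nonneg t
    have hr0 : 0 < r := by linarith
    obtain ⟨s0, hs0⟩ : ∃ s0, s0 = 1 - ((r-|t|)/r)/2 := ⟨_, rfl⟩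
    have h2 := h2 t r hcase s0 hs0
    have hDd : D = 1 + (r - |t|) := by rw [hD, abs_sub_comm, abs_of_pos (by linarith)]
    set d := r - |t| with hdd
    have hδ : 0 < d / r := by positivity
    have hδ1 : d / r ≤ 1 := by rw [div_le_one hr0]; linarith
    have hrs : r * s0 = r - d/2 := by rw [hs0]; field_simp
    have hcont : Continuous fun s : ℝ => (((1-s^2)^α : ℝ) : ℂ) * Ψ 0 (t+r*s) := by
      have hcw : Continuous fun s : ℝ => (1-s^2)^α :=
        Continuous.rpow_const (by fun_prop) (fun _ => Or.inr hα)
      exact (Complex.continuous_ofReal.comp hcw).mul ((hc 0).comp (by fun_prop))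
    have hfar : ∀ s : ℝ, s0 ≤ |s| → D / 2 ≤ 1 + |t+r*s| := by
      intro s hs
      have a1 : |r*s| ≤ |t+r*s| + |t| := by
        have := abs_sub (t+r*s) t
        simpa using this
      rw [abs_mul, abs_of_pos hr0] at a1
      nlinarith
    have p1 := h1 (-1) (-s0) le_rfl (by linarith) (by linarith) (fun s hs => hfar s (by
      rw [abs_of_nonpos (by linarith [hs.2])]; linarith [hs.2]))
    have p3 := h1 s0 1 (by linarith) (by linarith) le_rfl (fun s hs => hfar s (by
      rw [abs_of_nonneg (by linarith [hs.1])]; linarith [hs.1]))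
    have e2 : ∀ s, rbW α 0 0 s = (1-s^2)^α := by intro s; simp [rbW]
    simp only [e2, pow_zero, mul_one] at h2
    have p2 : C2 * E / d^K ≤ 2^K * C2 * E / D^K := by
      have : D^K ≤ 2^K * d^K := by
        rw [← mul_pow]; gcongr; linarith
      rw [div_le_div_iff₀ (by positivity) (by positivity)]
      calc C2 * E * D^K ≤ C2 * E * (2^K * d^K) := by gcongr
        _ = _ := by ring
    rw [← intervalIntegral.integral_add_adjacent_intervals (hcont.intervalIntegrable (-1) s0) (hcont.intervalIntegrable s0 1),
      ← intervalIntegral.integral_add_adjacent_intervals (hcont.intervalIntegrable (-1) (-s0)) (hcont.intervalIntegrable (-s0) s0)]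
    calc _ ≤ _ := norm_add₃_le
      _ ≤ C1 * E / D^K + 2^K * C2 * E / D^K + C1 * E / D^K := add_le_add (add_le_add p1 (h2.trans p2)) p3
      _ = _ := by ring
  · push Not at hcase
    have p := h1 (-1) 1 le_rfl (by norm_num) le_rfl (by
      intro s hs
      have hs1 : |s| ≤ 1 := abs_le.2 hs
      have a1 : |t| ≤ |t+r*s| + |r*s| := by
        have := abs_sub (t+r*s) (r*s)
        simpa using this
      rw [abs_mul, abs_of_nonneg hr] at a1
      have a2 : r * |s| ≤ r := by nlinarith
      have a3 := abs_nonneg (t+r*s)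
      rcases le_total r |t| with h | h
      · rw [hD, abs_of_nonneg (by linarith)]; linarith
      · rw [hD, abs_of_nonpos (by linarith)]; linarith)
    refine p.trans ?_
    rw [mul_div_assoc]
    have : 0 ≤ E / D^K := by positivity
    gcongr
    have : 0 < 2^K * C2 := by positivity
    linarith

lemma rb_rotate (m : ℕ) (H : ℝ → ℝ → ℂ) (x : Eucl (m+3)) :
    ∫ ξ : Eucl (m+3), H ⟪x, ξ⟫ ‖ξ‖ = ∫ ξ : Eucl (m+3), H (‖x‖ * ξ 0) ‖ξ‖ := by
  set e : Eucl (m+3) := ‖x‖ • EuclideanSpace.single 0 (1:ℝ) with he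
  have hn : ‖x‖ = ‖e‖ := by rw [he, norm_smul]; simp
  set L := (ℝ ∙ (x - e))ᗮ.reflection with hL
  have hLx : L x = e := Submodule.reflection_sub hn
  have hmp := L.measurePreserving
  rw [← hmp.integral_comp L.toHomeomorph.measurableEmbedding (fun ξ : Eucl (m+3) => H (‖x‖ * ξ 0) ‖ξ‖)]
  congr 1
  ext ξ
  rw [L.norm_map]
  congr 1
  rw [← L.inner_map_map x ξ, hLx, he, inner_smul_left]
  simp [EuclideanSpace.inner_single_left]

noncomputable def rbSplit (k : ℕ) : Eucl (k+1) ≃ᵐ ℝ × Eucl k :=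
  ((MeasurableEquiv.toLp 2 (Fin (k+1) → ℝ)).symm.trans
    (MeasurableEquiv.piFinSuccAbove (fun _ => ℝ) 0)).trans
    (MeasurableEquiv.prodCongr (MeasurableEquiv.refl ℝ) (MeasurableEquiv.toLp 2 (Fin k → ℝ)))

lemma rbSplit_mp (k : ℕ) : MeasurePreserving (rbSplit k) volume volume := by
  unfold rbSplit
  refine MeasurePreserving.trans (MeasurePreserving.trans
    (EuclideanSpace.volume_preserving_symm_measurableEquiv_toLp _)
    (volume_preserving_piFinSuccAbove (fun _ => ℝ) 0)) ?_
  exact (MeasurePreserving.id (volume : Measure ℝ)).prod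
    (EuclideanSpace.volume_preserving_symm_measurableEquiv_toLp (Fin k)).symm

lemma rbSplit_fst (k : ℕ) (ξ : Eucl (k+1)) : (rbSplit k ξ).1 = ξ 0 := rfl

lemma rbSplit_norm (k : ℕ) (ξ : Eucl (k+1)) :
    ‖ξ‖ = √((rbSplit k ξ).1^2 + ‖(rbSplit k ξ).2‖^2) := by
  rw [EuclideanSpace.norm_eq, EuclideanSpace.norm_eq (rbSplit k ξ).2, Real.sq_sqrt (by positivity), Fin.sum_univ_succ]
  simp only [Real.norm_eq_abs, sq_abs]
  rfl

lemma rb_even (f : ℝ → ℂ) : ∫ b in Set.Ioi (0:ℝ), f b = (1/2 : ℝ) • ∫ b : ℝ, f |b| := by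
  have := integral_fun_norm_addHaar (volume : Measure ℝ) f
  simp only [Real.norm_eq_abs, Module.finrank_self, tsub_self, pow_zero, one_smul] at this
  rw [this, smul_smul]
  simp [Measure.real, Real.volume_ball]

lemma rb_sqrt_abs (a b : ℝ) : |a| ≤ √(a^2+b^2) := Real.abs_le_sqrt (by nlinarith)

lemma rb_polar (m : ℕ) : ∃ c : ℝ, 0 ≤ c ∧ ∀ H : ℝ → ℝ → ℂ, Continuous (fun p : ℝ × ℝ => H p.1 p.2) →
    (∀ a ρ, 2 ≤ ρ → H a ρ = 0) →
    ∫ ξ : Eucl (m+3), H (ξ 0) ‖ξ‖ = 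
      c • ∫ θ in Set.Ioo (-π) π, ∫ ρ in Set.Ioi (0:ℝ), (ρ * |ρ * Real.sin θ|^(m+1)) • H (ρ * Real.cos θ) ρ := by
  refine ⟨(m+2) * (volume : Measure (Eucl (m+2))).real (Metric.ball 0 1) * (1/2), by positivity, fun H hH hz => ?_⟩
  have s1 : ∫ ξ : Eucl (m+3), H (ξ 0) ‖ξ‖ = ∫ p : ℝ × Eucl (m+2), H p.1 (√(p.1^2 + ‖p.2‖^2)) := by
    rw [← (rbSplit_mp (m+2)).integral_comp (rbSplit (m+2)).measurableEmbedding]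
    congr 1
    ext ξ
    rw [← rbSplit_norm, rbSplit_fst]
  have hi : Integrable (fun p : ℝ × Eucl (m+2) => H p.1 (√(p.1^2 + ‖p.2‖^2))) := by
    apply Continuous.integrable_of_hasCompactSupport
    · exact hH.comp (by fun_prop : Continuous fun p : ℝ × Eucl (m+2) => (p.1, √(p.1^2 + ‖p.2‖^2)))
    · refine HasCompactSupport.of_support_subset_isCompact (isCompact_closedBall 0 2) ?_
      intro p hp
      have : √(p.1^2 + ‖p.2‖^2) < 2 := by
        by_contra h
        exact hp (hz _ _ (not_lt.1 h))
      have h1 := rb_sqrt_abs p.1 ‖p.2‖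
      have h2 := rb_sqrt_abs ‖p.2‖ p.1
      rw [add_comm (_ ^ 2) (_ ^ 2), abs_norm] at h2
      rw [mem_closedBall_zero_iff, Prod.norm_def]
      exact max_le (by rw [Real.norm_eq_abs]; linarith) (by linarith)
  have s2 : ∀ a : ℝ, ∫ η : Eucl (m+2), H a (√(a^2 + ‖η‖^2)) = 
      ((m+2) * (volume : Measure (Eucl (m+2))).real (Metric.ball 0 1) * (1/2)) •
        ∫ b : ℝ, |b|^(m+1) • H a (√(a^2 + b^2)) := by
    intro a
    have := integral_fun_norm_addHaar (volume : Measure (Eucl (m+2))) (fun b => H a (√(a^2 + b^2)))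
    rw [this, rb_even]
    simp only [finrank_euclideanSpace_fin, sq_abs, show m + 2 - 1 = m + 1 from rfl]
    rw [smul_smul, ← Nat.cast_smul_eq_nsmul ℝ, smul_smul]
    push_cast
    congr 1
    ring
  have hi2 : Integrable (fun p : ℝ × ℝ => |p.2|^(m+1) • H p.1 (√(p.1^2 + p.2^2))) := by
    apply Continuous.integrable_of_hasCompactSupport
    · have : Continuous fun p : ℝ × ℝ => H p.1 (√(p.1^2 + p.2^2)) := 
        hH.comp (by fun_prop : Continuous fun p : ℝ × ℝ => (p.1, √(p.1^2 + p.2^2)))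
      fun_prop
    · refine HasCompactSupport.of_support_subset_isCompact (isCompact_closedBall 0 2) ?_
      intro p hp
      have : √(p.1^2 + p.2^2) < 2 := by
        by_contra h
        exact hp (by simp only [hz _ _ (not_lt.1 h), smul_zero])
      have h1 := rb_sqrt_abs p.1 p.2
      have h2 := rb_sqrt_abs p.2 p.1
      rw [add_comm] at h2
      rw [mem_closedBall_zero_iff, Prod.norm_def]
      exact max_le (by rw [Real.norm_eq_abs]; linarith) (by rw [Real.norm_eq_abs]; linarith)
  rw [s1, Measure.volume_eq_prod, integral_prod _ hi]
  simp only [s2]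
  rw [integral_smul]
  congr 1
  rw [← integral_prod (fun p : ℝ × ℝ => |p.2|^(m+1) • H p.1 (√(p.1^2 + p.2^2))) hi2, ← Measure.volume_eq_prod,
    ← integral_comp_polarCoord_symm]
  have s3 : ∫ p in polarCoord.target, p.1 • (fun p : ℝ × ℝ => |p.2|^(m+1) • H p.1 (√(p.1^2 + p.2^2))) (polarCoord.symm p)
      = ∫ p in Set.Ioi (0:ℝ) ×ˢ Set.Ioo (-π) π, (p.1 * |p.1 * Real.sin p.2|^(m+1)) • H (p.1 * Real.cos p.2) p.1 := by
    apply setIntegral_congr_fun polarCoord.open_target.measurableSet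
    intro p hp
    have hp1 : 0 < p.1 := hp.1
    have e : √((p.1 * Real.cos p.2)^2 + (p.1 * Real.sin p.2)^2) = p.1 := by
      rw [mul_pow, mul_pow, ← mul_add, Real.cos_sq_add_sin_sq, mul_one, Real.sqrt_sq hp1.le]
    simp only [polarCoord_symm_apply, e, smul_smul]
  rw [s3]
  have hcF : Continuous fun p : ℝ × ℝ => (p.1 * |p.1 * Real.sin p.2|^(m+1)) • H (p.1 * Real.cos p.2) p.1 := by
    have : Continuous fun p : ℝ × ℝ => H (p.1 * Real.cos p.2) p.1 := 
        hH.comp (by fun_prop : Continuous fun p : ℝ × ℝ => (p.1 * Real.cos p.2, p.1))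
    fun_prop
  have hi3 : IntegrableOn (fun p : ℝ × ℝ => (p.1 * |p.1 * Real.sin p.2|^(m+1)) • H (p.1 * Real.cos p.2) p.1)
      (Set.Ioi (0:ℝ) ×ˢ Set.Ioo (-π) π) := by
    refine IntegrableOn.of_forall_sdiff_eq_zero (s := Set.Icc (0:ℝ) 2 ×ˢ Set.Icc (-π) π) ?_ 
      (measurableSet_Ioi.prod measurableSet_Ioo) ?_
    · exact hcF.continuousOn.integrableOn_compact (isCompact_Icc.prod isCompact_Icc)
    · rintro ⟨ρ, θ⟩ ⟨⟨h1, h2⟩, h3⟩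
      have : 2 ≤ ρ := by
        by_contra h
        exact h3 ⟨⟨le_of_lt h1, (not_le.1 h).le⟩, Set.Ioo_subset_Icc_self h2⟩
      simp only [hz _ _ this, smul_zero]
  rw [IntegrableOn, Measure.volume_eq_prod, ← Measure.prod_restrict] at hi3
  rw [Measure.volume_eq_prod, ← Measure.prod_restrict, integral_prod_symm _ hi3]

lemma rb_cos (m : ℕ) (P : ℝ → ℂ) (hP : Continuous P) :
    ∫ θ in Set.Ioo (-π) π, |Real.sin θ|^(m+1) • P (Real.cos θ) =
      2 * ∫ s in (-1:ℝ)..1, (((1-s^2)^((m:ℝ)/2) : ℝ) : ℂ) * P s := by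
  have hc : Continuous fun θ : ℝ => |Real.sin θ|^(m+1) • P (Real.cos θ) := by
    have : Continuous fun θ : ℝ => P (Real.cos θ) := hP.comp Real.continuous_cos
    fun_prop
  rw [← integral_Ioc_eq_integral_Ioo, ← intervalIntegral.integral_of_le (by linarith [Real.pi_pos]),
    ← intervalIntegral.integral_add_adjacent_intervals (hc.intervalIntegrable (-π) 0) (hc.intervalIntegrable 0 π)]
  have h1 : ∫ θ in (-π)..0, |Real.sin θ|^(m+1) • P (Real.cos θ) = ∫ θ in (0:ℝ)..π, |Real.sin θ|^(m+1) • P (Real.cos θ) := by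
    have := intervalIntegral.integral_comp_neg (a := 0) (b := π) (fun θ : ℝ => |Real.sin θ|^(m+1) • P (Real.cos θ))
    simp only [Real.sin_neg, Real.cos_neg, abs_neg, neg_zero] at this
    exact this.symm
  rw [h1, ← two_mul]
  congr 1
  have hG : Continuous fun s : ℝ => (((1-s^2)^((m:ℝ)/2) : ℝ) : ℂ) * P s := by
    have hcw : Continuous fun s : ℝ => (1-s^2)^((m:ℝ)/2) :=
      Continuous.rpow_const (by fun_prop) (fun _ => Or.inr (by positivity))
    exact (Complex.continuous_ofReal.comp hcw).mul hP
  have h2 := intervalIntegral.integral_deriv_smul_comp (a := 0) (b := π) (f := Real.cos) (f' := fun θ => -Real.sin θ)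
    (g := fun s : ℝ => (((1-s^2)^((m:ℝ)/2) : ℝ) : ℂ) * P s)
    (fun θ _ => Real.hasDerivAt_cos θ) (by fun_prop) hG
  rw [Real.cos_zero, Real.cos_pi, intervalIntegral.integral_symm (-1) 1] at h2
  rw [← neg_inj, ← h2, ← intervalIntegral.integral_neg]
  apply intervalIntegral.integral_congr
  intro θ hθ
  rw [Set.uIcc_of_le Real.pi_pos.le] at hθ
  have hs : 0 ≤ Real.sin θ := Real.sin_nonneg_of_mem_Icc hθ
  have e : (1 - Real.cos θ^2)^((m:ℝ)/2) = Real.sin θ^m := by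
    rw [← Real.sin_sq, ← Real.rpow_natCast (Real.sin θ) 2, ← Real.rpow_mul hs, ← Real.rpow_natCast]
    congr 1
    push_cast
    ring
  simp only [Function.comp, e, abs_of_nonneg hs, Complex.real_smul]
  push_cast
  ring

lemma rb_radial (m : ℕ) : ∃ c : ℝ, 0 ≤ c ∧ ∀ φ : ℝ → ℝ, Continuous φ →
    Function.support φ ⊆ Set.Ioo (1/2) 2 → 
    Continuous (rbOsc fun ρ => ((ρ^(m+2) * φ ρ : ℝ) : ℂ)) →
    ∀ (t : ℝ) (x : Eucl (m+3)), 
    ∫ ξ : Eucl (m+3), Complex.exp (2 * (π : ℂ) * Complex.I * (t : ℂ) * (‖ξ‖ : ℂ)) *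
      Complex.exp (2 * (π : ℂ) * Complex.I * ((⟪x, ξ⟫ : ℝ) : ℂ)) * ((φ ‖ξ‖ : ℝ) : ℂ) =
    c • ∫ s in (-1:ℝ)..1, (((1-s^2)^((m:ℝ)/2) : ℝ) : ℂ) * 
      rbOsc (fun ρ => ((ρ^(m+2) * φ ρ : ℝ) : ℂ)) (t + ‖x‖ * s) := by
  obtain ⟨c, hc, h⟩ := rb_polar m
  refine ⟨c * 2, by positivity, fun φ hφ hs hO t x => ?_⟩
  have hz : ∀ ρ, ρ ∉ Set.Ioo (1/2 : ℝ) 2 → φ ρ = 0 := fun ρ hρ => by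
    by_contra h
    exact hρ (hs h)
  rw [rb_rotate m (fun a ρ => Complex.exp (2 * (π : ℂ) * Complex.I * (t : ℂ) * (ρ : ℂ)) *
      Complex.exp (2 * (π : ℂ) * Complex.I * (a : ℂ)) * ((φ ρ : ℝ) : ℂ)) x]
  rw [h (fun a ρ => Complex.exp (2 * (π : ℂ) * Complex.I * (t : ℂ) * (ρ : ℂ)) *
      Complex.exp (2 * (π : ℂ) * Complex.I * ((‖x‖ * a : ℝ) : ℂ)) * ((φ ρ : ℝ) : ℂ)) (by fun_prop) 
      (fun a ρ hρ => by rw [hz ρ (fun h => by linarith [h.2])]; simp)]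
  rw [mul_smul]
  congr 1
  rw [Complex.real_smul, Complex.ofReal_ofNat,
    ← rb_cos m (fun s => rbOsc (fun ρ => ((ρ^(m+2) * φ ρ : ℝ) : ℂ)) (t + ‖x‖ * s)) (hO.comp (by fun_prop))]
  congr 1
  ext θ
  rw [rbOsc, ← integral_smul]
  refine Eq.trans ?_ (setIntegral_eq_integral_of_forall_compl_eq_zero (s := Set.Ioi (0:ℝ)) ?_)
  · apply setIntegral_congr_fun measurableSet_Ioi
    intro ρ hρ
    have hρ : 0 < ρ := hρ
    simp only [Complex.real_smul]
    rw [← Complex.exp_add, abs_mul, abs_of_pos hρ, mul_pow]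
    push_cast
    have e : 2 * (π : ℂ) * Complex.I * t * ρ + 2 * π * Complex.I * (‖x‖ * (ρ * Complex.cos θ)) =
      2 * π * Complex.I * (t + ‖x‖ * Complex.cos θ) * ρ := by ring
    rw [e]
    ring
  · intro ρ hρ
    rw [hz ρ (fun h => hρ (lt_trans (by norm_num) h.1))]
    simp

/-- pointwise decay for radial unit frequency bump data. -/
theorem radial_bump_decay (n : ℕ) (hn : 3 ≤ n) (φ : ℝ → ℝ)
    (hφ : ContDiff ℝ (⊤ : ℕ∞) φ)
    (hsupp : Function.support φ ⊆ Set.Ioo (1 / 2) 2) (M : ℕ) :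
    ∃ C : ℝ, 0 < C ∧ ∀ f : Eucl n → ℂ, IsRadial f →
      (∀ ξ : Eucl n, 𝓕 f ξ = ((φ ‖ξ‖ : ℝ) : ℂ)) →
      ∀ (t : ℝ) (x : Eucl n),
        ‖waveProp f t x‖ ≤
          C * (1 + |t|) ^ (-(((n : ℝ) - 1) / 2)) * (1 + |(|t|) - ‖x‖|) ^ (-(M : ℝ)) := by
  obtain ⟨m, rfl⟩ : ∃ m, n = m + 3 := ⟨n - 3, by omega⟩
  obtain ⟨c, hc, hrad⟩ := rb_radial m
  have hg : ContDiff ℝ (⊤ : ℕ∞) (fun ρ : ℝ => ((ρ^(m+2) * φ ρ : ℝ) : ℂ)) :=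
    Complex.ofRealCLM.contDiff.comp ((contDiff_id.pow (m+2)).mul hφ)
  have hgs : Function.support (fun ρ : ℝ => ((ρ^(m+2) * φ ρ : ℝ) : ℂ)) ⊆ Set.Ioo (1 / 2) 2 := by
    intro ρ hρ
    apply hsupp
    intro h
    exact hρ (by simp [h])
  obtain ⟨Ψ, h0, hder, hcont, hdec⟩ := rb_family _ hg hgs
  obtain ⟨C, hC, hmain⟩ := rb_main ((m:ℝ)/2) (by positivity) Ψ hcont hder hdec M
  refine ⟨(c + 1) * C, by positivity, fun f _ hf t x => ?_⟩
  have e : waveProp f t x = c • ∫ s in (-1:ℝ)..1, (((1-s^2)^((m:ℝ)/2) : ℝ) : ℂ) *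
      Ψ 0 (t + ‖x‖ * s) := by
    rw [h0, ← hrad φ hφ.continuous hsupp (by rw [← h0]; exact hcont 0) t x, waveProp]
    simp only [hf]
  rw [e, norm_smul, Real.norm_of_nonneg hc]
  have hb := hmain t ‖x‖ (norm_nonneg x)
  have hexp : -((((m + 3 : ℕ) : ℝ) - 1) / 2) = -((m:ℝ)/2 + 1) := by
    push_cast
    ring
  rw [hexp]
  calc _ ≤ (c + 1) * (C * (1+|t|)^(-((m:ℝ)/2+1)) * (1+|(|t|)-‖x‖|)^(-(M:ℝ))) := by
        gcongr
        linarith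
    _ = _ := by ring
end

section
/- Gradient weighted space-time estimate: let n ≥ 3 and η > 0. There is a constant C (depending on n and η) such that every finite-energy solution φ of the homogeneous wave equation □φ = 0 on ℝ^{n+1} satisfies ∫_{−∞}^{∞} ∫_{ℝⁿ} (1+|x|)^{−1−η} |∇_x φ(t,x)|² dx dt ≤ C ( ‖∇_x φ(0)‖²_{L²} + ‖∂_t φ(0)‖²_{L²} ). -/
open MeasureTheory Real Complex ENNReal
open scoped FourierTransform RealInnerProductSpace ComplexConjugate

namespace KSS

open scoped ContDiff

/-- directional derivative of a space-time function -/
noncomputable def dV {n : ℕ} (v : ℝ × Eucl n) (F : ℝ × Eucl n → ℝ) (p : ℝ × Eucl n) : ℝ :=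
  fderiv ℝ F p v

/-- time direction -/
noncomputable def tv {n : ℕ} : ℝ × Eucl n := (1, 0)

/-- space direction -/
noncomputable def xv {n : ℕ} (i : Fin n) : ℝ × Eucl n := (0, EuclideanSpace.single i (1 : ℝ))

section Calculus
variable {n : ℕ} {F G : ℝ × Eucl n → ℝ} {v w : ℝ × Eucl n}

lemma dV_smooth (hF : ContDiff ℝ ∞ F) : ContDiff ℝ ∞ (dV v F) := by
  unfold dV
  exact (hF.fderiv_right (m := ∞) (by simp)).clm_apply contDiff_const

lemma sm_diff (hF : ContDiff ℝ ∞ F) : Differentiable ℝ F := hF.differentiable (by simp)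

lemma dV_mul (hF : ContDiff ℝ ∞ F) (hG : ContDiff ℝ ∞ G) (p : ℝ × Eucl n) :
    dV v (fun q => F q * G q) p = dV v F p * G p + F p * dV v G p := by
  unfold dV
  rw [fderiv_fun_mul (sm_diff hF p) (sm_diff hG p)]
  simp; ring

lemma dV_add (hF : ContDiff ℝ ∞ F) (hG : ContDiff ℝ ∞ G) (p : ℝ × Eucl n) :
    dV v (fun q => F q + G q) p = dV v F p + dV v G p := by
  unfold dV
  rw [fderiv_fun_add (sm_diff hF p) (sm_diff hG p)]
  simp

lemma dV_sub (hF : ContDiff ℝ ∞ F) (hG : ContDiff ℝ ∞ G) (p : ℝ × Eucl n) :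
    dV v (fun q => F q - G q) p = dV v F p - dV v G p := by
  unfold dV
  rw [fderiv_fun_sub (sm_diff hF p) (sm_diff hG p)]
  simp

lemma dV_cmul (c : ℝ) (hF : ContDiff ℝ ∞ F) (p : ℝ × Eucl n) :
    dV v (fun q => c * F q) p = c * dV v F p := by
  unfold dV
  rw [fderiv_const_mul (sm_diff hF p)]
  simp

lemma dV_sum {H : Fin n → ℝ × Eucl n → ℝ} (hH : ∀ i, ContDiff ℝ ∞ (H i)) (p : ℝ × Eucl n) :
    dV v (fun q => ∑ i, H i q) p = ∑ i, dV v (H i) p := by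
  unfold dV
  rw [fderiv_fun_sum (fun i _ => sm_diff (hH i) p)]
  simp

lemma dV_comm (hF : ContDiff ℝ ∞ F) (p : ℝ × Eucl n) :
    dV v (dV w F) p = dV w (dV v F) p := by
  have hd : DifferentiableAt ℝ (fderiv ℝ F) p :=
    (hF.fderiv_right (m := ∞) (by simp)).differentiable (by simp) p
  have h1 : ∀ a b : ℝ × Eucl n, dV a (dV b F) p = fderiv ℝ (fderiv ℝ F) p a b := by
    intro a b
    unfold dV
    rw [fderiv_clm_apply hd (differentiableAt_const _)]
    simp
  rw [h1, h1]
  have := (hF.contDiffAt (x := p)).isSymmSndFDerivAt (by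
    simp only [minSmoothness_of_isRCLikeNormedField]; exact WithTop.coe_le_coe.2 (le_top : (2:ℕ∞) ≤ ⊤))
  exact this v w

/-- coordinate function -/
noncomputable def xc (j : Fin n) (p : ℝ × Eucl n) : ℝ := p.2 j

lemma xc_smooth (j : Fin n) : ContDiff ℝ ∞ (xc (n := n) j) := by
  unfold xc
  fun_prop

lemma dV_xc (i j : Fin n) (p : ℝ × Eucl n) :
    dV (xv i) (xc j) p = if i = j then 1 else 0 := by
  have : (xc (n := n) j) = ((EuclideanSpace.proj j : Eucl n →L[ℝ] ℝ).comp
      (ContinuousLinearMap.snd ℝ ℝ (Eucl n))) := by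
    ext p; simp [xc]
  unfold dV
  rw [this, ContinuousLinearMap.fderiv]
  simp [xv, eq_comm]

lemma dV_t_snd {f : Eucl n → ℝ} (hf : ContDiff ℝ ∞ f) (p : ℝ × Eucl n) :
    dV tv (fun q => f q.2) p = 0 := by
  unfold dV
  have := ((hf.differentiable (by simp) p.2).hasFDerivAt.comp p
    (hasFDerivAt_snd (𝕜 := ℝ) (E := ℝ) (F := Eucl n) (p := p))).fderiv
  change fderiv ℝ (f ∘ Prod.snd) p tv = 0
  rw [this]; simp [tv]

lemma dV_x_snd {f : Eucl n → ℝ} (hf : ContDiff ℝ ∞ f) (i : Fin n) (p : ℝ × Eucl n) :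
    dV (xv i) (fun q => f q.2) p = fderiv ℝ f p.2 (EuclideanSpace.single i (1 : ℝ)) := by
  unfold dV
  have := ((hf.differentiable (by simp) p.2).hasFDerivAt.comp p
    (hasFDerivAt_snd (𝕜 := ℝ) (E := ℝ) (F := Eucl n) (p := p))).fderiv
  change fderiv ℝ (f ∘ Prod.snd) p _ = _
  rw [this]; simp [xv]

lemma dV_x_slice (hF : ContDiff ℝ ∞ F) (t : ℝ) (x v : Eucl n) :
    fderiv ℝ (fun y => F (t, y)) x v = fderiv ℝ F (t, x) (0, v) := by
  have := ((sm_diff hF (t, x)).hasFDerivAt.comp x (hasFDerivAt_prodMk_right (𝕜 := ℝ) t x)).fderiv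
  change fderiv ℝ (F ∘ fun y => (t, y)) x v = _
  rw [this]; simp

lemma dV_t_slice (hF : ContDiff ℝ ∞ F) (t : ℝ) (x : Eucl n) :
    HasDerivAt (fun s => F (s, x)) (dV tv F (t, x)) t := by
  have := ((sm_diff hF (t, x)).hasFDerivAt.comp t (hasFDerivAt_prodMk_left (𝕜 := ℝ) t x)).hasDerivAt
  have h2 : ((fderiv ℝ F (t, x)).comp (ContinuousLinearMap.inl ℝ ℝ (Eucl n))) 1
      = dV tv F (t, x) := by simp [dV, tv]
  rw [← h2]
  exact this

lemma flux_zero {f : Eucl n → ℝ} (hf : ContDiff ℝ ∞ f) {K : Set (Eucl n)} (hK : IsCompact K)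
    (h : ∀ x, x ∉ K → f x = 0) (v : Eucl n) : ∫ x in K, fderiv ℝ f x v = 0 := by
  have h0 : ∀ x, x ∉ K → fderiv ℝ f x v = 0 := by
    intro x hx
    have : f =ᶠ[nhds x] fun _ => 0 := by
      filter_upwards [hK.isClosed.isOpen_compl.mem_nhds hx] with y hy using h y hy
    rw [this.fderiv_eq]; simp
  rw [setIntegral_eq_integral_of_forall_compl_eq_zero h0]
  have c1 : HasCompactSupport f := HasCompactSupport.intro hK h
  have c2 : HasCompactSupport (fun x => fderiv ℝ f x v) := HasCompactSupport.intro hK h0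
  have i1 := hf.continuous.integrable_of_hasCompactSupport (μ := volume) c1
  have i2 := ((hf.continuous_fderiv (by simp)).clm_apply
    continuous_const).integrable_of_hasCompactSupport (μ := volume) c2
  have := integral_mul_fderiv_eq_neg_fderiv_mul_of_integrable (μ := (volume : Measure (Eucl n)))
    (f := fun _ => (1:ℝ)) (g := f) (v := v) (by simp) (by simpa using i2) (by simpa using i1)
    (by intros; fun_prop) (fun x _ => hf.differentiable (by simp) x)
  simpa using this

lemma div_identity {Q : ℝ × Eucl n → ℝ} {P : Fin n → ℝ × Eucl n → ℝ}
    (hQ : ContDiff ℝ ∞ Q) (hP : ∀ i, ContDiff ℝ ∞ (P i)) {K : Set (Eucl n)} (hK : IsCompact K)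
    {T : ℝ} (hT : 0 ≤ T) (h0 : ∀ i, ∀ t ∈ Set.Icc 0 T, ∀ x, x ∉ K → P i (t, x) = 0) :
    (∫ x in K, Q (T, x)) - ∫ x in K, Q (0, x) =
      ∫ t in (0:ℝ)..T, ∫ x in K, (dV tv Q (t, x) - ∑ i, dV (xv i) (P i) (t, x)) := by
  have cdt : Continuous (dV tv Q) := (dV_smooth hQ).continuous
  have cdx : ∀ i, Continuous (dV (xv i) (P i)) := fun i => (dV_smooth (hP i)).continuous
  have e1 : ∀ t ∈ Set.Icc 0 T, ∫ x in K, (dV tv Q (t, x) - ∑ i, dV (xv i) (P i) (t, x)) =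
      ∫ x in K, dV tv Q (t, x) := by
    intro t ht
    rw [integral_sub, integral_finsetSum, Finset.sum_eq_zero, sub_zero]
    · intro i _
      have := flux_zero (f := fun x => P i (t, x)) (by have := hP i; fun_prop) hK (h0 i t ht)
        (EuclideanSpace.single i 1)
      simp_rw [dV_x_slice (hP i)] at this
      exact this
    · intro i _
      exact (((cdx i).comp (by fun_prop : Continuous fun x : Eucl n => (t, x))).continuousOn).integrableOn_compact hK
    · exact ((cdt.comp (by fun_prop : Continuous fun x : Eucl n => (t, x))).continuousOn).integrableOn_compact hK
    · exact (Continuous.continuousOn (by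
        refine continuous_finsetSum _ fun i _ => (cdx i).comp (by fun_prop : Continuous fun x : Eucl n => (t, x)))).integrableOn_compact hK
  rw [intervalIntegral.integral_congr (g := fun t => ∫ x in K, dV tv Q (t, x))
    (by intro t ht; rw [Set.uIcc_of_le hT] at ht; exact e1 t ht)]
  rw [intervalIntegral.integral_of_le hT, integral_integral_swap]
  · rw [← integral_sub]
    · refine integral_congr_ae (Filter.Eventually.of_forall fun x => ?_)
      simp only
      rw [← intervalIntegral.integral_of_le hT]
      refine (intervalIntegral.integral_eq_sub_of_hasDerivAt (f := fun t => Q (t, x))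
        (fun t _ => dV_t_slice hQ t x) ?_).symm
      exact (cdt.comp (by fun_prop : Continuous fun t : ℝ => (t, x))).intervalIntegrable _ _
    · exact ((hQ.continuous.comp (by fun_prop : Continuous fun x : Eucl n => (T, x))).continuousOn).integrableOn_compact hK
    · exact ((hQ.continuous.comp (by fun_prop : Continuous fun x : Eucl n => ((0:ℝ), x))).continuousOn).integrableOn_compact hK
  · have : IntegrableOn (dV tv Q) (Set.Icc 0 T ×ˢ K) ((volume : Measure ℝ).prod volume) :=
      cdt.continuousOn.integrableOn_compact (isCompact_Icc.prod hK)
    rw [Measure.prod_restrict]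
    exact this.mono_set (Set.prod_mono Set.Ioc_subset_Icc_self le_rfl)

end Calculus

end KSS

namespace KSS

open scoped ContDiff

section Identities
variable {n : ℕ}

/-- real smooth solution of the wave equation -/
def IsSol (U : ℝ × Eucl n → ℝ) : Prop :=
  ContDiff ℝ ∞ U ∧ ∀ p, dV tv (dV tv U) p = ∑ i, dV (xv i) (dV (xv i) U) p

/-- squared gradient -/
noncomputable def gs (U : ℝ × Eucl n → ℝ) (p : ℝ × Eucl n) : ℝ := ∑ i, dV (xv i) U p * dV (xv i) U p

/-- energy density -/
noncomputable def en (U : ℝ × Eucl n → ℝ) (p : ℝ × Eucl n) : ℝ := gs U p + dV tv U p * dV tv U p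

lemma gs_smooth {U : ℝ × Eucl n → ℝ} (hU : ContDiff ℝ ∞ U) : ContDiff ℝ ∞ (gs U) := by
  have h : ∀ i, ContDiff ℝ ∞ (dV (xv i) U) := fun i => dV_smooth hU
  unfold gs
  fun_prop

lemma en_smooth {U : ℝ × Eucl n → ℝ} (hU : ContDiff ℝ ∞ U) : ContDiff ℝ ∞ (en U) := by
  have h := gs_smooth hU
  have h' : ContDiff ℝ ∞ (dV tv U) := dV_smooth hU
  unfold en
  fun_prop

lemma gs_nonneg (U : ℝ × Eucl n → ℝ) (p) : 0 ≤ gs U p :=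
  Finset.sum_nonneg fun i _ => mul_self_nonneg _

lemma en_nonneg (U : ℝ × Eucl n → ℝ) (p) : 0 ≤ en U p :=
  add_nonneg (gs_nonneg U p) (mul_self_nonneg _)

lemma dV_gs {U : ℝ × Eucl n → ℝ} (hU : ContDiff ℝ ∞ U) (v : ℝ × Eucl n) (p) :
    dV v (gs U) p = 2 * ∑ i, dV (xv i) U p * dV (xv i) (dV v U) p := by
  have h : ∀ i, ContDiff ℝ ∞ (dV (xv i) U) := fun i => dV_smooth hU
  unfold gs
  rw [dV_sum (fun i => by have := h i; fun_prop), Finset.mul_sum]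
  refine Finset.sum_congr rfl fun i _ => ?_
  rw [dV_mul (h i) (h i), dV_comm hU]
  ring

lemma energy_identity {U ψ : ℝ × Eucl n → ℝ} (hU : IsSol U) (hψ : ContDiff ℝ ∞ ψ) (p) :
    dV tv (fun q => ψ q * en U q) p
      - ∑ i, dV (xv i) (fun q => 2 * (ψ q * (dV tv U q * dV (xv i) U q))) p
    = dV tv ψ p * en U p - 2 * (dV tv U p * ∑ i, dV (xv i) ψ p * dV (xv i) U p) := by
  have hg := gs_smooth hU.1
  have he := en_smooth hU.1
  have hx : ∀ i, ContDiff ℝ ∞ (dV (xv i) U) := fun i => dV_smooth hU.1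
  have ht : ContDiff ℝ ∞ (dV tv U) := dV_smooth hU.1
  have e1 : dV tv (en U) p = 2 * (∑ i, dV (xv i) U p * dV (xv i) (dV tv U) p)
      + 2 * (dV tv U p * ∑ i, dV (xv i) (dV (xv i) U) p) := by
    unfold en
    rw [dV_add hg (by fun_prop), dV_gs hU.1, dV_mul ht ht, hU.2]
    ring
  have e2 : ∀ i, dV (xv i) (fun q => 2 * (ψ q * (dV tv U q * dV (xv i) U q))) p =
      2 * (dV tv U p * (dV (xv i) ψ p * dV (xv i) U p))
      + 2 * ψ p * (dV (xv i) U p * dV (xv i) (dV tv U) p)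
      + 2 * ψ p * dV tv U p * (dV (xv i) (dV (xv i) U) p) := by
    intro i
    have := hx i
    rw [dV_cmul _ (by fun_prop), dV_mul hψ (by fun_prop), dV_mul ht this]
    ring
  rw [dV_mul hψ he, e1, Finset.sum_congr rfl (fun i _ => e2 i)]
  simp only [Finset.sum_add_distrib, ← Finset.mul_sum]
  ring

/-- `x · ∇ U` -/
noncomputable def rd (U : ℝ × Eucl n → ℝ) (p : ℝ × Eucl n) : ℝ := ∑ j, xc j p * dV (xv j) U p

lemma rd_smooth {U : ℝ × Eucl n → ℝ} (hU : ContDiff ℝ ∞ U) : ContDiff ℝ ∞ (rd U) := by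
  have h : ∀ i, ContDiff ℝ ∞ (dV (xv i) U) := fun i => dV_smooth hU
  have h' : ∀ i, ContDiff ℝ ∞ (xc (n := n) i) := fun i => xc_smooth i
  unfold rd
  fun_prop

lemma dV_tv_xc (j : Fin n) (p) : dV tv (xc j) p = 0 := by
  have := dV_t_snd (n := n) (f := fun x => x j) (by fun_prop) p
  exact this

lemma dV_x_rd {U : ℝ × Eucl n → ℝ} (hU : ContDiff ℝ ∞ U) (i : Fin n) (p) :
    dV (xv i) (rd U) p = dV (xv i) U p + ∑ j, xc j p * dV (xv j) (dV (xv i) U) p := by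
  have h : ∀ i, ContDiff ℝ ∞ (dV (xv i) U) := fun i => dV_smooth hU
  have h' : ∀ i, ContDiff ℝ ∞ (xc (n := n) i) := fun i => xc_smooth i
  unfold rd
  rw [dV_sum (fun j => by have := h j; have := h' j; fun_prop)]
  have : ∀ j, dV (xv i) (fun q => xc j q * dV (xv j) U q) p =
      (if i = j then dV (xv j) U p else 0) + xc j p * dV (xv j) (dV (xv i) U) p := by
    intro j
    rw [dV_mul (h' j) (h j), dV_xc, dV_comm hU]
    split_ifs <;> simp
  rw [Finset.sum_congr rfl (fun j _ => this j), Finset.sum_add_distrib]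
  simp

lemma dV_t_rd {U : ℝ × Eucl n → ℝ} (hU : ContDiff ℝ ∞ U) (p) :
    dV tv (rd U) p = ∑ j, xc j p * dV (xv j) (dV tv U) p := by
  have h : ∀ i, ContDiff ℝ ∞ (dV (xv i) U) := fun i => dV_smooth hU
  have h' : ∀ i, ContDiff ℝ ∞ (xc (n := n) i) := fun i => xc_smooth i
  unfold rd
  rw [dV_sum (fun j => by have := h j; have := h' j; fun_prop)]
  refine Finset.sum_congr rfl fun j _ => ?_
  rw [dV_mul (h' j) (h j), dV_tv_xc, dV_comm hU]
  ring

/-- Morawetz multiplier -/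
noncomputable def mm (k U : ℝ × Eucl n → ℝ) (p : ℝ × Eucl n) : ℝ :=
  k p * (rd U p + ((n : ℝ) - 1) / 2 * U p)

/-- Morawetz momentum -/
noncomputable def mQ (k U : ℝ × Eucl n → ℝ) (p : ℝ × Eucl n) : ℝ := dV tv U p * mm k U p

/-- Morawetz flux -/
noncomputable def mP (k U : ℝ × Eucl n → ℝ) (i : Fin n) (p : ℝ × Eucl n) : ℝ :=
  dV (xv i) U p * mm k U p
    + (1 / 2 : ℝ) * (k p * (xc i p * (dV tv U p * dV tv U p - gs U p)))
    - ((n : ℝ) - 1) / 4 * (U p * (U p * dV (xv i) k p))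

lemma mm_smooth {k U : ℝ × Eucl n → ℝ} (hU : ContDiff ℝ ∞ U) (hk : ContDiff ℝ ∞ k) :
    ContDiff ℝ ∞ (mm k U) := by
  have := rd_smooth hU
  unfold mm; fun_prop

lemma mQ_smooth {k U : ℝ × Eucl n → ℝ} (hU : ContDiff ℝ ∞ U) (hk : ContDiff ℝ ∞ k) :
    ContDiff ℝ ∞ (mQ k U) := by
  have := mm_smooth hU hk
  have ht : ContDiff ℝ ∞ (dV tv U) := dV_smooth hU
  unfold mQ; fun_prop

lemma mP_smooth {k U : ℝ × Eucl n → ℝ} (hU : ContDiff ℝ ∞ U) (hk : ContDiff ℝ ∞ k) (i : Fin n) :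
    ContDiff ℝ ∞ (mP k U i) := by
  have := mm_smooth hU hk
  have ht : ContDiff ℝ ∞ (dV tv U) := dV_smooth hU
  have hi : ContDiff ℝ ∞ (dV (xv i) U) := dV_smooth hU
  have hk : ContDiff ℝ ∞ (dV (xv i) k) := dV_smooth hk
  have hg := gs_smooth hU
  have hx := xc_smooth i
  unfold mP; fun_prop

lemma morawetz_identity {U k : ℝ × Eucl n → ℝ} (hU : IsSol U) (hk : ContDiff ℝ ∞ k)
    (hkt : ∀ p, dV tv k p = 0) (p) :
    dV tv (mQ k U) p - ∑ i, dV (xv i) (mP k U i) p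
    = - (1 / 2) * k p * en U p - (∑ i, dV (xv i) k p * dV (xv i) U p) * rd U p
      + 1 / 2 * rd k p * (gs U p - dV tv U p * dV tv U p)
      + ((n : ℝ) - 1) / 4 * (∑ i, dV (xv i) (dV (xv i) k) p) * (U p * U p) := by
  obtain ⟨hs, hw⟩ := hU
  have hm := mm_smooth hs hk
  have ht : ContDiff ℝ ∞ (dV tv U) := dV_smooth hs
  have hg := gs_smooth hs
  have hr := rd_smooth hs
  have hi : ∀ i, ContDiff ℝ ∞ (dV (xv i) U) := fun i => dV_smooth hs
  have hki : ∀ i, ContDiff ℝ ∞ (dV (xv i) k) := fun i => dV_smooth hk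
  have hx : ∀ i, ContDiff ℝ ∞ (xc (n := n) i) := fun i => xc_smooth i
  have e0 : dV tv (mm k U) p = k p * (∑ j, xc j p * dV (xv j) (dV tv U) p
      + ((n : ℝ) - 1) / 2 * dV tv U p) := by
    unfold mm
    rw [dV_mul hk (by fun_prop), dV_add hr (by fun_prop), dV_cmul _ hs, dV_t_rd hs, hkt]
    ring
  have e1 : dV tv (mQ k U) p = (∑ i, dV (xv i) (dV (xv i) U) p) * mm k U p
      + dV tv U p * dV tv (mm k U) p := by
    unfold mQ
    rw [dV_mul ht hm, hw]
  have e2 : ∀ i, dV (xv i) (mm k U) p = dV (xv i) k p * (rd U p + ((n : ℝ) - 1) / 2 * U p)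
      + k p * (dV (xv i) U p + (∑ j, xc j p * dV (xv j) (dV (xv i) U) p)
        + ((n : ℝ) - 1) / 2 * dV (xv i) U p) := by
    intro i
    unfold mm
    rw [dV_mul hk (by fun_prop), dV_add hr (by fun_prop), dV_cmul _ hs, dV_x_rd hs]
  have e3 : ∀ i, dV (xv i) (mP k U i) p = 
      mm k U p * dV (xv i) (dV (xv i) U) p
      + (rd U p + ((n : ℝ) - 1) / 2 * U p) * (dV (xv i) k p * dV (xv i) U p)
      + (k p * (1 + ((n : ℝ) - 1) / 2)) * (dV (xv i) U p * dV (xv i) U p)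
      + k p * (dV (xv i) U p * ∑ j, xc j p * dV (xv j) (dV (xv i) U) p)
      + (1 / 2 * (dV tv U p * dV tv U p - gs U p)) * (xc i p * dV (xv i) k p)
      + 1 / 2 * k p * (dV tv U p * dV tv U p - gs U p)
      + (k p * dV tv U p) * (xc i p * dV (xv i) (dV tv U) p)
      - k p * (∑ j, xc i p * (dV (xv j) U p * dV (xv j) (dV (xv i) U) p))
      - ((n : ℝ) - 1) / 2 * U p * (dV (xv i) k p * dV (xv i) U p)
      - ((n : ℝ) - 1) / 4 * (U p * U p) * dV (xv i) (dV (xv i) k) p := by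
    intro i
    have h1 := hi i
    have h2 := hki i
    have h3 := hx i
    unfold mP
    rw [dV_sub (by fun_prop) (by fun_prop), dV_add (by fun_prop) (by fun_prop),
      dV_mul h1 hm, dV_cmul _ (by fun_prop), dV_cmul _ (by fun_prop),
      dV_mul hk (by fun_prop), dV_mul h3 (by fun_prop), dV_sub (by fun_prop) hg,
      dV_mul ht ht, dV_mul hs (by fun_prop), dV_mul hs h2, dV_gs hs, e2, dV_xc, ← Finset.mul_sum]
    simp only [if_true]
    ring
  have e4 : ∑ i, (∑ j, xc i p * (dV (xv j) U p * dV (xv j) (dV (xv i) U) p))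
     = ∑ i, (dV (xv i) U p * ∑ j, xc j p * dV (xv j) (dV (xv i) U) p) := by
    rw [Finset.sum_comm]
    refine Finset.sum_congr rfl fun i _ => ?_
    rw [Finset.mul_sum]
    refine Finset.sum_congr rfl fun j _ => ?_
    rw [dV_comm hs (v := xv i)]
    ring
  rw [e1, e0, Finset.sum_congr rfl (fun i _ => e3 i)]
  simp only [Finset.sum_add_distrib, Finset.sum_sub_distrib, ← Finset.mul_sum, Finset.sum_const,
    Finset.card_univ, Fintype.card_fin, nsmul_eq_mul]
  simp only [Finset.mul_sum] at e4 ⊢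
  have e4' := e4
  have hrk : ∑ i, xc i p * dV (xv i) k p = rd k p := rfl
  have hgg : ∑ i, dV (xv i) U p * dV (xv i) U p = gs U p := rfl
  simp only [← Finset.mul_sum] at e4 ⊢
  rw [hrk, hgg, e4]
  unfold en
  ring

end Identities
end KSS

namespace KSS

open scoped ContDiff

section Energy
variable {n : ℕ}

/-- total energy at time `t` -/
noncomputable def EL (U : ℝ × Eucl n → ℝ) (t : ℝ) : ℝ≥0∞ := ∫⁻ x, ENNReal.ofReal (en U (t, x))

lemma norm_sq_xc (p : ℝ × Eucl n) : ∑ i, xc i p ^ 2 = ‖p.2‖ ^ 2 := by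
  rw [EuclideanSpace.real_norm_sq_eq]; rfl

lemma gs_eq (U : ℝ × Eucl n → ℝ) (p) : gs U p = ∑ i, dV (xv i) U p ^ 2 := by
  unfold gs; simp only [sq]

lemma rd_sq_le (U : ℝ × Eucl n → ℝ) (p) : rd U p ^ 2 ≤ ‖p.2‖ ^ 2 * gs U p := by
  rw [← norm_sq_xc, gs_eq]
  exact Finset.sum_mul_sq_le_sq_mul_sq _ _ _

/-- smooth energy cutoff -/
noncomputable def cutE (M : ℝ) (p : ℝ × Eucl n) : ℝ :=
  Real.smoothTransition (M + 1 - √(1 + ‖p.2‖ ^ 2) - p.1)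

lemma jb_pos (x : Eucl n) : 0 < 1 + ‖x‖ ^ 2 := by positivity

lemma cutE_smooth (M : ℝ) : ContDiff ℝ ∞ (cutE (n := n) M) := by
  unfold cutE
  refine (Real.smoothTransition.contDiff (n := ⊤)).comp ?_
  refine ContDiff.sub (contDiff_const.sub (ContDiff.sqrt ?_ fun p => (jb_pos p.2).ne')) contDiff_fst
  exact contDiff_const.add (contDiff_snd.norm_sq ℝ)

lemma cutE_fderiv (M : ℝ) (p v : ℝ × Eucl n) : dV v (cutE M) p =
    - deriv Real.smoothTransition (M + 1 - √(1 + ‖p.2‖ ^ 2) - p.1)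
      * (v.1 + inner ℝ p.2 v.2 / √(1 + ‖p.2‖ ^ 2)) := by
  have h1 : HasFDerivAt (fun q : ℝ × Eucl n => ‖q.2‖ ^ 2)
      ((2 • (innerSL ℝ p.2)).comp (ContinuousLinearMap.snd ℝ ℝ (Eucl n))) p :=
    (hasStrictFDerivAt_norm_sq p.2).hasFDerivAt.comp p hasFDerivAt_snd
  have h2 := ((h1.const_add 1).sqrt (jb_pos p.2).ne')
  have h3 := (h2.const_sub (M + 1)).sub (hasFDerivAt_fst (𝕜 := ℝ) (p := p))
  have hd : DifferentiableAt ℝ Real.smoothTransition (M + 1 - √(1 + ‖p.2‖ ^ 2) - p.1) :=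
    (Real.smoothTransition.contDiff (n := 1)).differentiable (by simp) _
  have h4 := hd.hasDerivAt.comp_hasFDerivAt p h3
  have : cutE (n := n) M = Real.smoothTransition ∘
    ((fun x : ℝ × Eucl n => M + 1 - √(1 + ‖x.2‖ ^ 2)) - Prod.fst) := rfl
  unfold dV
  rw [this, h4.fderiv]
  have hs : √(1 + ‖p.2‖ ^ 2) ≠ 0 := (Real.sqrt_pos.2 (jb_pos p.2)).ne'
  simp
  field_simp
  ring

lemma cutE_tv (M : ℝ) (p : ℝ × Eucl n) : dV tv (cutE M) p =
    - deriv Real.smoothTransition (M + 1 - √(1 + ‖p.2‖ ^ 2) - p.1) := by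
  rw [cutE_fderiv]; simp [tv]

lemma cutE_xv (M : ℝ) (i : Fin n) (p : ℝ × Eucl n) : dV (xv i) (cutE M) p =
    - deriv Real.smoothTransition (M + 1 - √(1 + ‖p.2‖ ^ 2) - p.1) / √(1 + ‖p.2‖ ^ 2) * xc i p := by
  rw [cutE_fderiv]; simp [xv, xc, EuclideanSpace.inner_single_right]; ring

lemma energy_local {U : ℝ × Eucl n → ℝ} (hU : IsSol U) {T : ℝ} (hT : 0 ≤ T) (M : ℝ) :
    ∫ x in Metric.closedBall (0 : Eucl n) (M + 1), cutE M (T, x) * en U (T, x) ≤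
    ∫ x in Metric.closedBall (0 : Eucl n) (M + 1), cutE M (0, x) * en U (0, x) := by
  have hc := cutE_smooth (n := n) M
  have he := en_smooth hU.1
  have hx : ∀ i, ContDiff ℝ ∞ (dV (xv i) U) := fun i => dV_smooth hU.1
  have ht : ContDiff ℝ ∞ (dV tv U) := dV_smooth hU.1
  have key := div_identity (n := n) (Q := fun q => cutE M q * en U q)
    (P := fun i q => 2 * (cutE M q * (dV tv U q * dV (xv i) U q))) (by fun_prop)
    (fun i => by have := hx i; fun_prop) (isCompact_closedBall (0 : Eucl n) (M + 1)) hT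
    (by
      intro i t ht x hx
      have : cutE M (t, x) = 0 := by
        apply Real.smoothTransition.zero_of_nonpos
        simp only [Metric.mem_closedBall, dist_zero_right, not_le] at hx
        have : ‖x‖ ≤ √(1 + ‖x‖ ^ 2) := Real.le_sqrt_of_sq_le (by linarith)
        have := ht.1
        simp only
        linarith
      simp [this])
  rw [← sub_nonpos, key]
  rw [intervalIntegral.integral_of_le hT]
  refine integral_nonpos fun t => integral_nonpos fun x => ?_
  rw [energy_identity hU hc, cutE_tv]
  simp only [cutE_xv]
  set θ := deriv Real.smoothTransition (M + 1 - √(1 + ‖x‖ ^ 2) - t) with hθ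
  have hθ0 : 0 ≤ θ := Real.smoothTransition.monotone.deriv_nonneg
  set s := √(1 + ‖x‖ ^ 2) with hs
  have hs0 : 0 < s := Real.sqrt_pos.2 (jb_pos x)
  have hss : s ^ 2 = 1 + ‖x‖ ^ 2 := Real.sq_sqrt (jb_pos x).le
  have e : ∑ i, -θ / s * xc i (t, x) * dV (xv i) U (t, x) = -θ * (rd U (t, x) / s) := by
    unfold rd
    simp only [mul_assoc, ← Finset.mul_sum]
    ring
  rw [e]
  have h1 := rd_sq_le U (t, x)
  have h2 := gs_nonneg U (t, x)
  have h3 : (rd U (t, x) / s) ^ 2 ≤ gs U (t, x) := by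
    rw [div_pow, div_le_iff₀ (by positivity), hss]
    simp only at h1
    nlinarith
  unfold en
  simp only [Pi.zero_apply]
  have : 0 ≤ θ * (gs U (t, x) + dV tv U (t, x) * dV tv U (t, x) - 2 * dV tv U (t, x) * (rd U (t, x) / s)) := by
    apply mul_nonneg hθ0
    nlinarith [sq_nonneg (dV tv U (t, x) - rd U (t, x) / s)]
  linarith

lemma energy_le {U : ℝ × Eucl n → ℝ} (hU : IsSol U) {T : ℝ} (hT : 0 ≤ T) :
    EL U T ≤ EL U 0 := by
  have hcont := fun t => (en_smooth hU.1).continuous.comp (by fun_prop : Continuous fun x : Eucl n => (t, x))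
  have hcov := aecover_closedBall (μ := (volume : Measure (Eucl n))) (x := 0) (r := fun m : ℕ => (m : ℝ))
    tendsto_natCast_atTop_atTop
  have lim := hcov.lintegral_tendsto_of_countably_generated
    (f := fun x => ENNReal.ofReal (en U (T, x))) (hcont T).measurable.ennreal_ofReal.aemeasurable
  refine le_of_tendsto' lim fun m => ?_
  set M : ℝ := m + 1 + T with hM
  have loc := energy_local hU hT M
  set K := Metric.closedBall (0 : Eucl n) (M + 1)
  have hK : IsCompact K := isCompact_closedBall _ _
  have hci : ∀ t, IntegrableOn (fun x : Eucl n => cutE M (t, x) * en U (t, x)) K := fun t =>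
    (((cutE_smooth (n := n) M).mul (en_smooth hU.1)).continuous.comp
      (by fun_prop : Continuous fun x : Eucl n => (t, x))).continuousOn.integrableOn_compact hK
  have hnn : ∀ t, 0 ≤ᵐ[volume.restrict K] fun x : Eucl n => cutE M (t, x) * en U (t, x) := fun t =>
    Filter.Eventually.of_forall fun x =>
      mul_nonneg (Real.smoothTransition.nonneg _) (en_nonneg _ _)
  calc ∫⁻ x in Metric.closedBall (0 : Eucl n) m, ENNReal.ofReal (en U (T, x))
      ≤ ∫⁻ x in Metric.closedBall (0 : Eucl n) m, ENNReal.ofReal (cutE M (T, x) * en U (T, x)) := by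
        refine setLIntegral_mono' measurableSet_closedBall fun x hx => ?_
        have : cutE M (T, x) = 1 := by
          apply Real.smoothTransition.one_of_one_le
          simp only [Metric.mem_closedBall, dist_zero_right] at hx
          have : √(1 + ‖x‖ ^ 2) ≤ 1 + m := by
            rw [Real.sqrt_le_left (by positivity)]
            nlinarith [norm_nonneg x]
          simp only
          linarith
        rw [this, one_mul]
    _ ≤ ∫⁻ x in K, ENNReal.ofReal (cutE M (T, x) * en U (T, x)) :=
        lintegral_mono_set (Metric.closedBall_subset_closedBall (by linarith))
    _ = ENNReal.ofReal (∫ x in K, cutE M (T, x) * en U (T, x)) :=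
        (ofReal_integral_eq_lintegral_ofReal (hci T) (hnn T)).symm
    _ ≤ ENNReal.ofReal (∫ x in K, cutE M (0, x) * en U (0, x)) := ENNReal.ofReal_le_ofReal loc
    _ = ∫⁻ x in K, ENNReal.ofReal (cutE M (0, x) * en U (0, x)) :=
        (ofReal_integral_eq_lintegral_ofReal (hci 0) (hnn 0))
    _ ≤ ∫⁻ x, ENNReal.ofReal (cutE M (0, x) * en U (0, x)) := setLIntegral_le_lintegral _ _
    _ ≤ EL U 0 := by
        refine lintegral_mono fun x => ENNReal.ofReal_le_ofReal ?_
        have := Real.smoothTransition.le_one (M + 1 - √(1 + ‖x‖ ^ 2) - 0)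
        exact mul_le_of_le_one_left (en_nonneg _ _) this

end Energy
end KSS

namespace KSS

open scoped ContDiff

section Mass
variable {n : ℕ}

lemma cs_one {φ φ' : ℝ → ℝ} (h : ∀ s, HasDerivAt φ (φ' s) s) (hc : Continuous φ') {T : ℝ}
    (hT : 0 ≤ T) : (φ T - φ 0) ^ 2 ≤ T * ∫ s in (0:ℝ)..T, φ' s ^ 2 := by
  rcases hT.eq_or_lt with rfl | hT0
  · simp
  have hI : ∫ s in (0:ℝ)..T, φ' s = φ T - φ 0 :=
    intervalIntegral.integral_eq_sub_of_hasDerivAt (fun s _ => h s) (hc.intervalIntegrable _ _)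
  set m := (φ T - φ 0) / T with hm
  have h0 : 0 ≤ ∫ s in (0:ℝ)..T, (φ' s - m) ^ 2 :=
    intervalIntegral.integral_nonneg hT fun s _ => sq_nonneg _
  have h1 : ∫ s in (0:ℝ)..T, (φ' s - m) ^ 2 =
      (∫ s in (0:ℝ)..T, φ' s ^ 2) - 2 * m * (∫ s in (0:ℝ)..T, φ' s) + T * m ^ 2 := by
    have : ∀ s, (φ' s - m) ^ 2 = φ' s ^ 2 - 2 * m * φ' s + m ^ 2 := fun s => by ring
    simp only [this]
    rw [intervalIntegral.integral_add, intervalIntegral.integral_sub,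
      intervalIntegral.integral_const_mul]
    · simp
    all_goals exact Continuous.intervalIntegrable (by fun_prop) _ _
  rw [h1, hI] at h0
  have h2 : φ T - φ 0 = T * m := by rw [hm]; field_simp
  rw [h2] at h0 ⊢
  nlinarith

lemma cs_one_lint {φ φ' : ℝ → ℝ} (h : ∀ s, HasDerivAt φ (φ' s) s) (hc : Continuous φ') {T : ℝ}
    (hT : 0 ≤ T) : ENNReal.ofReal ((φ T - φ 0) ^ 2) ≤
      ENNReal.ofReal T * ∫⁻ s in Set.Ioc 0 T, ENNReal.ofReal (φ' s ^ 2) := by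
  rw [← ofReal_integral_eq_lintegral_ofReal, ← ENNReal.ofReal_mul hT,
    ← intervalIntegral.integral_of_le hT]
  · exact ENNReal.ofReal_le_ofReal (cs_one h hc hT)
  · exact (Continuous.intervalIntegrable (by fun_prop : Continuous fun s => φ' s ^ 2) 0 T).1
  · exact Filter.Eventually.of_forall fun s => sq_nonneg _

lemma dV_zero_h (U : ℝ × Eucl n → ℝ) (h : Eucl n) (p) :
    dV (0, h) U p = ∑ i, h i * dV (xv i) U p := by
  have : ((0 : ℝ), h) = ∑ i, h i • xv (n := n) i := by
    refine Prod.ext ?_ ?_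
    · simp [xv, Prod.fst_sum]
    · rw [Prod.snd_sum]
      ext j
      simp [xv, Finset.sum_apply, Pi.single_apply]
  unfold dV
  rw [this, map_sum]
  simp

lemma dV_h_sq (U : ℝ × Eucl n → ℝ) (h : Eucl n) (p) :
    dV (0, h) U p ^ 2 ≤ ‖h‖ ^ 2 * gs U p := by
  rw [dV_zero_h, gs_eq, EuclideanSpace.real_norm_sq_eq]
  exact Finset.sum_mul_sq_le_sq_mul_sq _ _ _

lemma gs_le_en (U : ℝ × Eucl n → ℝ) (p) : gs U p ≤ en U p := by
  unfold en; nlinarith [mul_self_nonneg (dV tv U p)]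

lemma transl {U : ℝ × Eucl n → ℝ} (hU : ContDiff ℝ ∞ U) (h : Eucl n) :
    ∫⁻ y, ENNReal.ofReal ((U (0, y + h) - U (0, y)) ^ 2) ≤ ENNReal.ofReal (‖h‖ ^ 2) * EL U 0 := by
  have hc : Continuous (dV (0, h) U) := (dV_smooth hU).continuous
  have he := (en_smooth hU).continuous
  calc ∫⁻ y, ENNReal.ofReal ((U (0, y + h) - U (0, y)) ^ 2)
      ≤ ∫⁻ y, ∫⁻ s in Set.Ioc (0:ℝ) 1, ENNReal.ofReal (‖h‖ ^ 2) * ENNReal.ofReal (en U (0, y + s • h)) := by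
        refine lintegral_mono fun y => ?_
        have := cs_one_lint (φ := fun s : ℝ => U (0, y + s • h))
          (φ' := fun s : ℝ => dV (0, h) U (0, y + s • h)) (by
            intro s
            have h1 : HasDerivAt (fun s : ℝ => ((0 : ℝ), y + s • h)) (0, h) s := by
              refine (hasDerivAt_const _ _).prodMk ?_
              simpa using ((hasDerivAt_id s).smul_const h).const_add y
            exact (sm_diff hU _).hasFDerivAt.comp_hasDerivAt s h1) (by fun_prop) zero_le_one
        simp only [one_smul, zero_smul, add_zero, ENNReal.ofReal_one, one_mul] at this
        refine this.trans (lintegral_mono fun s => ?_)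
        rw [← ENNReal.ofReal_mul (by positivity)]
        refine ENNReal.ofReal_le_ofReal ((dV_h_sq U h _).trans ?_)
        exact mul_le_mul_of_nonneg_left (gs_le_en U _) (by positivity)
    _ = ∫⁻ s in Set.Ioc (0:ℝ) 1, ∫⁻ y, ENNReal.ofReal (‖h‖ ^ 2) * ENNReal.ofReal (en U (0, y + s • h)) := by
        refine lintegral_lintegral_swap ?_
        refine Measurable.aemeasurable (Continuous.measurable ?_)
        simp only [Function.uncurry_def]
        refine ENNReal.continuous_const_mul (by simp) |>.comp (ENNReal.continuous_ofReal.comp ?_)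
        fun_prop
    _ = ∫⁻ s in Set.Ioc (0:ℝ) 1, ENNReal.ofReal (‖h‖ ^ 2) * EL U 0 := by
        refine lintegral_congr fun s => ?_
        rw [lintegral_const_mul' _ _ (by simp),
          lintegral_add_right_eq_self (fun y => ENNReal.ofReal (en U (0, y)))]
        rfl
    _ = _ := by simp

lemma poincare {U : ℝ × Eucl n → ℝ} (hU : ContDiff ℝ ∞ U) {r : ℝ} (hr : 0 < r) :
    ∃ c : ℝ, ∫⁻ x in Metric.closedBall (0 : Eucl n) r, ENNReal.ofReal ((U (0, x) - c) ^ 2) ≤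
      ENNReal.ofReal (2 ^ n * (2 * r) ^ 2) * EL U 0 := by
  have hUc := hU.continuous
  set B := Metric.closedBall (0 : Eucl n) r with hB
  set B2 := Metric.closedBall (0 : Eucl n) (2 * r) with hB2
  have hv0 : volume B ≠ 0 := (Metric.measure_closedBall_pos _ _ hr).ne'
  have hv1 : volume B ≠ (⊤ : ℝ≥0∞) := measure_closedBall_lt_top.ne
  have hmeas : Measurable (fun p : Eucl n × Eucl n => ENNReal.ofReal ((U (0, p.2) - U (0, p.1)) ^ 2)) :=
    Continuous.measurable (ENNReal.continuous_ofReal.comp (by fun_prop))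
  have hmeas2 : Measurable (fun p : Eucl n × Eucl n =>
      ENNReal.ofReal ((U (0, p.1 + p.2) - U (0, p.1)) ^ 2)) :=
    Continuous.measurable (ENNReal.continuous_ofReal.comp (by fun_prop))
  obtain ⟨y, hy, hle⟩ := exists_le_setLAverage (μ := (volume : Measure (Eucl n))) (s := B)
    (f := fun y => ∫⁻ x in B, ENNReal.ofReal ((U (0, x) - U (0, y)) ^ 2)) hv0 hv1
    (Measurable.lintegral_prod_right' hmeas).aemeasurable
  refine ⟨U (0, y), hle.trans ?_⟩
  rw [setLAverage_eq]
  refine ENNReal.div_le_of_le_mul ?_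
  have hvol : volume B2 = ENNReal.ofReal (2 ^ n) * volume B := by
    rw [hB2, hB, Measure.addHaar_closedBall_mul volume (0 : Eucl n) (by norm_num : (0:ℝ) ≤ 2) hr.le,
      Measure.addHaar_closedBall_center]
    simp
  calc ∫⁻ y in B, ∫⁻ x in B, ENNReal.ofReal ((U (0, x) - U (0, y)) ^ 2)
      ≤ ∫⁻ y in B, ∫⁻ h in B2, ENNReal.ofReal ((U (0, y + h) - U (0, y)) ^ 2) := by
        refine setLIntegral_mono' measurableSet_closedBall fun y hy => ?_
        rw [← lintegral_indicator measurableSet_closedBall,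
          ← lintegral_indicator measurableSet_closedBall,
          ← lintegral_add_left_eq_self _ y]
        refine lintegral_mono fun h => ?_
        by_cases hh : y + h ∈ B
        · have : h ∈ B2 := by
            simp only [hB, hB2, Metric.mem_closedBall, dist_zero_right] at *
            calc ‖h‖ = ‖(y + h) - y‖ := by congr 1; abel
              _ ≤ ‖y + h‖ + ‖y‖ := norm_sub_le _ _
              _ ≤ 2 * r := by linarith
          rw [Set.indicator_of_mem hh, Set.indicator_of_mem this]
        · rw [Set.indicator_of_notMem hh]
          exact zero_le
    _ ≤ ∫⁻ y, ∫⁻ h in B2, ENNReal.ofReal ((U (0, y + h) - U (0, y)) ^ 2) :=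
        setLIntegral_le_lintegral _ _
    _ = ∫⁻ h in B2, ∫⁻ y, ENNReal.ofReal ((U (0, y + h) - U (0, y)) ^ 2) :=
        lintegral_lintegral_swap hmeas2.aemeasurable
    _ ≤ ∫⁻ h in B2, ENNReal.ofReal ((2 * r) ^ 2) * EL U 0 := by
        refine setLIntegral_mono' measurableSet_closedBall fun h hh => (transl hU h).trans ?_
        simp only [hB2, Metric.mem_closedBall, dist_zero_right] at hh
        gcongr
    _ = ENNReal.ofReal (2 ^ n * (2 * r) ^ 2) * EL U 0 * volume B := by
        rw [setLIntegral_const, hvol, ENNReal.ofReal_mul (by positivity)]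
        ring

lemma time_mass {U : ℝ × Eucl n → ℝ} (hU : IsSol U) {t : ℝ} (ht : 0 ≤ t) :
    ∫⁻ x, ENNReal.ofReal ((U (t, x) - U (0, x)) ^ 2) ≤ ENNReal.ofReal (t ^ 2) * EL U 0 := by
  have hc : Continuous (dV tv U) := (dV_smooth hU.1).continuous
  have he := (en_smooth hU.1).continuous
  calc ∫⁻ x, ENNReal.ofReal ((U (t, x) - U (0, x)) ^ 2)
      ≤ ∫⁻ x, ENNReal.ofReal t * ∫⁻ s in Set.Ioc 0 t, ENNReal.ofReal (en U (s, x)) := by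
        refine lintegral_mono fun x => ?_
        refine (cs_one_lint (φ := fun s => U (s, x)) (fun s => dV_t_slice hU.1 s x)
          (by fun_prop) ht).trans ?_
        gcongr with s
        have := gs_nonneg U (s, x)
        unfold en
        nlinarith
    _ = ENNReal.ofReal t * ∫⁻ s in Set.Ioc 0 t, EL U s := by
        rw [lintegral_const_mul' _ _ (by simp), lintegral_lintegral_swap]
        · rfl
        refine Measurable.aemeasurable (Continuous.measurable ?_)
        simp only [Function.uncurry_def]
        exact ENNReal.continuous_ofReal.comp (by fun_prop)
    _ ≤ ENNReal.ofReal t * ∫⁻ s in Set.Ioc 0 t, EL U 0 := by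
        gcongr ENNReal.ofReal t * ?_
        refine setLIntegral_mono' measurableSet_Ioc fun s hs => energy_le hU hs.1.le
    _ = _ := by
        rw [setLIntegral_const, Real.volume_Ioc, sub_zero, sq, ENNReal.ofReal_mul ht]
        ring

lemma mass {U : ℝ × Eucl n → ℝ} (hU : IsSol U) {ρ : ℝ} (hρ : 0 < ρ) :
    ∃ c : ℝ, ∀ t ∈ Set.Icc 0 ρ,
      ∫⁻ x in Metric.closedBall (0 : Eucl n) (2 * ρ), ENNReal.ofReal ((U (t, x) - c) ^ 2) ≤
      ENNReal.ofReal ((2 ^ n * 32 + 2) * ρ ^ 2) * EL U 0 := by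
  obtain ⟨c, hc⟩ := poincare hU.1 (r := 2 * ρ) (by positivity)
  refine ⟨c, fun t ht => ?_⟩
  have hUc := hU.1.continuous
  set B := Metric.closedBall (0 : Eucl n) (2 * ρ)
  calc ∫⁻ x in B, ENNReal.ofReal ((U (t, x) - c) ^ 2)
      ≤ ∫⁻ x in B, (2 * ENNReal.ofReal ((U (0, x) - c) ^ 2)
          + 2 * ENNReal.ofReal ((U (t, x) - U (0, x)) ^ 2)) := by
        refine lintegral_mono fun x => ?_
        have h2 : (2 : ℝ≥0∞) = ENNReal.ofReal 2 := by simp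
        rw [h2, ← ENNReal.ofReal_mul (by norm_num), ← ENNReal.ofReal_mul (by norm_num),
          ← ENNReal.ofReal_add (by positivity) (by positivity)]
        refine ENNReal.ofReal_le_ofReal ?_
        nlinarith [sq_nonneg ((U (0, x) - c) - (U (t, x) - U (0, x)))]
    _ = 2 * (∫⁻ x in B, ENNReal.ofReal ((U (0, x) - c) ^ 2))
          + 2 * (∫⁻ x in B, ENNReal.ofReal ((U (t, x) - U (0, x)) ^ 2)) := by
        rw [lintegral_add_left, lintegral_const_mul' _ _ (by simp), lintegral_const_mul' _ _ (by simp)]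
        refine Measurable.const_mul (Continuous.measurable ?_) _
        exact ENNReal.continuous_ofReal.comp (by fun_prop)
    _ ≤ 2 * (ENNReal.ofReal (2 ^ n * (2 * (2 * ρ)) ^ 2) * EL U 0)
          + 2 * (ENNReal.ofReal (ρ ^ 2) * EL U 0) := by
        gcongr
        refine (setLIntegral_le_lintegral _ _).trans ((time_mass hU ht.1).trans ?_)
        have := ht.1
        have := ht.2
        gcongr
    _ = _ := by
        have h2 : (2 : ℝ≥0∞) = ENNReal.ofReal 2 := by simp
        rw [h2, ← mul_assoc (ENNReal.ofReal 2), ← mul_assoc (ENNReal.ofReal 2), ← add_mul, ← ENNReal.ofReal_mul (by norm_num),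
          ← ENNReal.ofReal_mul (by norm_num), ← ENNReal.ofReal_add (by positivity) (by positivity)]
        congr 2
        ring

end Mass
end KSS

namespace KSS

open scoped ContDiff

section Weights
variable {n : ℕ}

/-- the weight `(R² + |x|²)^{-1/2}` -/
noncomputable def wq (R : ℝ) (p : ℝ × Eucl n) : ℝ := (√(R ^ 2 + ‖p.2‖ ^ 2))⁻¹

lemma wr_pos {R : ℝ} (hR : 0 < R) (x : Eucl n) : 0 < R ^ 2 + ‖x‖ ^ 2 := by positivity

lemma wq_pos {R : ℝ} (hR : 0 < R) (p : ℝ × Eucl n) : 0 < wq R p :=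
  inv_pos.2 (Real.sqrt_pos.2 (wr_pos hR p.2))

lemma wq_sq {R : ℝ} (hR : 0 < R) (p : ℝ × Eucl n) : wq R p ^ 2 * (R ^ 2 + ‖p.2‖ ^ 2) = 1 := by
  unfold wq
  rw [inv_pow, Real.sq_sqrt (wr_pos hR p.2).le, inv_mul_cancel₀ (wr_pos hR p.2).ne']

lemma wq_smooth {R : ℝ} (hR : 0 < R) : ContDiff ℝ ∞ (wq (n := n) R) := by
  unfold wq
  refine ContDiff.inv (ContDiff.sqrt ?_ fun p => (wr_pos hR p.2).ne')
    fun p => (Real.sqrt_pos.2 (wr_pos hR p.2)).ne'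
  exact contDiff_const.add (contDiff_snd.norm_sq ℝ)

lemma wq_fderiv {R : ℝ} (hR : 0 < R) (p v : ℝ × Eucl n) : dV v (wq R) p =
    - (wq R p ^ 3 * inner ℝ p.2 v.2) := by
  have h1 : HasFDerivAt (fun q : ℝ × Eucl n => ‖q.2‖ ^ 2)
      ((2 • (innerSL ℝ p.2)).comp (ContinuousLinearMap.snd ℝ ℝ (Eucl n))) p :=
    (hasStrictFDerivAt_norm_sq p.2).hasFDerivAt.comp p hasFDerivAt_snd
  have h2 := ((h1.const_add (R ^ 2)).sqrt (wr_pos hR p.2).ne')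
  have hs : √(R ^ 2 + ‖p.2‖ ^ 2) ≠ 0 := (Real.sqrt_pos.2 (wr_pos hR p.2)).ne'
  have h4 := (hasDerivAt_inv hs).comp_hasFDerivAt p h2
  have : wq (n := n) R = Inv.inv ∘ (fun q : ℝ × Eucl n => √(R ^ 2 + ‖q.2‖ ^ 2)) := rfl
  unfold dV
  rw [this, h4.fderiv]
  simp
  field_simp

lemma wq_tv {R : ℝ} (hR : 0 < R) (p : ℝ × Eucl n) : dV tv (wq R) p = 0 := by
  rw [wq_fderiv hR]; simp [tv]

lemma wq_xv {R : ℝ} (hR : 0 < R) (i : Fin n) (p : ℝ × Eucl n) : dV (xv i) (wq R) p =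
    - (xc i p * (wq R p * (wq R p * wq R p))) := by
  rw [wq_fderiv hR]; simp [xv, xc, EuclideanSpace.inner_single_right]; ring

lemma wq_xx {R : ℝ} (hR : 0 < R) (i : Fin n) (p : ℝ × Eucl n) : dV (xv i) (dV (xv i) (wq R)) p =
    - wq R p ^ 3 + 3 * wq R p ^ 5 * xc i p ^ 2 := by
  have h : dV (xv i) (wq (n := n) R) = fun p => (-1) * (xc i p * (wq R p * (wq R p * wq R p))) := by
    ext p; rw [wq_xv hR]; ring
  have hw := wq_smooth (n := n) hR
  have hx := xc_smooth (n := n) i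
  rw [h, dV_cmul _ (by fun_prop), dV_mul hx (by fun_prop), dV_mul hw (by fun_prop), dV_mul hw hw,
    wq_xv hR, dV_xc]
  simp
  ring

lemma wq_lap {R : ℝ} (hR : 0 < R) (hn : 3 ≤ n) (p : ℝ × Eucl n) :
    ∑ i, dV (xv i) (dV (xv i) (wq R)) p ≤ 0 := by
  simp only [wq_xx hR, Finset.sum_add_distrib, ← Finset.mul_sum, norm_sq_xc, Finset.sum_const,
    Finset.card_univ, Fintype.card_fin, nsmul_eq_mul]
  have h1 := wq_sq hR p
  have h2 := wq_pos hR p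
  have h3 : (3 : ℝ) ≤ n := by exact_mod_cast hn
  have h4 : wq R p ^ 5 * ‖p.2‖ ^ 2 ≤ wq R p ^ 3 := by
    have : wq R p ^ 2 * ‖p.2‖ ^ 2 ≤ 1 := by nlinarith [mul_pos (pow_pos h2 2) (pow_pos hR 2)]
    calc wq R p ^ 5 * ‖p.2‖ ^ 2 = wq R p ^ 3 * (wq R p ^ 2 * ‖p.2‖ ^ 2) := by ring
      _ ≤ wq R p ^ 3 * 1 := by gcongr
      _ = _ := by ring
  nlinarith [pow_pos h2 3]

/-- the properties of the spatial cutoff -/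
structure IsCut (K ρ : ℝ) (χ : ℝ × Eucl n → ℝ) : Prop where
  smooth : ContDiff ℝ ∞ χ
  tv : ∀ p, dV tv χ p = 0
  nonneg : ∀ p, 0 ≤ χ p
  le_one : ∀ p, χ p ≤ 1
  eq_one : ∀ p : ℝ × Eucl n, ‖p.2‖ ≤ ρ → χ p = 1
  eq_zero : ∀ p : ℝ × Eucl n, 2 * ρ < ‖p.2‖ → χ p = 0
  grad : ∀ p, gs χ p ≤ (K / ρ) ^ 2
  lap : ∀ p, |∑ i, dV (xv i) (dV (xv i) χ) p| ≤ K / ρ ^ 2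
  dzero : ∀ i, ∀ p : ℝ × Eucl n, ‖p.2‖ < ρ → dV (xv i) χ p = 0
  ddzero : ∀ i, ∀ p : ℝ × Eucl n, ‖p.2‖ < ρ → dV (xv i) (dV (xv i) χ) p = 0
  dzero' : ∀ i, ∀ p : ℝ × Eucl n, 2 * ρ < ‖p.2‖ → dV (xv i) χ p = 0

lemma dV_scale {f : Eucl n → ℝ} (hf : ContDiff ℝ ∞ f) (a : ℝ) (i : Fin n) (p : ℝ × Eucl n) :
    dV (xv i) (fun q => f (a • q.2)) p =
      a * fderiv ℝ f (a • p.2) (EuclideanSpace.single i (1 : ℝ)) := by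
  have h1 : ContDiff ℝ ∞ (fun x => f (a • x)) := by fun_prop
  rw [dV_x_snd h1]
  have h2 : HasFDerivAt (fun x : Eucl n => a • x) (a • ContinuousLinearMap.id ℝ (Eucl n)) p.2 :=
    (hasFDerivAt_id p.2).const_smul a
  have := ((hf.differentiable (by simp) (a • p.2)).hasFDerivAt.comp p.2 h2).fderiv
  change fderiv ℝ (f ∘ fun x => a • x) p.2 _ = _
  rw [this]; simp

lemma dV_eventually {F G : ℝ × Eucl n → ℝ} {v p} (h : F =ᶠ[nhds p] G) : dV v F p = dV v G p := by
  unfold dV; rw [h.fderiv_eq]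

lemma dV_eventually' {F G : ℝ × Eucl n → ℝ} {v p} (h : F =ᶠ[nhds p] G) :
    dV v F =ᶠ[nhds p] dV v G := by
  filter_upwards [h.eventuallyEq_nhds] with q hq using dV_eventually hq

lemma dV_const (c : ℝ) (v p : ℝ × Eucl n) : dV v (fun _ => c) p = 0 := by
  unfold dV; simp

lemma exists_cut (n : ℕ) : ∃ K : ℝ, 0 < K ∧ ∀ ρ : ℝ, 0 < ρ → ∃ χ : ℝ × Eucl n → ℝ, IsCut K ρ χ := by
  let b : ContDiffBump (0 : Eucl n) := ⟨1, 2, by norm_num, by norm_num⟩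
  have hb : ContDiff ℝ ∞ (b : Eucl n → ℝ) := b.contDiff
  let e : Fin n → Eucl n := fun i => EuclideanSpace.single i (1 : ℝ)
  let g : Fin n → Eucl n → ℝ := fun i x => fderiv ℝ b x (e i)
  let gg : Fin n → Eucl n → ℝ := fun i x => fderiv ℝ (g i) x (e i)
  have hg : ∀ i, ContDiff ℝ ∞ (g i) := fun i =>
    (hb.fderiv_right (m := ∞) (by simp)).clm_apply contDiff_const
  have hgg : ∀ i, ContDiff ℝ ∞ (gg i) := fun i =>
    ((hg i).fderiv_right (m := ∞) (by simp)).clm_apply contDiff_const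
  have cg : ∀ i, HasCompactSupport (g i) := fun i => b.hasCompactSupport.fderiv_apply (𝕜 := ℝ) (e i)
  have cgg : ∀ i, HasCompactSupport (gg i) := fun i => (cg i).fderiv_apply (𝕜 := ℝ) (e i)
  choose C1 hC1 using fun i => (hg i).continuous.bounded_above_of_compact_support (cg i)
  choose C2 hC2 using fun i => (hgg i).continuous.bounded_above_of_compact_support (cgg i)
  have hC1' : ∀ i, 0 ≤ C1 i := fun i => (norm_nonneg _).trans (hC1 i 0)
  have hC2' : ∀ i, 0 ≤ C2 i := fun i => (norm_nonneg _).trans (hC2 i 0)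
  let K : ℝ := 1 + ∑ i, C1 i ^ 2 + ∑ i, C2 i
  have s1 : 0 ≤ ∑ i, C1 i ^ 2 := Finset.sum_nonneg fun i _ => sq_nonneg _
  have s2 : 0 ≤ ∑ i, C2 i := Finset.sum_nonneg fun i _ => hC2' i
  have hK : 1 ≤ K := by simp only [K]; linarith
  refine ⟨K, by linarith, fun ρ hρ => ⟨fun p => b (ρ⁻¹ • p.2), ?_⟩⟩
  have hsm : ContDiff ℝ ∞ (fun p : ℝ × Eucl n => b (ρ⁻¹ • p.2)) := by fun_prop
  have hd : ∀ i p, dV (xv i) (fun p : ℝ × Eucl n => b (ρ⁻¹ • p.2)) p = ρ⁻¹ * g i (ρ⁻¹ • p.2) :=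
    fun i p => dV_scale hb ρ⁻¹ i p
  have hdd : ∀ i p, dV (xv i) (dV (xv i) (fun p : ℝ × Eucl n => b (ρ⁻¹ • p.2))) p =
      ρ⁻¹ * (ρ⁻¹ * gg i (ρ⁻¹ • p.2)) := by
    intro i p
    have : dV (xv i) (fun p : ℝ × Eucl n => b (ρ⁻¹ • p.2)) = fun p => ρ⁻¹ * g i (ρ⁻¹ • p.2) :=
      funext (hd i)
    have h1 := hg i
    rw [this, dV_cmul _ (by fun_prop), dV_scale (hg i) ρ⁻¹ i p]
  have h1 : ∀ p : ℝ × Eucl n, ‖p.2‖ ≤ ρ → b (ρ⁻¹ • p.2) = 1 := by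
    intro p hp
    apply b.one_of_mem_closedBall
    simp only [Metric.mem_closedBall, dist_zero_right, norm_smul, norm_inv, Real.norm_eq_abs,
      abs_of_pos hρ, b]
    rw [inv_mul_le_iff₀ hρ]; linarith
  have h2 : ∀ p : ℝ × Eucl n, 2 * ρ < ‖p.2‖ → b (ρ⁻¹ • p.2) = 0 := by
    intro p hp
    apply b.zero_of_le_dist
    simp only [dist_zero_right, norm_smul, norm_inv, Real.norm_eq_abs, abs_of_pos hρ, b]
    rw [le_inv_mul_iff₀ hρ]; linarith
  have n1 : ∀ p : ℝ × Eucl n, ‖p.2‖ < ρ →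
      (fun p : ℝ × Eucl n => b (ρ⁻¹ • p.2)) =ᶠ[nhds p] fun _ => 1 := by
    intro p hp
    have : IsOpen {q : ℝ × Eucl n | ‖q.2‖ < ρ} := isOpen_lt (by fun_prop) (by fun_prop)
    filter_upwards [this.mem_nhds hp] with q hq using h1 q (le_of_lt hq)
  have n2 : ∀ p : ℝ × Eucl n, 2 * ρ < ‖p.2‖ →
      (fun p : ℝ × Eucl n => b (ρ⁻¹ • p.2)) =ᶠ[nhds p] fun _ => 0 := by
    intro p hp
    have : IsOpen {q : ℝ × Eucl n | 2 * ρ < ‖q.2‖} := isOpen_lt (by fun_prop) (by fun_prop)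
    filter_upwards [this.mem_nhds hp] with q hq using h2 q hq
  refine ⟨hsm, fun p => dV_t_snd (f := fun x => b (ρ⁻¹ • x)) (by fun_prop) p, fun p => b.nonneg,
    fun p => b.le_one, h1, h2, ?_, ?_, ?_, ?_, ?_⟩
  · intro p
    rw [gs_eq]
    simp only [hd, mul_pow, ← Finset.mul_sum]
    rw [div_pow, div_eq_inv_mul, inv_pow]
    gcongr
    calc ∑ i, g i (ρ⁻¹ • p.2) ^ 2 ≤ ∑ i, C1 i ^ 2 := by
          refine Finset.sum_le_sum fun i _ => ?_
          have := hC1 i (ρ⁻¹ • p.2)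
          rw [Real.norm_eq_abs] at this
          exact sq_le_sq' (abs_le.1 this).1 (abs_le.1 this).2
      _ ≤ K := by simp only [K]; linarith
      _ ≤ K ^ 2 := by nlinarith
  · intro p
    simp only [hdd, ← Finset.mul_sum]
    rw [abs_mul, abs_mul, abs_of_pos (inv_pos.2 hρ), ← mul_assoc, ← sq, inv_pow, div_eq_inv_mul]
    gcongr
    calc |∑ i, gg i (ρ⁻¹ • p.2)| ≤ ∑ i, |gg i (ρ⁻¹ • p.2)| := Finset.abs_sum_le_sum_abs _ _
      _ ≤ ∑ i, C2 i := Finset.sum_le_sum fun i _ => hC2 i _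
      _ ≤ K := by simp only [K]; linarith
  · intro i p hp
    rw [dV_eventually (n1 p hp), dV_const]
  · intro i p hp
    have h3 : dV (xv i) (fun _ : ℝ × Eucl n => (1:ℝ)) = fun _ => 0 := funext fun q => dV_const _ _ _
    rw [dV_eventually (dV_eventually' (n1 p hp)), h3, dV_const]
  · intro i p hp
    rw [dV_eventually (n2 p hp), dV_const]

end Weights
end KSS

namespace KSS

open scoped ContDiff

section Bounds
variable {n : ℕ}

lemma wq_rd_sq {R : ℝ} (hR : 0 < R) (U : ℝ × Eucl n → ℝ) (p) :
    (wq R p * rd U p) ^ 2 ≤ gs U p := by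
  have h1 := wq_sq hR p
  have h2 := rd_sq_le U p
  have h3 := gs_nonneg U p
  have hq := wq_pos hR p
  have h4 : wq R p ^ 2 * ‖p.2‖ ^ 2 ≤ 1 := by nlinarith [mul_pos (pow_pos hq 2) (pow_pos hR 2)]
  calc (wq R p * rd U p) ^ 2 = wq R p ^ 2 * rd U p ^ 2 := by ring
    _ ≤ wq R p ^ 2 * (‖p.2‖ ^ 2 * gs U p) := by gcongr
    _ = (wq R p ^ 2 * ‖p.2‖ ^ 2) * gs U p := by ring
    _ ≤ 1 * gs U p := by gcongr
    _ = _ := one_mul _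

lemma inner_sq_le (U V : ℝ × Eucl n → ℝ) (p) :
    (∑ i, dV (xv i) U p * dV (xv i) V p) ^ 2 ≤ gs U p * gs V p := by
  rw [gs_eq, gs_eq]
  exact Finset.sum_mul_sq_le_sq_mul_sq _ _ _

set_option maxHeartbeats 1000000 in
lemma S_bound {R K ρ : ℝ} (hR : 0 < R) (hK : 0 < K) (hρ : 0 < ρ) (hn : 3 ≤ n)
    {U χ : ℝ × Eucl n → ℝ} (hU : IsSol U) (hχ : IsCut K ρ χ) (p : ℝ × Eucl n) :
    dV tv (mQ (fun q => χ q * wq R q) U) p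
      - ∑ i, dV (xv i) (mP (fun q => χ q * wq R q) U i) p
    ≤ - (1 / 2) * (χ p * (R ^ 2 * wq R p ^ 3) * en U p) + 2 * K / ρ * en U p
      + n * K / ρ ^ 3 * U p ^ 2 := by
  have hw := wq_smooth (n := n) hR
  have hc := hχ.smooth
  have hci : ∀ i, ContDiff ℝ ∞ (dV (xv i) χ) := fun i => dV_smooth hc
  have hwi : ∀ i, ContDiff ℝ ∞ (dV (xv i) (wq (n := n) R)) := fun i => dV_smooth hw
  rw [morawetz_identity hU (by fun_prop) (fun p => by
    rw [dV_mul hc hw, hχ.tv, wq_tv hR]; ring)]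
  have k1 : ∀ i p, dV (xv i) (fun q => χ q * wq R q) p =
      dV (xv i) χ p * wq R p + χ p * dV (xv i) (wq R) p := fun i p => dV_mul hc hw p
  have k2 : ∀ i, dV (xv i) (dV (xv i) (fun q => χ q * wq R q)) p =
      wq R p * dV (xv i) (dV (xv i) χ) p - 2 * wq R p ^ 3 * (xc i p * dV (xv i) χ p)
        + χ p * dV (xv i) (dV (xv i) (wq R)) p := by
    intro i
    have h1 := hci i
    have h2 := hwi i
    have : dV (xv i) (fun q => χ q * wq R q) =
      fun p => dV (xv i) χ p * wq R p + χ p * dV (xv i) (wq R) p := funext (k1 i)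
    rw [this, dV_add (by fun_prop) (by fun_prop), dV_mul h1 hw, dV_mul hc h2, wq_xv hR]
    ring
  have s1 : ∑ i, dV (xv i) (fun q => χ q * wq R q) p * dV (xv i) U p =
      wq R p * (∑ i, dV (xv i) χ p * dV (xv i) U p) - χ p * wq R p ^ 3 * rd U p := by
    unfold rd
    rw [Finset.mul_sum, Finset.mul_sum, ← Finset.sum_sub_distrib]
    refine Finset.sum_congr rfl fun i _ => ?_
    rw [k1, wq_xv hR]; ring
  have s2 : rd (fun q => χ q * wq R q) p = wq R p * rd χ p - χ p * wq R p ^ 3 * ‖p.2‖ ^ 2 := by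
    rw [← norm_sq_xc]
    unfold rd
    rw [Finset.mul_sum, Finset.mul_sum, ← Finset.sum_sub_distrib]
    refine Finset.sum_congr rfl fun i _ => ?_
    rw [k1, wq_xv hR]; ring
  have s3 : ∑ i, dV (xv i) (dV (xv i) (fun q => χ q * wq R q)) p =
      wq R p * (∑ i, dV (xv i) (dV (xv i) χ) p) - 2 * wq R p ^ 3 * rd χ p
        + χ p * ∑ i, dV (xv i) (dV (xv i) (wq R)) p := by
    unfold rd
    rw [Finset.sum_congr rfl (fun i _ => k2 i), Finset.sum_add_distrib, Finset.sum_sub_distrib,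
      Finset.mul_sum, Finset.mul_sum, Finset.mul_sum]
  rw [s1, s2, s3]
  have hq := wq_pos hR p
  have hq2 := wq_sq hR p
  have hc0 := hχ.nonneg p
  have hlap := wq_lap hR hn p
  have hrd := rd_sq_le U p
  have hwrd := wq_rd_sq hR U p
  have hwrx := wq_rd_sq hR χ p
  have hgx := hχ.grad p
  have hin := inner_sq_le χ U p
  have hg := gs_nonneg U p
  have hn1 : (3 : ℝ) ≤ n := by exact_mod_cast hn
  -- first error
  have E1 : -(wq R p * (∑ i, dV (xv i) χ p * dV (xv i) U p)) * rd U p ≤ K / ρ * gs U p := by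
    have hsq : ((wq R p * (∑ i, dV (xv i) χ p * dV (xv i) U p)) * rd U p) ^ 2
        ≤ (K / ρ * gs U p) ^ 2 := by
      calc ((wq R p * (∑ i, dV (xv i) χ p * dV (xv i) U p)) * rd U p) ^ 2
          = (∑ i, dV (xv i) χ p * dV (xv i) U p) ^ 2 * (wq R p * rd U p) ^ 2 := by ring
        _ ≤ ((K / ρ) ^ 2 * gs U p) * gs U p := by
            refine mul_le_mul (hin.trans ?_) hwrd (sq_nonneg _) (by positivity)
            gcongr
        _ = _ := by ring
    have := abs_le_of_sq_le_sq hsq (by positivity)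
    linarith [(abs_le.1 this).1]
  have A1 : |wq R p * rd χ p| ≤ K / ρ := by
    exact abs_le_of_sq_le_sq (hwrx.trans hgx) (by positivity)
  have hut := mul_self_nonneg (dV tv U p)
  have E2 : 1 / 2 * (wq R p * rd χ p) * (gs U p - dV tv U p * dV tv U p) ≤ K / ρ * en U p := by
    have a1 := (abs_le.1 A1).1
    have a2 := (abs_le.1 A1).2
    unfold en
    have b1 : (wq R p * rd χ p) * gs U p ≤ K / ρ * gs U p := by gcongr
    have b2 : -(wq R p * rd χ p) * (dV tv U p * dV tv U p) ≤ K / ρ * (dV tv U p * dV tv U p) :=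
      mul_le_mul_of_nonneg_right (by linarith) hut
    have b3 : 0 ≤ K / ρ * gs U p := by positivity
    have b4 : 0 ≤ K / ρ * (dV tv U p * dV tv U p) := by positivity
    nlinarith
  -- zero order error
  have E3 : wq R p * (∑ i, dV (xv i) (dV (xv i) χ) p) - 2 * wq R p ^ 3 * rd χ p ≤ 3 * K / ρ ^ 3 := by
    rcases lt_or_ge ‖p.2‖ ρ with hp | hp
    · have z1 : ∑ i, dV (xv i) (dV (xv i) χ) p = 0 :=
        Finset.sum_eq_zero fun i _ => hχ.ddzero i p hp
      have z2 : rd χ p = 0 := Finset.sum_eq_zero fun i _ => by rw [hχ.dzero i p hp, mul_zero]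
      rw [z1, z2]
      simp
      positivity
    · have hqr : wq R p ≤ 1 / ρ := by
        unfold wq
        rw [one_div]
        refine inv_anti₀ hρ (Real.le_sqrt_of_sq_le ?_)
        nlinarith
      have l1 := hχ.lap p
      have c1 : wq R p * (∑ i, dV (xv i) (dV (xv i) χ) p) ≤ (1 / ρ) * (K / ρ ^ 2) := by
        calc wq R p * (∑ i, dV (xv i) (dV (xv i) χ) p)
            ≤ wq R p * (K / ρ ^ 2) := by gcongr; exact (abs_le.1 l1).2
          _ ≤ _ := by gcongr
      have c2 : wq R p ^ 2 * (-(wq R p * rd χ p)) ≤ (1 / ρ) ^ 2 * (K / ρ) := by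
        calc wq R p ^ 2 * (-(wq R p * rd χ p)) ≤ wq R p ^ 2 * (K / ρ) := by
              gcongr; linarith [(abs_le.1 A1).1]
          _ ≤ _ := by gcongr
      have c3 : (1 / ρ) * (K / ρ ^ 2) = K / ρ ^ 3 := by field_simp
      have c4 : (1 / ρ) ^ 2 * (K / ρ) = K / ρ ^ 3 := by field_simp
      have c5 : 3 * K / ρ ^ 3 = 3 * (K / ρ ^ 3) := by ring
      rw [c5]
      nlinarith
  clear k1 k2 s1 s2 s3 hw hc hci hwi hin hwrx hgx
  generalize hL : ∑ i, dV (xv i) (dV (xv i) (wq R)) p = L at *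
  generalize hM : ∑ i, dV (xv i) (dV (xv i) χ) p = M at *
  generalize hN : ∑ i, dV (xv i) χ p * dV (xv i) U p = N at *
  have E4 : ((n : ℝ) - 1) / 4 * (wq R p * (M) - 2 * wq R p ^ 3 * rd χ p
        + χ p * L) * (U p * U p) ≤ n * K / ρ ^ 3 * U p ^ 2 := by
    have d1 : χ p * L ≤ 0 := mul_nonpos_of_nonneg_of_nonpos hc0 hlap
    have d2 : 0 < K / ρ ^ 3 := by positivity
    rw [← sq]
    refine mul_le_mul_of_nonneg_right ?_ (sq_nonneg _)
    calc _ ≤ ((n : ℝ) - 1) / 4 * (3 * K / ρ ^ 3) :=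
          mul_le_mul_of_nonneg_left (by linarith) (by linarith)
      _ = (3 * ((n : ℝ) - 1) / 4) * (K / ρ ^ 3) := by ring
      _ ≤ n * (K / ρ ^ 3) := mul_le_mul_of_nonneg_right (by linarith) d2.le
      _ = _ := by ring
  -- main term
  have E5 : -(1 / 2) * (χ p * wq R p) * en U p + χ p * wq R p ^ 3 * rd U p * rd U p
      + 1 / 2 * (-(χ p * wq R p ^ 3 * ‖p.2‖ ^ 2)) * (gs U p - dV tv U p * dV tv U p)
      ≤ - (1 / 2) * (χ p * (R ^ 2 * wq R p ^ 3) * en U p) := by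
    have f1 : wq R p = wq R p ^ 3 * (R ^ 2 + ‖p.2‖ ^ 2) := by
      calc wq R p = wq R p * 1 := by ring
        _ = wq R p * (wq R p ^ 2 * (R ^ 2 + ‖p.2‖ ^ 2)) := by rw [hq2]
        _ = _ := by ring
    have f2 : χ p * wq R p ^ 3 * rd U p * rd U p ≤ χ p * wq R p ^ 3 * (‖p.2‖ ^ 2 * gs U p) := by
      have : 0 ≤ χ p * wq R p ^ 3 := by positivity
      calc _ = χ p * wq R p ^ 3 * rd U p ^ 2 := by ring
        _ ≤ _ := by gcongr
    have f3 : -(1 / 2) * (χ p * wq R p) * en U p =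
        -(1 / 2) * (χ p * (wq R p ^ 3 * (R ^ 2 + ‖p.2‖ ^ 2))) * en U p := by rw [← f1]
    rw [f3]
    unfold en
    nlinarith
  have E6 : K / ρ * gs U p ≤ K / ρ * en U p := by
    gcongr; exact gs_le_en U p
  have E7 : 2 * K / ρ * en U p = K / ρ * en U p + K / ρ * en U p := by ring
  rw [E7]
  linarith

lemma flux_dV {P : ℝ × Eucl n → ℝ} (hP : ContDiff ℝ ∞ P) {K : Set (Eucl n)} (hK : IsCompact K)
    (t : ℝ) (h : ∀ x, x ∉ K → P (t, x) = 0) (i : Fin n) :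
    ∫ x in K, dV (xv i) P (t, x) = 0 := by
  have := flux_zero (f := fun x => P (t, x)) (by fun_prop) hK h (EuclideanSpace.single i 1)
  simp_rw [dV_x_slice hP] at this
  exact this

lemma int_slice {F : ℝ × Eucl n → ℝ} (hF : Continuous F) {K : Set (Eucl n)} (hK : IsCompact K)
    (t : ℝ) : IntegrableOn (fun x => F (t, x)) K :=
  ((hF.comp (by fun_prop : Continuous fun x : Eucl n => (t, x))).continuousOn).integrableOn_compact hK

lemma hardy {R : ℝ} (hR : 0 < R) (hn : 3 ≤ n) {g : ℝ × Eucl n → ℝ} (hg : ContDiff ℝ ∞ g)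
    {K : Set (Eucl n)} (hK : IsCompact K) (t : ℝ) (h : ∀ x, x ∉ K → g (t, x) = 0) :
    ∫ x in K, wq R (t, x) ^ 2 * g (t, x) ^ 2 ≤ 4 * ∫ x in K, gs g (t, x) := by
  have hw := wq_smooth (n := n) hR
  have hx : ∀ i, ContDiff ℝ ∞ (xc (n := n) i) := fun i => xc_smooth i
  have hgs := gs_smooth hg
  let P : Fin n → ℝ × Eucl n → ℝ := fun i q => xc i q * ((wq R q * wq R q) * (g q * g q))
  have hP : ∀ i, ContDiff ℝ ∞ (P i) := fun i => by have := hx i; simp only [P]; fun_prop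
  have h0 : ∫ x in K, ∑ i, dV (xv i) (P i) (t, x) = 0 := by
    rw [integral_finsetSum]
    · exact Finset.sum_eq_zero fun i _ => flux_dV (hP i) hK t (fun x hx => by simp [P, h x hx]) i
    · exact fun i _ => int_slice (dV_smooth (hP i)).continuous hK t
  have hpt : ∀ p, 1 / 2 * (wq R p ^ 2 * g p ^ 2) - 2 * gs g p ≤ ∑ i, dV (xv i) (P i) p := by
    intro p
    have e : ∀ i, dV (xv i) (P i) p = wq R p ^ 2 * g p ^ 2
        - 2 * wq R p ^ 4 * g p ^ 2 * xc i p ^ 2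
        + 2 * wq R p ^ 2 * g p * (xc i p * dV (xv i) g p) := by
      intro i
      have := hx i
      simp only [P]
      rw [dV_mul this (by fun_prop), dV_mul (by fun_prop) (by fun_prop), dV_mul hw hw, dV_mul hg hg,
        dV_xc, wq_xv hR]
      simp
      ring
    have hrd : ∑ i, xc i p * dV (xv i) g p = rd g p := rfl
    rw [Finset.sum_congr rfl (fun i _ => e i)]
    simp only [Finset.sum_add_distrib, Finset.sum_sub_distrib, ← Finset.mul_sum, norm_sq_xc, hrd,
      Finset.sum_const, Finset.card_univ, Fintype.card_fin, nsmul_eq_mul]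
    have hn1 : (3 : ℝ) ≤ n := by exact_mod_cast hn
    have hq := wq_pos hR p
    have hq2 := wq_sq hR p
    have h4 : wq R p ^ 2 * ‖p.2‖ ^ 2 ≤ 1 := by nlinarith [mul_pos (pow_pos hq 2) (pow_pos hR 2)]
    have f1 : wq R p ^ 4 * g p ^ 2 * ‖p.2‖ ^ 2 ≤ wq R p ^ 2 * g p ^ 2 := by
      calc wq R p ^ 4 * g p ^ 2 * ‖p.2‖ ^ 2 = (wq R p ^ 2 * g p ^ 2) * (wq R p ^ 2 * ‖p.2‖ ^ 2) := by ring
        _ ≤ (wq R p ^ 2 * g p ^ 2) * 1 := by gcongr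
        _ = _ := mul_one _
    have f2 := wq_rd_sq hR g p
    have f3 : 0 ≤ wq R p ^ 2 * g p ^ 2 := by positivity
    have f4 : 3 * (wq R p ^ 2 * g p ^ 2) ≤ n * (wq R p ^ 2 * g p ^ 2) := by gcongr
    nlinarith [sq_nonneg (wq R p * g p + 2 * (wq R p * rd g p))]
  have i1 : IntegrableOn (fun x => wq R (t, x) ^ 2 * g (t, x) ^ 2) K :=
    int_slice (F := fun p => wq R p ^ 2 * g p ^ 2) (by
      have := hw.continuous; have := hg.continuous; fun_prop) hK t
  have i2 := int_slice hgs.continuous hK t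
  have : ∫ x in K, (1 / 2 * (wq R (t, x) ^ 2 * g (t, x) ^ 2) - 2 * gs g (t, x)) ≤
      ∫ x in K, ∑ i, dV (xv i) (P i) (t, x) := by
    refine integral_mono ((i1.const_mul _).sub (i2.const_mul _)) ?_ fun x => hpt (t, x)
    exact integrable_finsetSum _ fun i _ => int_slice (dV_smooth (hP i)).continuous hK t
  rw [h0, integral_sub (i1.const_mul _) (i2.const_mul _), integral_const_mul, integral_const_mul] at this
  linarith

lemma Q_bound {R K ρ E m : ℝ} (hR : 0 < R) (hK : 0 < K) (hρ : 0 < ρ) (hn : 3 ≤ n)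
    {U χ : ℝ × Eucl n → ℝ} (hU : IsSol U) (hχ : IsCut K ρ χ) (t : ℝ)
    (hE : ∫ x in Metric.closedBall (0 : Eucl n) (2 * ρ), en U (t, x) ≤ E)
    (hm : ∫ x in Metric.closedBall (0 : Eucl n) (2 * ρ), U (t, x) ^ 2 ≤ m * ρ ^ 2) :
    |∫ x in Metric.closedBall (0 : Eucl n) (2 * ρ), mQ (fun q => χ q * wq R q) U (t, x)| ≤
      E + n ^ 2 * 8 * (E + K ^ 2 * m) := by
  set B := Metric.closedBall (0 : Eucl n) (2 * ρ) with hB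
  have hBc : IsCompact B := isCompact_closedBall _ _
  have hn1 : (3 : ℝ) ≤ n := by exact_mod_cast hn
  have hw := wq_smooth (n := n) hR
  have hc := hχ.smooth
  have hUs := hU.1
  let g : ℝ × Eucl n → ℝ := fun q => χ q * U q
  have hg : ContDiff ℝ ∞ g := by simp only [g]; fun_prop
  have hh := hardy hR hn hg hBc t (fun x hx => by
    have : χ (t, x) = 0 := hχ.eq_zero _ (by simpa [hB] using hx)
    simp [g, this])
  have hgs : ∀ p, gs g p ≤ 2 * en U p + 2 * ((K / ρ) ^ 2 * U p ^ 2) := by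
    intro p
    have h1 := hχ.grad p
    have h2 := hχ.nonneg p
    have h3 := hχ.le_one p
    calc gs g p ≤ ∑ i, (2 * (dV (xv i) U p) ^ 2 + 2 * ((dV (xv i) χ p) ^ 2 * U p ^ 2)) := by
          rw [gs_eq]
          refine Finset.sum_le_sum fun i _ => ?_
          simp only [g]
          rw [dV_mul hc hUs]
          have : (χ p * dV (xv i) U p) ^ 2 ≤ (dV (xv i) U p) ^ 2 := by
            rw [mul_pow]
            exact mul_le_of_le_one_left (sq_nonneg _) (pow_le_one₀ h2 h3)
          nlinarith [sq_nonneg (χ p * dV (xv i) U p - dV (xv i) χ p * U p)]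
      _ = 2 * gs U p + 2 * (gs χ p * U p ^ 2) := by
          rw [Finset.sum_add_distrib, ← Finset.mul_sum, ← Finset.mul_sum, ← Finset.sum_mul, gs_eq, gs_eq]
      _ ≤ _ := by
          have := gs_le_en U p
          gcongr
  have hec := (en_smooth hUs).continuous
  have hUc := hUs.continuous
  have hwc := hw.continuous
  have hgc := hg.continuous
  have i1 := int_slice hec hBc t
  have i2 : IntegrableOn (fun x => U (t, x) ^ 2) B :=
    int_slice (F := fun p => U p ^ 2) (by fun_prop) hBc t
  have i3 : IntegrableOn (fun x => wq R (t, x) ^ 2 * g (t, x) ^ 2) B :=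
    int_slice (F := fun p => wq R p ^ 2 * g p ^ 2) (by fun_prop) hBc t
  have h1 : ∫ x in B, gs g (t, x) ≤ 2 * E + 2 * (K ^ 2 * m) := by
    calc ∫ x in B, gs g (t, x) ≤ ∫ x in B, (2 * en U (t, x) + 2 * ((K / ρ) ^ 2 * U (t, x) ^ 2)) :=
          integral_mono (int_slice (gs_smooth hg).continuous hBc t)
            ((i1.const_mul _).add ((i2.const_mul _).const_mul _)) fun x => hgs (t, x)
      _ = 2 * (∫ x in B, en U (t, x)) + 2 * ((K / ρ) ^ 2 * ∫ x in B, U (t, x) ^ 2) := by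
          rw [integral_add (i1.const_mul _) ((i2.const_mul _).const_mul _), integral_const_mul,
            integral_const_mul, integral_const_mul]
      _ ≤ 2 * E + 2 * ((K / ρ) ^ 2 * (m * ρ ^ 2)) := by gcongr
      _ = _ := by field_simp
  have hQ : ∀ p, |mQ (fun q => χ q * wq R q) U p| ≤ en U p + n ^ 2 * (wq R p ^ 2 * g p ^ 2) := by
    intro p
    have h2 := hχ.nonneg p
    have h3 := hχ.le_one p
    have h4 := wq_rd_sq hR U p
    have h5 : (χ p * (wq R p * rd U p)) ^ 2 ≤ gs U p := by
      rw [mul_pow]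
      exact (mul_le_of_le_one_left (sq_nonneg _) (pow_le_one₀ h2 h3)).trans h4
    have h6 : mQ (fun q => χ q * wq R q) U p = dV tv U p *
        (χ p * (wq R p * rd U p) + ((n : ℝ) - 1) / 2 * (wq R p * g p)) := by
      simp only [mQ, mm, g]; ring
    have h7 : (((n : ℝ) - 1) / 2) ^ 2 * (wq R p * g p) ^ 2 ≤ n ^ 2 * (wq R p * g p) ^ 2 := by
      gcongr <;> linarith
    rw [h6]
    unfold en
    rw [← mul_pow]
    set a := dV tv U p
    set b := χ p * (wq R p * rd U p)
    set d := wq R p * g p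
    set c := ((n : ℝ) - 1) / 2
    rw [abs_le]
    constructor
    · nlinarith [sq_nonneg (a + (b + c * d)), sq_nonneg (b - c * d)]
    · nlinarith [sq_nonneg (a - (b + c * d)), sq_nonneg (b - c * d)]
  calc |∫ x in B, mQ (fun q => χ q * wq R q) U (t, x)|
      ≤ ∫ x in B, |mQ (fun q => χ q * wq R q) U (t, x)| := abs_integral_le_integral_abs
    _ ≤ ∫ x in B, (en U (t, x) + n ^ 2 * (wq R (t, x) ^ 2 * g (t, x) ^ 2)) := by
        refine integral_mono ?_ (i1.add (i3.const_mul _)) fun x => hQ (t, x)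
        exact (int_slice (mQ_smooth hUs (by fun_prop)).continuous hBc t).abs
    _ = (∫ x in B, en U (t, x)) + n ^ 2 * ∫ x in B, (wq R (t, x) ^ 2 * g (t, x) ^ 2) := by
        rw [integral_add i1 (i3.const_mul _), integral_const_mul]
    _ ≤ E + n ^ 2 * (4 * (2 * E + 2 * (K ^ 2 * m))) := by
        have := hh.trans (mul_le_mul_of_nonneg_left h1 (by norm_num))
        gcongr
    _ = _ := by ring

end Bounds
end KSS

namespace KSS

open scoped ContDiff

section Local
variable {n : ℕ}

lemma cont_param {F : ℝ × Eucl n → ℝ} (hF : Continuous F) {K : Set (Eucl n)} (hK : IsCompact K) :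
    Continuous fun t => ∫ x in K, F (t, x) :=
  continuous_parametric_integral_of_continuous (f := fun t x => F (t, x)) hF hK

set_option maxHeartbeats 1000000 in
lemma core {R K ρ E m : ℝ} (hR : 0 < R) (hK : 0 < K) (hρ : 0 < ρ) (hn : 3 ≤ n)
    {U χ : ℝ × Eucl n → ℝ} (hU : IsSol U) (hχ : IsCut K ρ χ)
    (hE : ∀ t ∈ Set.Icc 0 ρ, ∫ x in Metric.closedBall (0 : Eucl n) (2 * ρ), en U (t, x) ≤ E)
    (hm : ∀ t ∈ Set.Icc 0 ρ,
      ∫ x in Metric.closedBall (0 : Eucl n) (2 * ρ), U (t, x) ^ 2 ≤ m * ρ ^ 2) :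
    ∫ t in (0:ℝ)..ρ, ∫ x in Metric.closedBall (0 : Eucl n) (2 * ρ),
      χ (t, x) * (R ^ 2 * wq R (t, x) ^ 3) * en U (t, x) ≤
      2 * (2 * (E + n ^ 2 * 8 * (E + K ^ 2 * m)) + (2 * K * E + n * K * m)) := by
  set B := Metric.closedBall (0 : Eucl n) (2 * ρ) with hB
  have hBc : IsCompact B := isCompact_closedBall _ _
  have hw := wq_smooth (n := n) hR
  have hc := hχ.smooth
  have hUs := hU.1
  have hks : ContDiff ℝ ∞ (fun q => χ q * wq R q) := by fun_prop
  have hwc := hw.continuous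
  have hcc := hc.continuous
  have hec := (en_smooth hUs).continuous
  have hUc := hUs.continuous
  have hQ := mQ_smooth hUs hks
  have hP := fun i => mP_smooth hUs hks i
  have hid := div_identity hQ hP hBc hρ.le (by
    intro i t _ x hx
    have hx' : 2 * ρ < ‖x‖ := by simpa [hB] using hx
    have c0 : χ (t, x) = 0 := hχ.eq_zero (t, x) hx'
    have c1 : dV (xv i) (fun q => χ q * wq R q) (t, x) = 0 := by
      rw [dV_mul hc hw, c0, hχ.dzero' i (t, x) hx']; ring
    unfold mP mm
    simp only [c1, c0]; ring)
  have q1 := Q_bound hR hK hρ hn hU hχ ρ (hE ρ ⟨hρ.le, le_rfl⟩) (hm ρ ⟨hρ.le, le_rfl⟩)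
  have q0 := Q_bound hR hK hρ hn hU hχ 0 (hE 0 ⟨le_rfl, hρ.le⟩) (hm 0 ⟨le_rfl, hρ.le⟩)
  have hJc : Continuous fun p : ℝ × Eucl n => χ p * (R ^ 2 * wq R p ^ 3) * en U p := by fun_prop
  have hSc : Continuous fun p : ℝ × Eucl n => dV tv (mQ (fun q => χ q * wq R q) U) p
      - ∑ i, dV (xv i) (mP (fun q => χ q * wq R q) U i) p := by
    have h1 := (dV_smooth (v := tv) hQ).continuous
    have h2 := fun i => (dV_smooth (v := xv i) (hP i)).continuous
    fun_prop
  have cJ := cont_param hJc hBc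
  have cS := cont_param hSc hBc
  have key : ∀ t ∈ Set.Icc 0 ρ, ∫ x in B, (dV tv (mQ (fun q => χ q * wq R q) U) (t, x)
      - ∑ i, dV (xv i) (mP (fun q => χ q * wq R q) U i) (t, x)) ≤
      - (1 / 2) * (∫ x in B, χ (t, x) * (R ^ 2 * wq R (t, x) ^ 3) * en U (t, x))
        + (2 * K * E + n * K * m) / ρ := by
    intro t ht
    have i1 := int_slice hec hBc t
    have i2 : IntegrableOn (fun x => U (t, x) ^ 2) B :=
      int_slice (F := fun p => U p ^ 2) (by fun_prop) hBc t
    have i3 := int_slice hJc hBc t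
    calc _ ≤ ∫ x in B, (- (1 / 2) * (χ (t, x) * (R ^ 2 * wq R (t, x) ^ 3) * en U (t, x))
            + 2 * K / ρ * en U (t, x) + n * K / ρ ^ 3 * U (t, x) ^ 2) :=
          integral_mono (int_slice hSc hBc t)
            (((i3.const_mul _).add (i1.const_mul _)).add (i2.const_mul _))
            fun x => S_bound hR hK hρ hn hU hχ (t, x)
      _ = - (1 / 2) * (∫ x in B, χ (t, x) * (R ^ 2 * wq R (t, x) ^ 3) * en U (t, x))
          + 2 * K / ρ * (∫ x in B, en U (t, x)) + n * K / ρ ^ 3 * ∫ x in B, U (t, x) ^ 2 := by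
          have i4 : IntegrableOn (fun x => - (1 / 2) * (χ (t, x) * (R ^ 2 * wq R (t, x) ^ 3) *
              en U (t, x)) + 2 * K / ρ * en U (t, x)) B := (i3.const_mul _).add (i1.const_mul _)
          rw [integral_add i4 (i2.const_mul _),
            integral_add (i3.const_mul _) (i1.const_mul _), integral_const_mul,
            integral_const_mul, integral_const_mul]
      _ ≤ - (1 / 2) * (∫ x in B, χ (t, x) * (R ^ 2 * wq R (t, x) ^ 3) * en U (t, x))
          + 2 * K / ρ * E + n * K / ρ ^ 3 * (m * ρ ^ 2) := by
          have := hE t ht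
          have := hm t ht
          gcongr
      _ = _ := by
          generalize (∫ x in B, χ (t, x) * (R ^ 2 * wq R (t, x) ^ 3) * en U (t, x)) = J
          field_simp
          ring
  set J : ℝ → ℝ := fun t => ∫ x in B, χ (t, x) * (R ^ 2 * wq R (t, x) ^ 3) * en U (t, x) with hJ
  have cJ' : Continuous fun t => - (1 / 2) * J t := by fun_prop
  have cc : Continuous fun _ : ℝ => (2 * K * E + n * K * m) / ρ := continuous_const
  have h1 : (∫ t in (0:ℝ)..ρ, ∫ x in B, (dV tv (mQ (fun q => χ q * wq R q) U) (t, x)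
      - ∑ i, dV (xv i) (mP (fun q => χ q * wq R q) U i) (t, x))) ≤
      ∫ t in (0:ℝ)..ρ, (- (1 / 2) * J t + (2 * K * E + n * K * m) / ρ) :=
    intervalIntegral.integral_mono_on hρ.le (cS.intervalIntegrable 0 ρ)
      ((cJ'.add cc).intervalIntegrable 0 ρ) key
  rw [← hid, intervalIntegral.integral_add (cJ'.intervalIntegrable 0 ρ)
    (cc.intervalIntegrable 0 ρ), intervalIntegral.integral_const_mul,
    intervalIntegral.integral_const, sub_zero, smul_eq_mul, mul_div_cancel₀ _ hρ.ne'] at h1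
  have := abs_le.1 q1
  have := abs_le.1 q0
  linarith

lemma dV_sub_const (U : ℝ × Eucl n → ℝ) (c : ℝ) (v : ℝ × Eucl n) :
    dV v (fun p => U p - c) = dV v U := by
  funext p; unfold dV; rw [fderiv_sub_const]

lemma isSol_sub {U : ℝ × Eucl n → ℝ} (hU : IsSol U) (c : ℝ) : IsSol (fun p => U p - c) := by
  refine ⟨by have := hU.1; fun_prop, fun p => ?_⟩
  simp only [dV_sub_const]
  exact hU.2 p

lemma en_sub (U : ℝ × Eucl n → ℝ) (c : ℝ) : en (fun p => U p - c) = en U := by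
  funext p; unfold en gs; simp only [dV_sub_const]

lemma local_est (hn : 3 ≤ n) : ∃ C : ℝ, 0 ≤ C ∧ ∀ U : ℝ × Eucl n → ℝ, IsSol U → EL U 0 ≠ ⊤ →
    ∀ R ρ : ℝ, 0 < R → R ≤ ρ →
    ∫⁻ t in Set.Ioc 0 ρ, ∫⁻ x in Metric.closedBall (0 : Eucl n) R, ENNReal.ofReal (gs U (t, x)) ≤
      ENNReal.ofReal (C * R) * EL U 0 := by
  obtain ⟨K, hK, hcut⟩ := exists_cut n
  set M : ℝ := 2 ^ n * 32 + 2 with hM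
  have hM0 : 0 < M := by positivity
  refine ⟨3 * (2 * (2 * (1 + n ^ 2 * 8 * (1 + K ^ 2 * M)) + (2 * K + n * K * M))), by positivity, ?_⟩
  intro U hU hfin R ρ hR hRρ
  have hρ : 0 < ρ := hR.trans_le hRρ
  obtain ⟨χ, hχ⟩ := hcut ρ hρ
  obtain ⟨c, hc⟩ := mass hU hρ
  have hV := isSol_sub hU c
  set E := (EL U 0).toReal with hE
  have hE0 : 0 ≤ E := ENNReal.toReal_nonneg
  have hEL : EL U 0 = ENNReal.ofReal E := (ENNReal.ofReal_toReal hfin).symm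
  set B := Metric.closedBall (0 : Eucl n) (2 * ρ) with hB
  have hBc : IsCompact B := isCompact_closedBall _ _
  have hUc := hU.1.continuous
  have hec := (en_smooth hU.1).continuous
  have hgc := (gs_smooth hU.1).continuous
  have hwc := (wq_smooth (n := n) hR).continuous
  have hcc := hχ.smooth.continuous
  have e1 : ∀ t ∈ Set.Icc 0 ρ, ∫ x in B, en (fun p => U p - c) (t, x) ≤ E := by
    intro t ht
    rw [en_sub, ← ENNReal.ofReal_le_ofReal_iff hE0,
      ofReal_integral_eq_lintegral_ofReal (int_slice hec hBc t)
        (Filter.Eventually.of_forall fun x => en_nonneg U (t, x)), ← hEL]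
    exact (setLIntegral_le_lintegral _ _).trans (energy_le hU ht.1)
  have e2 : ∀ t ∈ Set.Icc 0 ρ, ∫ x in B, (U (t, x) - c) ^ 2 ≤ M * E * ρ ^ 2 := by
    intro t ht
    rw [← ENNReal.ofReal_le_ofReal_iff (by positivity),
      ofReal_integral_eq_lintegral_ofReal
        (int_slice (F := fun p => (U p - c) ^ 2) (by fun_prop) hBc t)
        (Filter.Eventually.of_forall fun x => sq_nonneg _)]
    refine (hc t ht).trans (le_of_eq ?_)
    rw [hEL, ← ENNReal.ofReal_mul (by positivity)]
    congr 1; ring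
  have hcore := core hR hK hρ hn hV hχ e1 e2
  rw [en_sub] at hcore
  have hJc : Continuous fun p : ℝ × Eucl n => χ p * (R ^ 2 * wq R p ^ 3) * en U p := by fun_prop
  have cJ := cont_param hJc hBc
  have hsub : Metric.closedBall (0 : Eucl n) R ⊆ B :=
    Metric.closedBall_subset_closedBall (by linarith)
  have hJn : ∀ p, 0 ≤ χ p * (R ^ 2 * wq R p ^ 3) * en U p := fun p => by
    have := hχ.nonneg p
    have := en_nonneg U p
    have := wq_pos hR p
    positivity
  have pt : ∀ t, ∫⁻ x in Metric.closedBall (0 : Eucl n) R, ENNReal.ofReal (gs U (t, x)) ≤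
      ENNReal.ofReal (3 * R * ∫ x in B, χ (t, x) * (R ^ 2 * wq R (t, x) ^ 3) * en U (t, x)) := by
    intro t
    rw [ENNReal.ofReal_mul (by positivity), ofReal_integral_eq_lintegral_ofReal
      (int_slice hJc hBc t) (Filter.Eventually.of_forall fun x => hJn (t, x)),
      ← lintegral_const_mul' _ _ ENNReal.ofReal_ne_top]
    refine (setLIntegral_mono' measurableSet_closedBall fun x hx => ?_).trans
      (lintegral_mono_set hsub)
    rw [← ENNReal.ofReal_mul (by positivity)]
    refine ENNReal.ofReal_le_ofReal ?_
    have hx' : ‖x‖ ≤ R := by simpa using hx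
    rw [hχ.eq_one (t, x) (hx'.trans hRρ)]
    have g1 := gs_le_en U (t, x)
    have g0 := en_nonneg U (t, x)
    have hq := wq_pos hR (t, x)
    have hq2 := wq_sq hR (t, x)
    set q := wq R (t, x)
    have hqR : 1 ≤ 3 * (R * q) ^ 3 := by
      have h2 : 1 / 2 ≤ (R * q) ^ 2 := by
        have : ‖x‖ ^ 2 ≤ R ^ 2 := by gcongr
        have : q ^ 2 * ‖x‖ ^ 2 ≤ q ^ 2 * R ^ 2 := by gcongr
        simp only at hq2
        nlinarith
      have h3 : 2 / 3 ≤ R * q := by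
        have : 0 < R * q := by positivity
        nlinarith
      nlinarith
    calc gs U (t, x) ≤ 1 * en U (t, x) := by linarith
      _ ≤ 3 * (R * q) ^ 3 * en U (t, x) := by gcongr
      _ = _ := by ring
  calc _ ≤ ∫⁻ t in Set.Ioc 0 ρ, ENNReal.ofReal
        (3 * R * ∫ x in B, χ (t, x) * (R ^ 2 * wq R (t, x) ^ 3) * en U (t, x)) := lintegral_mono pt
    _ = ENNReal.ofReal (∫ t in Set.Ioc 0 ρ,
        3 * R * ∫ x in B, χ (t, x) * (R ^ 2 * wq R (t, x) ^ 3) * en U (t, x)) := by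
        rw [ofReal_integral_eq_lintegral_ofReal]
        · exact ((cJ.const_mul _).integrableOn_Icc).mono_set Set.Ioc_subset_Icc_self
        · exact Filter.Eventually.of_forall fun t =>
            mul_nonneg (by positivity) (integral_nonneg fun x => hJn (t, x))
    _ ≤ _ := by
        rw [hEL, ← ENNReal.ofReal_mul (by positivity)]
        refine ENNReal.ofReal_le_ofReal ?_
        rw [integral_const_mul, ← intervalIntegral.integral_of_le hρ.le]
        refine (mul_le_mul_of_nonneg_left hcore (by positivity)).trans (le_of_eq ?_)
        ring

lemma local_est_Ioi (hn : 3 ≤ n) : ∃ C : ℝ, 0 ≤ C ∧ ∀ U : ℝ × Eucl n → ℝ, IsSol U → EL U 0 ≠ ⊤ →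
    ∀ R : ℝ, 0 < R →
    ∫⁻ t in Set.Ioi 0, ∫⁻ x in Metric.closedBall (0 : Eucl n) R, ENNReal.ofReal (gs U (t, x)) ≤
      ENNReal.ofReal (C * R) * EL U 0 := by
  obtain ⟨C, hC, h⟩ := local_est hn
  refine ⟨C, hC, fun U hU hfin R hR => ?_⟩
  have hu : Set.Ioi (0:ℝ) = ⋃ k : ℕ, Set.Ioc (0:ℝ) (R + k) := by
    ext t
    simp only [Set.mem_Ioi, Set.mem_iUnion, Set.mem_Ioc]
    refine ⟨fun ht => ?_, fun ⟨k, hk⟩ => hk.1⟩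
    obtain ⟨k, hk⟩ := exists_nat_ge t
    exact ⟨k, ht, by linarith⟩
  rw [hu, setLIntegral_iUnion_of_directed]
  · exact iSup_le fun k => h U hU hfin R (R + k) hR (by have : (0:ℝ) ≤ k := k.cast_nonneg
                                                        linarith)
  · refine Monotone.directed_le fun a b hab => Set.Ioc_subset_Ioc_right ?_
    have : (a:ℝ) ≤ b := by exact_mod_cast hab
    linarith

end Local
end KSS

namespace KSS

open scoped ContDiff

section Global
variable {n : ℕ}

/-- time reflection -/
noncomputable def refl (n : ℕ) : (ℝ × Eucl n) →L[ℝ] (ℝ × Eucl n) :=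
  (-ContinuousLinearMap.fst ℝ ℝ (Eucl n)).prod (ContinuousLinearMap.snd ℝ ℝ (Eucl n))

lemma refl_apply (p : ℝ × Eucl n) : refl n p = (-p.1, p.2) := rfl

lemma dV_refl {U : ℝ × Eucl n → ℝ} (hU : ContDiff ℝ ∞ U) (v p : ℝ × Eucl n) :
    dV v (fun p => U (refl n p)) p = dV (refl n v) U (refl n p) := by
  unfold dV
  have h1 : HasFDerivAt U (fderiv ℝ U (refl n p)) (refl n p) :=
    (hU.differentiable (by simp)).differentiableAt.hasFDerivAt
  have h2 := h1.comp p (refl n).hasFDerivAt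
  have h3 : fderiv ℝ (fun p => U (refl n p)) p = (fderiv ℝ U (refl n p)).comp (refl n) := h2.fderiv
  rw [h3]; rfl

lemma dV_refl_t {U : ℝ × Eucl n → ℝ} (hU : ContDiff ℝ ∞ U) :
    dV tv (fun p => U (refl n p)) = fun p => - dV tv U (refl n p) := by
  funext p
  rw [dV_refl hU]
  have : refl n (tv : ℝ × Eucl n) = -tv := by simp [refl_apply, tv]
  rw [this]; unfold dV; simp

lemma dV_refl_x {U : ℝ × Eucl n → ℝ} (hU : ContDiff ℝ ∞ U) (i : Fin n) :
    dV (xv i) (fun p => U (refl n p)) = fun p => dV (xv i) U (refl n p) := by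
  funext p
  rw [dV_refl hU]
  have : refl n (xv i : ℝ × Eucl n) = xv i := by simp [refl_apply, xv]
  rw [this]

lemma isSol_refl {U : ℝ × Eucl n → ℝ} (hU : IsSol U) : IsSol (fun p => U (refl n p)) := by
  refine ⟨hU.1.comp (refl n).contDiff, fun p => ?_⟩
  have h1 : dV tv (fun p => - dV tv U (refl n p)) p = dV tv (dV tv U) (refl n p) := by
    have a : dV tv (fun p => - dV tv U (refl n p)) p = - dV tv (fun p => dV tv U (refl n p)) p := by
      unfold dV
      rw [fderiv_fun_neg]; rfl
    rw [a, dV_refl_t (dV_smooth hU.1)]; ring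
  rw [dV_refl_t hU.1, h1, hU.2]
  refine Finset.sum_congr rfl fun i _ => ?_
  rw [dV_refl_x hU.1, dV_refl_x (dV_smooth hU.1)]

lemma gs_refl {U : ℝ × Eucl n → ℝ} (hU : IsSol U) (p) :
    gs (fun p => U (refl n p)) p = gs U (refl n p) := by
  unfold gs
  simp only [dV_refl_x hU.1]

lemma EL_refl {U : ℝ × Eucl n → ℝ} (hU : IsSol U) : EL (fun p => U (refl n p)) 0 = EL U 0 := by
  unfold EL en
  simp only [gs_refl hU, dV_refl_t hU.1]
  simp only [refl_apply, neg_zero, neg_mul_neg]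

lemma split_time (f : ℝ → ℝ≥0∞) :
    ∫⁻ t, f t = (∫⁻ t in Set.Ioi 0, f t) + ∫⁻ t in Set.Ioi 0, f (-t) := by
  rw [← lintegral_add_compl f (measurableSet_Ioi (a := (0:ℝ)))]
  congr 1
  have h := (Measure.measurePreserving_neg (volume : Measure ℝ)).setLIntegral_comp_preimage_emb
    (MeasurableEquiv.neg ℝ).measurableEmbedding f (Set.Iio 0)
  have e : (Neg.neg : ℝ → ℝ) ⁻¹' Set.Iio 0 = Set.Ioi 0 := by ext; simp
  rw [e] at h
  rw [h, Set.compl_Ioi]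
  exact (setLIntegral_congr Iio_ae_eq_Iic).symm

lemma local_est_full (hn : 3 ≤ n) : ∃ C : ℝ, 0 ≤ C ∧ ∀ U : ℝ × Eucl n → ℝ, IsSol U → EL U 0 ≠ ⊤ →
    ∀ R : ℝ, 0 < R →
    ∫⁻ t, ∫⁻ x in Metric.closedBall (0 : Eucl n) R, ENNReal.ofReal (gs U (t, x)) ≤
      ENNReal.ofReal (C * R) * EL U 0 := by
  obtain ⟨C, hC, h⟩ := local_est_Ioi hn
  refine ⟨2 * C, by positivity, fun U hU hfin R hR => ?_⟩
  rw [split_time]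
  have h1 := h U hU hfin R hR
  have h2 := h _ (isSol_refl hU) (by rwa [EL_refl hU]) R hR
  rw [EL_refl hU] at h2
  simp only [gs_refl hU] at h2
  simp only [refl_apply] at h2
  refine (add_le_add h1 h2).trans (le_of_eq ?_)
  rw [← two_mul, ← mul_assoc, mul_assoc 2 C R, ENNReal.ofReal_mul zero_le_two]
  simp

lemma weight_le {η : ℝ} (hη : 0 < η) (x : Eucl n) :
    ∃ k : ℕ, ‖x‖ ≤ 2 ^ k ∧ (1 + ‖x‖) ^ (-(1 + η)) ≤ ((2:ℝ) ^ k / 2) ^ (-(1 + η)) := by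
  have hex : ∃ k : ℕ, ‖x‖ ≤ 2 ^ k := by
    obtain ⟨k, hk⟩ := pow_unbounded_of_one_lt ‖x‖ (one_lt_two : (1:ℝ) < 2)
    exact ⟨k, hk.le⟩
  classical
  refine ⟨Nat.find hex, Nat.find_spec hex, ?_⟩
  refine Real.rpow_le_rpow_of_nonpos (by positivity) ?_ (by linarith)
  rcases hk : Nat.find hex with _ | k
  · have := norm_nonneg x
    norm_num; linarith
  · have := Nat.find_min hex (m := k) (by omega)
    push Not at this
    rw [pow_succ]
    linarith

lemma weighted (hn : 3 ≤ n) {η : ℝ} (hη : 0 < η) : ∃ C : ℝ≥0∞, C ≠ ⊤ ∧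
    ∀ U : ℝ × Eucl n → ℝ, IsSol U → EL U 0 ≠ ⊤ →
    ∫⁻ t : ℝ, ∫⁻ x : Eucl n, ENNReal.ofReal ((1 + ‖x‖) ^ (-(1 + η))) * ENNReal.ofReal (gs U (t, x)) ≤
      C * EL U 0 := by
  obtain ⟨C, hC, h⟩ := local_est_full hn
  set a : ℕ → ℝ := fun k => ((2:ℝ) ^ k / 2) ^ (-(1 + η)) with ha
  have ha0 : ∀ k, 0 ≤ a k := fun k => by simp only [ha]; positivity
  refine ⟨∑' k : ℕ, ENNReal.ofReal (a k * (C * 2 ^ k)), ?_, ?_⟩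
  · have e : ∀ k : ℕ, a k * (C * 2 ^ k) = (C * 2 ^ (1 + η)) * ((2:ℝ) ^ (-η)) ^ k := by
      intro k
      have h2 : (0:ℝ) < 2 ^ k := by positivity
      have e1 : a k = ((2:ℝ) ^ k) ^ (-(1 + η)) * 2 ^ (1 + η) := by
        simp only [ha]
        rw [Real.div_rpow h2.le zero_le_two, Real.rpow_neg zero_le_two, div_inv_eq_mul]
      have e2 : ((2:ℝ) ^ k) ^ (-(1 + η)) * 2 ^ k = ((2:ℝ) ^ (-η)) ^ k := by
        rw [← Real.rpow_natCast 2 k, ← Real.rpow_natCast _ k, ← Real.rpow_mul zero_le_two,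
          ← Real.rpow_mul zero_le_two, ← Real.rpow_add zero_lt_two]
        congr 1; ring
      rw [e1, ← e2]; ring
    simp only [e]
    refine Summable.tsum_ofReal_ne_top ?_
    refine Summable.mul_left _ (summable_geometric_of_lt_one (by positivity) ?_)
    exact Real.rpow_lt_one_of_one_lt_of_neg one_lt_two (by linarith)
  · intro U hU hfin
    have hgc := (gs_smooth hU.1).continuous
    have hm : Measurable fun p : ℝ × Eucl n => ENNReal.ofReal (gs U p) :=
      hgc.measurable.ennreal_ofReal
    have hb : ∀ k : ℕ, MeasurableSet (Metric.closedBall (0 : Eucl n) (2 ^ k)) :=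
      fun k => measurableSet_closedBall
    have pt : ∀ t x, ENNReal.ofReal ((1 + ‖x‖) ^ (-(1 + η))) * ENNReal.ofReal (gs U (t, x)) ≤
        ∑' k : ℕ, ENNReal.ofReal (a k) * (Metric.closedBall (0 : Eucl n) (2 ^ k)).indicator
          (fun x => ENNReal.ofReal (gs U (t, x))) x := by
      intro t x
      obtain ⟨k, hk1, hk2⟩ := weight_le hη x
      refine le_trans ?_ (ENNReal.le_tsum k)
      rw [Set.indicator_of_mem (by simpa using hk1)]
      gcongr
    have ms : ∀ t, Measurable fun x : Eucl n => ENNReal.ofReal (gs U (t, x)) := fun t =>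
      hm.comp (by fun_prop)
    have step : ∀ t, ∫⁻ x : Eucl n, ENNReal.ofReal ((1 + ‖x‖) ^ (-(1 + η))) *
        ENNReal.ofReal (gs U (t, x)) ≤ ∑' k : ℕ, ENNReal.ofReal (a k) *
          ∫⁻ x in Metric.closedBall (0 : Eucl n) (2 ^ k), ENNReal.ofReal (gs U (t, x)) := by
      intro t
      refine (lintegral_mono (pt t)).trans (le_of_eq ?_)
      rw [lintegral_tsum fun k => (((ms t).indicator (hb k)).const_mul _).aemeasurable]
      refine tsum_congr fun k => ?_
      rw [lintegral_const_mul _ ((ms t).indicator (hb k)), lintegral_indicator (hb k)]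
    have mt : ∀ k : ℕ, Measurable fun t => ∫⁻ x in Metric.closedBall (0 : Eucl n) (2 ^ k),
        ENNReal.ofReal (gs U (t, x)) := fun k => hm.lintegral_prod_right'
    refine (lintegral_mono step).trans ?_
    rw [lintegral_tsum fun k => ((mt k).const_mul _).aemeasurable, ← ENNReal.tsum_mul_right]
    refine ENNReal.tsum_le_tsum fun k => ?_
    rw [lintegral_const_mul _ (mt k), ENNReal.ofReal_mul (ha0 k), mul_assoc]
    gcongr
    exact h U hU hfin (2 ^ k) (by positivity)

end Global
end KSS

namespace KSS

open scoped ContDiff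

section Cplx
variable {n : ℕ}

lemma timeDeriv_eq {u : ℝ → Eucl n → ℂ} (hu : ContDiff ℝ ∞ (fun p : ℝ × Eucl n => u p.1 p.2))
    (t : ℝ) (x : Eucl n) :
    timeDeriv u t x = fderiv ℝ (fun p : ℝ × Eucl n => u p.1 p.2) (t, x) tv := by
  have h1 : HasFDerivAt (fun p : ℝ × Eucl n => u p.1 p.2)
      (fderiv ℝ (fun p : ℝ × Eucl n => u p.1 p.2) (t, x)) (t, x) :=
    (hu.differentiable (by simp)).differentiableAt.hasFDerivAt
  have h2 : HasDerivAt (fun s : ℝ => (s, x)) ((1 : ℝ), (0 : Eucl n)) t :=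
    (hasDerivAt_id t).prodMk (hasDerivAt_const t x)
  exact (h1.comp_hasDerivAt t h2).deriv

lemma grad_eq {u : ℝ → Eucl n → ℂ} (hu : ContDiff ℝ ∞ (fun p : ℝ × Eucl n => u p.1 p.2))
    (t : ℝ) (x : Eucl n) (i : Fin n) :
    fderiv ℝ (u t) x (EuclideanSpace.single i (1 : ℝ)) =
      fderiv ℝ (fun p : ℝ × Eucl n => u p.1 p.2) (t, x) (xv i) := by
  have h1 : HasFDerivAt (fun p : ℝ × Eucl n => u p.1 p.2)
      (fderiv ℝ (fun p : ℝ × Eucl n => u p.1 p.2) (t, x)) (t, x) :=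
    (hu.differentiable (by simp)).differentiableAt.hasFDerivAt
  have h2 : HasFDerivAt (fun y : Eucl n => (t, y)) (ContinuousLinearMap.inr ℝ ℝ (Eucl n)) x :=
    hasFDerivAt_prodMk_right t x
  have h3 : fderiv ℝ (u t) x = (fderiv ℝ (fun p : ℝ × Eucl n => u p.1 p.2) (t, x)).comp
      (ContinuousLinearMap.inr ℝ ℝ (Eucl n)) := (h1.comp x h2).fderiv
  rw [h3]; rfl

lemma smooth_dir {F : ℝ × Eucl n → ℂ} (hF : ContDiff ℝ ∞ F) (v : ℝ × Eucl n) :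
    ContDiff ℝ ∞ (fun p => fderiv ℝ F p v) :=
  (hF.fderiv_right (m := ∞) (by simp)).clm_apply contDiff_const

lemma dV_l (l : ℂ →L[ℝ] ℝ) {F : ℝ × Eucl n → ℂ} (hF : ContDiff ℝ ∞ F) (v : ℝ × Eucl n) :
    dV v (fun p => l (F p)) = fun p => l (fderiv ℝ F p v) := by
  funext p
  have h1 : HasFDerivAt F (fderiv ℝ F p) p :=
    (hF.differentiable (by simp)).differentiableAt.hasFDerivAt
  have h2 : fderiv ℝ (fun p => l (F p)) p = l.comp (fderiv ℝ F p) :=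
    (l.hasFDerivAt.comp p h1).fderiv
  unfold dV
  rw [h2]; rfl

lemma isSol_l (l : ℂ →L[ℝ] ℝ) {u : ℝ → Eucl n → ℂ} (hu : IsWaveSolution u) :
    IsSol (fun p : ℝ × Eucl n => l (u p.1 p.2)) := by
  have hs : ContDiff ℝ ∞ (fun p : ℝ × Eucl n => u p.1 p.2) := hu.1
  refine ⟨l.contDiff.comp hs, fun p => ?_⟩
  obtain ⟨t, x⟩ := p
  simp only [dV_l l hs, dV_l l (smooth_dir hs _)]
  rw [← map_sum]
  congr 1
  have hT : ContDiff ℝ ∞ (fun p : ℝ × Eucl n => timeDeriv u p.1 p.2) := by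
    have : (fun p : ℝ × Eucl n => timeDeriv u p.1 p.2) =
      fun p => fderiv ℝ (fun p : ℝ × Eucl n => u p.1 p.2) p tv := by
      funext p; exact timeDeriv_eq hs p.1 p.2
    rw [this]; exact smooth_dir hs _
  have h := hu.2 t x
  rw [timeDeriv_eq hT] at h
  have e1 : (fun p : ℝ × Eucl n => timeDeriv u p.1 p.2) =
      fun p => fderiv ℝ (fun p : ℝ × Eucl n => u p.1 p.2) p tv := by
    funext p; exact timeDeriv_eq hs p.1 p.2
  rw [e1] at h
  rw [h]
  unfold lapE
  refine Finset.sum_congr rfl fun i _ => ?_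
  have e2 : (fun y => fderiv ℝ (u t) y (EuclideanSpace.single i (1 : ℝ))) =
      (fun (s : ℝ) (y : Eucl n) => fderiv ℝ (fun p : ℝ × Eucl n => u p.1 p.2) (s, y) (xv i)) t := by
    funext y; exact grad_eq hs t y i
  rw [e2]
  exact grad_eq (u := fun (s : ℝ) (y : Eucl n) =>
    fderiv ℝ (fun p : ℝ × Eucl n => u p.1 p.2) (s, y) (xv i)) (smooth_dir hs (xv i)) t x i

/-- real part -/
noncomputable def Ur (u : ℝ → Eucl n → ℂ) : ℝ × Eucl n → ℝ := fun p => Complex.reCLM (u p.1 p.2)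

/-- imaginary part -/
noncomputable def Ui (u : ℝ → Eucl n → ℂ) : ℝ × Eucl n → ℝ := fun p => Complex.imCLM (u p.1 p.2)

lemma gradSq_eq {u : ℝ → Eucl n → ℂ} (hu : IsWaveSolution u) (t : ℝ) (x : Eucl n) :
    gradSq (u t) x = gs (Ur u) (t, x) + gs (Ui u) (t, x) := by
  have hs : ContDiff ℝ ∞ (fun p : ℝ × Eucl n => u p.1 p.2) := hu.1
  unfold gradSq gs Ur Ui
  rw [← Finset.sum_add_distrib]
  refine Finset.sum_congr rfl fun i _ => ?_
  rw [dV_l _ hs, dV_l _ hs, grad_eq hs, Complex.sq_norm, Complex.normSq_apply]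
  rfl

lemma time_eq {u : ℝ → Eucl n → ℂ} (hu : IsWaveSolution u) (t : ℝ) (x : Eucl n) :
    (‖timeDeriv u t x‖₊ : ℝ≥0∞) ^ 2 = ENNReal.ofReal
      (dV tv (Ur u) (t, x) * dV tv (Ur u) (t, x) + dV tv (Ui u) (t, x) * dV tv (Ui u) (t, x)) := by
  have hs : ContDiff ℝ ∞ (fun p : ℝ × Eucl n => u p.1 p.2) := hu.1
  unfold Ur Ui
  rw [dV_l _ hs, dV_l _ hs, timeDeriv_eq hs]
  have h : ∀ z : ℂ, (‖z‖₊ : ℝ≥0∞) ^ 2 = ENNReal.ofReal (z.re * z.re + z.im * z.im) := by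
    intro z
    rw [← Complex.normSq_apply, ← Complex.sq_norm, ENNReal.ofReal_pow (norm_nonneg _),
      ofReal_norm]
    rfl
  exact h _

lemma energy_eq {u : ℝ → Eucl n → ℂ} (hu : IsWaveSolution u) :
    (∫⁻ x : Eucl n, ENNReal.ofReal (gradSq (u 0) x)) +
          (∫⁻ x : Eucl n, (‖timeDeriv u 0 x‖₊ : ℝ≥0∞) ^ 2) = EL (Ur u) 0 + EL (Ui u) 0 := by
  have hr : IsSol (Ur u) := isSol_l _ hu
  have hi : IsSol (Ui u) := isSol_l _ hu
  have c1 : Continuous fun x : Eucl n => gs (Ur u) (0, x) + gs (Ui u) (0, x) := by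
    have := (gs_smooth hr.1).continuous
    have := (gs_smooth hi.1).continuous
    fun_prop
  have c2 : Continuous fun x : Eucl n => en (Ur u) (0, x) := by
    have := (en_smooth hr.1).continuous
    fun_prop
  simp only [time_eq hu, gradSq_eq hu]
  unfold EL
  rw [← lintegral_add_left c1.measurable.ennreal_ofReal,
    ← lintegral_add_left c2.measurable.ennreal_ofReal]
  refine lintegral_congr fun x => ?_
  have := gs_nonneg (Ur u) (0, x)
  have := gs_nonneg (Ui u) (0, x)
  have := mul_self_nonneg (dV tv (Ur u) (0, x))
  have := mul_self_nonneg (dV tv (Ui u) (0, x))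
  rw [← ENNReal.ofReal_add (by positivity) (by positivity),
    ← ENNReal.ofReal_add (en_nonneg _ _) (en_nonneg _ _)]
  congr 1
  unfold en; ring

end Cplx
end KSS

/-- gradient weighted space-time estimate. -/
theorem gradient_weighted_estimate (n : ℕ) (hn : 3 ≤ n) (η : ℝ) (hη : 0 < η) :
    ∃ C : ℝ≥0∞, C ≠ ∞ ∧ ∀ u : ℝ → Eucl n → ℂ, IsWaveSolution u →
      (∫⁻ x : Eucl n, ENNReal.ofReal (gradSq (u 0) x)) +
          (∫⁻ x : Eucl n, (‖timeDeriv u 0 x‖₊ : ℝ≥0∞) ^ 2) ≠ ∞ →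
      (∫⁻ t : ℝ, ∫⁻ x : Eucl n,
          ENNReal.ofReal ((1 + ‖x‖) ^ (-(1 + η))) * ENNReal.ofReal (gradSq (u t) x)) ≤
        C * ((∫⁻ x : Eucl n, ENNReal.ofReal (gradSq (u 0) x)) +
          ∫⁻ x : Eucl n, (‖timeDeriv u 0 x‖₊ : ℝ≥0∞) ^ 2) := by
  obtain ⟨C, hC, h⟩ := KSS.weighted hn hη
  refine ⟨C, hC, fun u hu hfin => ?_⟩
  rw [KSS.energy_eq hu] at hfin ⊢
  have hr : KSS.IsSol (KSS.Ur u) := KSS.isSol_l _ hu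
  have hi : KSS.IsSol (KSS.Ui u) := KSS.isSol_l _ hu
  obtain ⟨fr, fi⟩ := ENNReal.add_ne_top.1 hfin
  have h1 := h _ hr fr
  have h2 := h _ hi fi
  rw [mul_add]
  refine le_trans (le_of_eq ?_) (add_le_add h1 h2)
  have hw : Measurable fun p : ℝ × Eucl n => ENNReal.ofReal ((1 + ‖p.2‖) ^ (-(1 + η))) *
      ENNReal.ofReal (KSS.gs (KSS.Ur u) p) := by
    have a : Measurable fun p : ℝ × Eucl n => KSS.gs (KSS.Ur u) p :=
      (KSS.gs_smooth hr.1).continuous.measurable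
    have b : Measurable fun p : ℝ × Eucl n => ENNReal.ofReal (KSS.gs (KSS.Ur u) p) :=
      a.ennreal_ofReal
    have c : Measurable fun p : ℝ × Eucl n => (1 + ‖p.2‖) ^ (-(1 + η)) := by fun_prop
    exact c.ennreal_ofReal.mul b
  have hT : Measurable fun t : ℝ => ∫⁻ x : Eucl n, ENNReal.ofReal ((1 + ‖x‖) ^ (-(1 + η))) *
      ENNReal.ofReal (KSS.gs (KSS.Ur u) (t, x)) := hw.lintegral_prod_right'
  rw [← lintegral_add_left hT]
  refine lintegral_congr fun t => ?_
  have ht : Measurable fun x : Eucl n => ENNReal.ofReal ((1 + ‖x‖) ^ (-(1 + η))) *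
      ENNReal.ofReal (KSS.gs (KSS.Ur u) (t, x)) := by
    have a : Continuous fun x : Eucl n => KSS.gs (KSS.Ur u) (t, x) :=
      (KSS.gs_smooth hr.1).continuous.comp (Continuous.prodMk_right t)
    have c : Measurable fun x : Eucl n => (1 + ‖x‖) ^ (-(1 + η)) := by fun_prop
    exact c.ennreal_ofReal.mul a.measurable.ennreal_ofReal
  rw [← lintegral_add_left ht]
  refine lintegral_congr fun x => ?_
  rw [KSS.gradSq_eq hu, ENNReal.ofReal_add (KSS.gs_nonneg _ _) (KSS.gs_nonneg _ _), mul_add]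
end
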